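/- For every θ ∈ Θ_M° and all i,j ∈ {1,…,4}, the Fisher information entry I_{θiθj}(θ) = ∫_ℝ (f_{θi}(x;θ) f_{θj}(x;θ) / f(x;θ)) dx is well-defined and finite (the integrand is absolutely integrable), and each entry is a continuous function of θ on Θ_M°. -/

import Mathlib

open MeasureTheory Filter

noncomputable section

def ThetaInt : Set (Fin 4 → ℝ) :=
  {θ | 0 < θ 1 ∧ θ 2 ∈ Set.Ioo (0:ℝ) 2 ∧ θ 3 ∈ Set.Ioo (-1:ℝ) 1}

/-- Cumulant (log characteristic function) of the continuous (M₀) parameterization,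
with `θ = (μ, σ, α, β)`. -/
def psiM (θ : Fin 4 → ℝ) (t : ℝ) : ℂ :=
  if θ 2 = 1 then
    ((-(|θ 1 * t|) : ℝ) : ℂ)
      - Complex.I * (((2 * θ 3 / Real.pi) * (θ 1 * t) * Real.log |θ 1 * t| : ℝ) : ℂ)
      + Complex.I * ((θ 0 * t : ℝ) : ℂ)
  else
    ((-(|θ 1 * t| ^ (θ 2)) : ℝ) : ℂ) *
        (1 + Complex.I * ((θ 3 * Real.sign t * Real.tan (Real.pi * θ 2 / 2)
            * (|θ 1 * t| ^ (1 - θ 2) - 1) : ℝ) : ℂ))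
      + Complex.I * ((θ 0 * t : ℝ) : ℂ)

/-- Characteristic function of the (M₀) parameterization. -/
def phiM (θ : Fin 4 → ℝ) (t : ℝ) : ℂ := Complex.exp (psiM θ t)

/-- Stable density in the (M₀) parameterization, via Fourier inversion. -/
def fM (θ : Fin 4 → ℝ) (x : ℝ) : ℝ :=
  (1 / (2 * Real.pi)) *
    (∫ t : ℝ, Complex.exp (-Complex.I * (t : ℂ) * (x : ℂ)) * phiM θ t).re

/-- Partial derivative of the density in parameter `i`. -/
def fP (i : Fin 4) (θ : Fin 4 → ℝ) (x : ℝ) : ℝ :=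
  deriv (fun s => fM (Function.update θ i s) x) (θ i)

/-- Second partial derivative of the density in parameters `i`, `j`. -/
def fPP (i j : Fin 4) (θ : Fin 4 → ℝ) (x : ℝ) : ℝ :=
  deriv (fun s => fP i (Function.update θ j s) x) (θ j)

/-- Derivative of the density in `x`. -/
def fX (θ : Fin 4 → ℝ) (x : ℝ) : ℝ := deriv (fun y => fM θ y) x

/-- Mixed derivative `∂²f/∂x∂θᵢ`. -/
def fPX (i : Fin 4) (θ : Fin 4 → ℝ) (x : ℝ) : ℝ := deriv (fun y => fP i θ y) x

/-- Score functions. -/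
def ellP (i : Fin 4) (θ : Fin 4 → ℝ) (x : ℝ) : ℝ := fP i θ x / fM θ x

/-- Derivative of the score in `x`. -/
def ellPX (i : Fin 4) (θ : Fin 4 → ℝ) (x : ℝ) : ℝ := deriv (fun y => ellP i θ y) x

/-- Derivative of the score `ℓ_{θᵢ}` in the parameter `θⱼ`. -/
def ellPP (i j : Fin 4) (θ : Fin 4 → ℝ) (x : ℝ) : ℝ :=
  deriv (fun s => ellP i (Function.update θ j s) x) (θ j)

/-- `h = O(r)` as `|x| → ∞`. -/
def IsBigOAtInfty (h r : ℝ → ℝ) : Prop :=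
  ∃ c > 0, ∃ M > 0, ∀ x : ℝ, M ≤ |x| → |h x| ≤ c * r x


end

/-!
Writing `tan(πα/2)(|s|^{1-α} - 1)` as a product of `(α-1) tan(πα/2)` and the integral
`∫₀^{log s} e^{(α-1)w} dw` makes the exponent of the characteristic function smooth in `α`, also
through `α = 1`. By location and scale it suffices to bound the standardised density and its
parameter derivatives in the shape `(α, β)`, locally uniformly, by comparable powers of `1 + |z|`.

*Lower bound.* The jump intensity `x^{-1-α}` on either half line is a mixture of exponentials
`e^{-ux}` with mixing density proportional to `u^α`, and each exponential contributes to the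
characteristic function a positive multiplier: multiplication by it keeps Fourier integrals
nonnegative. For `A > α` the mixing densities dominate a truncated power `κ u^A`, `u ≤ 1`. Splitting
off its symmetric mixture `φ` leaves a positive multiplier times `e^φ`, and `e^φ - φ` is still
positive, so the density is at least the Fourier integral of the product with `φ` in place of `e^φ`,
which is of order `(1 + |z|)^{-(1+A)}`.

*Upper bound.* On `(0, ∞)` the parameter derivatives of the characteristic function are combinations
of `s`, `s^α`, and these times `log s`, multiplied by an exponential. The Euler operator `s d/ds`
preserves this class, and integrating by parts twice, after cutting at `s = 1/|z|`, gives
`|f_θ(z)| ≤ C (1 + |z|)^{-(1+a)}` for every `a < min(1, α)`.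

With `α < A < 2a` the integrands `f_{θi} f_{θj} / f` are dominated near a given `θ` by the
integrable `(1 + |z|)^{-(1+2a-A)}`, and dominated convergence gives both claims.
-/

theorem analyticAt_sinc (x : ℝ) : AnalyticAt ℝ Real.sinc x := by
  rcases eq_or_ne x 0 with rfl | hx
  · obtain ⟨p, hp⟩ := Real.analyticAt_sin (x := 0)
    exact Real.sinc_eq_dslope ▸ ⟨_, hp.has_fpower_series_dslope_fslope⟩
  · refine (Real.analyticAt_sin.fun_div analyticAt_id hx).congr ?_
    filter_upwards [isOpen_ne.mem_nhds hx] with y hy using (Real.sinc_of_ne_zero hy).symm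

theorem sinc_pos {x : ℝ} (hx : |x| < Real.pi) : 0 < Real.sinc x := by
  wlog h : 0 ≤ x generalizing x
  · simpa using this (x := -x) (by simpa using hx) (by linarith)
  rcases h.eq_or_lt with rfl | h
  · simp
  · rw [Real.sinc_of_ne_zero h.ne']
    exact div_pos (Real.sin_pos_of_pos_of_lt_pi h (abs_lt.1 hx).2) h

/-- The regularised tangent `(a - 1) * tan (π a / 2)`, extended by its limit `-2 / π` to `a = 1`.
Writing it through `sinc` makes the smoothness at `a = 1` visible. -/
noncomputable def regTan (a : ℝ) : ℝ :=
  -(2 / Real.pi) * (Real.cos (Real.pi * (a - 1) / 2) / Real.sinc (Real.pi * (a - 1) / 2))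

theorem sinc_pi_mul_sub_one_pos {a : ℝ} (ha : a ∈ Set.Ioo 0 2) :
    0 < Real.sinc (Real.pi * (a - 1) / 2) := by
  refine sinc_pos (abs_lt.2 ⟨?_, ?_⟩) <;> nlinarith [ha.1, ha.2, Real.pi_pos]

theorem contDiffOn_regTan : ContDiffOn ℝ 1 regTan (Set.Ioo 0 2) := fun a ha => by
  have hsinc : ContDiffAt ℝ 1 (fun a => Real.sinc (Real.pi * (a - 1) / 2)) a :=
    (analyticAt_sinc _).contDiffAt.comp a (by fun_prop)
  have hcos : ContDiffAt ℝ 1 (fun a => Real.cos (Real.pi * (a - 1) / 2)) a := by fun_prop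
  exact (contDiffAt_const.mul
    (hcos.div hsinc (sinc_pi_mul_sub_one_pos ha).ne')).contDiffWithinAt

theorem hasDerivAt_regTan {a : ℝ} (ha : a ∈ Set.Ioo 0 2) :
    HasDerivAt regTan (deriv regTan a) a :=
  ((contDiffOn_regTan.differentiableOn one_ne_zero).differentiableAt
    (isOpen_Ioo.mem_nhds ha)).hasDerivAt

theorem continuousAt_deriv_regTan {a : ℝ} (ha : a ∈ Set.Ioo 0 2) :
    ContinuousAt (deriv regTan) a :=
  (contDiffOn_regTan.continuousOn_deriv_of_isOpen isOpen_Ioo le_rfl).continuousAt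
    (isOpen_Ioo.mem_nhds ha)

theorem regTan_one : regTan 1 = -(2 / Real.pi) := by simp [regTan]

theorem regTan_of_ne_one {a : ℝ} (ha : a ≠ 1) :
    regTan a = (a - 1) * Real.tan (Real.pi * a / 2) := by
  have hx : Real.pi * (a - 1) / 2 ≠ 0 := by
    simp [Real.pi_ne_zero, sub_ne_zero.2 ha]
  have hsplit : Real.pi * a / 2 = Real.pi * (a - 1) / 2 + Real.pi / 2 := by ring
  rw [regTan, Real.sinc_of_ne_zero hx, hsplit, Real.tan_eq_sin_div_cos, Real.sin_add_pi_div_two,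
    Real.cos_add_pi_div_two]
  field_simp

/-- The moments `∫₀^{log s} wⁿ e^{(a-1)w} dw`. For `n = 0` this is `(|s|^{a-1} - 1) / (a - 1)`,
continued by `log |s|` to `a = 1`; for `n = 1` it is the derivative of that function in `a`. -/
noncomputable def logMoment (n : ℕ) (a s : ℝ) : ℝ :=
  ∫ w in (0 : ℝ)..Real.log s, w ^ n * Real.exp ((a - 1) * w)

theorem logMoment_neg (n : ℕ) (a s : ℝ) : logMoment n a (-s) = logMoment n a s := by
  simp [logMoment]

theorem logMoment_zero_one (s : ℝ) : logMoment 0 1 s = Real.log s := by simp [logMoment]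

theorem logMoment_zero_of_ne_one {a s : ℝ} (ha : a ≠ 1) (hs : s ≠ 0) :
    logMoment 0 a s = (|s| ^ (a - 1) - 1) / (a - 1) := by
  simp only [logMoment, pow_zero, one_mul]
  rw [intervalIntegral.integral_comp_mul_left Real.exp (sub_ne_zero.2 ha), integral_exp,
    Real.rpow_def_of_pos (abs_pos.2 hs), Real.log_abs, mul_zero, Real.exp_zero, smul_eq_mul,
    mul_comm (a - 1) (Real.log s), inv_mul_eq_div]

theorem hasDerivAt_logMoment (n : ℕ) (a : ℝ) {s : ℝ} (hs : 0 < s) :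
    HasDerivAt (logMoment n a) (Real.log s ^ n * s ^ (a - 2)) s := by
  have hcont : Continuous fun w : ℝ => w ^ n * Real.exp ((a - 1) * w) := by fun_prop
  refine ((hcont.integral_hasStrictDerivAt 0 _).hasDerivAt.comp s
    (Real.hasDerivAt_log hs.ne')).congr_deriv ?_
  rw [mul_assoc, show a - 2 = (a - 1) - 1 by ring, Real.rpow_sub_one hs.ne',
    Real.rpow_def_of_pos hs, mul_comm (Real.log s), div_eq_mul_inv]

theorem continuous_logMoment_left (n : ℕ) (s : ℝ) : Continuous fun a => logMoment n a s :=
  intervalIntegral.continuous_parametric_intervalIntegral_of_continuous' (by fun_prop) _ _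

theorem abs_le_abs_of_mem_uIoc {L w : ℝ} (hw : w ∈ Set.uIoc 0 L) : |w| ≤ |L| := by
  simpa using Set.abs_sub_left_of_mem_uIcc (Set.uIoc_subset_uIcc hw)

theorem hasDerivAt_logMoment_left (n : ℕ) (a s : ℝ) :
    HasDerivAt (fun a => logMoment n a s) (logMoment (n + 1) a s) a := by
  have hderiv (w x : ℝ) : HasDerivAt (fun x => w ^ n * Real.exp ((x - 1) * w))
      (w ^ (n + 1) * Real.exp ((x - 1) * w)) x :=
    ((((hasDerivAt_id' x).sub_const 1).mul_const w).exp.const_mul (w ^ n)).congr_deriv (by ring)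
  refine (intervalIntegral.hasDerivAt_integral_of_dominated_loc_of_deriv_le
    (F' := fun x w => w ^ (n + 1) * Real.exp ((x - 1) * w))
    (bound := fun _ => |Real.log s| ^ (n + 1) * Real.exp ((|a - 1| + 1) * |Real.log s|))
    (Metric.ball_mem_nhds a one_pos)
    (.of_forall fun x => Continuous.aestronglyMeasurable (by fun_prop))
    (Continuous.intervalIntegrable (by fun_prop) _ _)
    (Continuous.aestronglyMeasurable (by fun_prop)) (.of_forall fun w hw x hx => ?_)
    intervalIntegrable_const (.of_forall fun w _ x _ => hderiv w x)).2
  have hwL := abs_le_abs_of_mem_uIoc hw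
  have hx : |x - 1| ≤ |a - 1| + 1 := by
    have h := abs_sub_abs_le_abs_sub (x - 1) (a - 1)
    rw [sub_sub_sub_cancel_right] at h
    linarith [Metric.mem_ball.1 hx, Real.dist_eq x a]
  rw [norm_mul, norm_pow, Real.norm_eq_abs, Real.norm_eq_abs, Real.abs_exp]
  refine mul_le_mul (pow_le_pow_left₀ (abs_nonneg w) hwL _) (Real.exp_le_exp.2 ?_) (by positivity)
    (by positivity)
  calc (x - 1) * w ≤ |x - 1| * |w| := (le_abs_self _).trans_eq (abs_mul _ _)
    _ ≤ (|a - 1| + 1) * |Real.log s| := by gcongr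

theorem exp_mul_le_one_add_exp_mul {L w : ℝ} (c : ℝ) (hw : w ∈ Set.uIoc 0 L) :
    Real.exp (c * w) ≤ 1 + Real.exp (c * L) := by
  have hmax : c * w ≤ max 0 (c * L) := by
    rcases Set.mem_uIoc.1 hw with h | h <;> rcases le_total 0 c with hc | hc
    all_goals first
      | exact le_max_of_le_left (by nlinarith)
      | exact le_max_of_le_right (by nlinarith)
  rcases le_max_iff.1 hmax with h | h
  · linarith [Real.exp_le_one_iff.2 h, Real.exp_pos (c * L)]
  · linarith [Real.exp_le_exp.2 h]

theorem abs_mul_logMoment_le (n : ℕ) (a : ℝ) {s : ℝ} (hs : 0 < s) :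
    |s * logMoment n a s| ≤ |Real.log s| ^ (n + 1) * (s + s ^ a) := by
  have hL : |logMoment n a s| ≤ |Real.log s| ^ n * (1 + s ^ (a - 1)) * |Real.log s| := by
    rw [Real.rpow_def_of_pos hs, mul_comm (Real.log s)]
    simpa [logMoment] using intervalIntegral.norm_integral_le_of_norm_le_const
      (a := 0) (b := Real.log s) (f := fun w => w ^ n * Real.exp ((a - 1) * w)) fun w hw => by
        rw [norm_mul, norm_pow, Real.norm_eq_abs, Real.norm_eq_abs, Real.abs_exp]
        exact mul_le_mul (pow_le_pow_left₀ (abs_nonneg w) (abs_le_abs_of_mem_uIoc hw) _)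
          (exp_mul_le_one_add_exp_mul _ hw) (by positivity) (by positivity)
  calc |s * logMoment n a s|
      ≤ s * (|Real.log s| ^ n * (1 + s ^ (a - 1)) * |Real.log s|) := by
        rw [abs_mul, abs_of_pos hs]; gcongr
    _ = |Real.log s| ^ (n + 1) * (s + s ^ a) := by
        rw [Real.rpow_sub_one hs.ne']; field_simp; ring

/-- The log-characteristic function of the standardised stable law with index `a` and skewness
`b`, in the parametrisation that is continuous in `a`. -/
noncomputable def stableExponent (a b s : ℝ) : ℂ :=
  -((|s| ^ a : ℝ) : ℂ) + Complex.I * ((b * regTan a * (s * logMoment 0 a s) : ℝ) : ℂ)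

theorem stableExponent_re (a b s : ℝ) : (stableExponent a b s).re = -|s| ^ a := by
  simp [stableExponent, -Complex.ofReal_mul]

theorem stableExponent_neg (a b s : ℝ) :
    stableExponent a b (-s) = starRingEnd ℂ (stableExponent a b s) := by
  apply Complex.ext <;> simp [stableExponent, logMoment_neg]

theorem norm_exp_stableExponent (a b s : ℝ) :
    ‖Complex.exp (stableExponent a b s)‖ = Real.exp (-|s| ^ a) := by
  rw [Complex.norm_exp, stableExponent_re]

theorem stableExponent_zero {a : ℝ} (ha : a ≠ 0) (b : ℝ) : stableExponent a b 0 = 0 := by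
  simp [stableExponent, Real.zero_rpow ha]

theorem real_sign_mul_abs (s : ℝ) : Real.sign s * |s| = s := by
  rcases lt_trichotomy s 0 with hs | rfl | hs
  · simp [Real.sign_of_neg hs, abs_of_neg hs]
  · simp
  · simp [Real.sign_of_pos hs, abs_of_pos hs]

theorem stableExponent_one (b s : ℝ) :
    stableExponent 1 b s
      = -(|s| : ℝ) - Complex.I * ((2 * b / Real.pi * s * Real.log |s| : ℝ) : ℂ) := by
  simp only [stableExponent, regTan_one, logMoment_zero_one, Real.rpow_one, Real.log_abs]
  push_cast
  ring

theorem stableExponent_of_ne_one {a s : ℝ} (ha : a ≠ 1) (hs : s ≠ 0) (b : ℝ) :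
    stableExponent a b s = ((-|s| ^ a : ℝ) : ℂ) * (1 + Complex.I *
      ((b * Real.sign s * Real.tan (Real.pi * a / 2) * (|s| ^ (1 - a) - 1) : ℝ) : ℂ)) := by
  have hs' : 0 < |s| := abs_pos.2 hs
  have hpow : |s| ^ a * |s| ^ (1 - a) = |s| := by rw [← Real.rpow_add hs']; simp
  have hsign : Real.sign s * |s| ^ a = s * |s| ^ (a - 1) := by
    nth_rewrite 3 [← real_sign_mul_abs s]
    rw [Real.rpow_sub_one hs'.ne']
    field_simp
  have key : b * regTan a * (s * logMoment 0 a s) = -|s| ^ a *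
      (b * Real.sign s * Real.tan (Real.pi * a / 2) * (|s| ^ (1 - a) - 1)) := by
    have ha' := sub_ne_zero.2 ha
    rw [regTan_of_ne_one ha, logMoment_zero_of_ne_one ha hs]
    calc _ = b * Real.tan (Real.pi * a / 2) * (s * |s| ^ (a - 1) - s) := by field_simp
      _ = b * Real.tan (Real.pi * a / 2) *
          (Real.sign s * |s| ^ a - Real.sign s * (|s| ^ a * |s| ^ (1 - a))) := by
        rw [hsign, hpow, real_sign_mul_abs]
      _ = _ := by ring
  rw [stableExponent, key, Complex.ofReal_neg, Complex.ofReal_mul, Complex.ofReal_neg]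
  ring

theorem psiM_eq_stableExponent {θ : Fin 4 → ℝ} (hσ : 0 < θ 1) (hα : θ 2 ≠ 0) (t : ℝ) :
    psiM θ t = stableExponent (θ 2) (θ 3) (θ 1 * t) + Complex.I * ((θ 0 * t : ℝ) : ℂ) := by
  rcases eq_or_ne t 0 with rfl | ht
  · simp [psiM, stableExponent_zero hα, Real.zero_rpow hα]
  have hsign : Real.sign (θ 1 * t) = Real.sign t := by
    rcases lt_or_gt_of_ne ht with h | h
    · rw [Real.sign_of_neg h, Real.sign_of_neg (mul_neg_of_pos_of_neg hσ h)]
    · rw [Real.sign_of_pos h, Real.sign_of_pos (mul_pos hσ h)]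
  rw [psiM]
  split_ifs with h
  · rw [h, stableExponent_one, Complex.ofReal_neg]
  · rw [stableExponent_of_ne_one h (mul_ne_zero hσ.ne' ht), hsign]

section PositiveMultipliers

open scoped ComplexOrder

/-- The oscillating factor `e^{-ixt}`. -/
noncomputable def phase (x t : ℝ) : ℂ := Complex.exp (-(Complex.I * ((x * t : ℝ) : ℂ)))

theorem norm_phase (x t : ℝ) : ‖phase x t‖ = 1 := by simp [phase, Complex.norm_exp]

@[fun_prop]
theorem continuous_phase : Continuous fun q : ℝ × ℝ => phase q.1 q.2 := by
  unfold phase; fun_prop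

theorem continuous_phase_right (x : ℝ) : Continuous (phase x) :=
  continuous_phase.comp (.prodMk_right x)

theorem phase_mul_phase (x y t : ℝ) : phase x t * phase y t = phase (x + y) t := by
  simp only [phase, ← Complex.exp_add]
  congr 1
  push_cast
  ring

/-- The Fourier integral `∫ e^{-ixt} G(t) dt`, in the angular normalisation used for characteristic
functions (Mathlib's `𝓕` has `2π` in the exponent). -/
noncomputable def angularFourier (G : ℝ → ℂ) (x : ℝ) : ℂ := ∫ t, phase x t * G t

theorem integrable_phase_mul {m : Measure ℝ} {G : ℝ → ℂ} (hG : Integrable G m) (x : ℝ) :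
    Integrable (fun t => phase x t * G t) m :=
  hG.bdd_mul (c := 1) (continuous_phase_right x).aestronglyMeasurable
    (.of_forall fun t => (norm_phase x t).le)

theorem angularFourier_phase_mul (y : ℝ) (G : ℝ → ℂ) (x : ℝ) :
    angularFourier (fun t => phase y t * G t) x = angularFourier G (x + y) := by
  simp only [angularFourier, ← mul_assoc, phase_mul_phase]

theorem angularFourier_const_mul (c : ℂ) (G : ℝ → ℂ) (x : ℝ) :
    angularFourier (fun t => c * G t) x = c * angularFourier G x := by
  simp only [angularFourier, mul_left_comm _ c, integral_const_mul]

theorem angularFourier_add {G H : ℝ → ℂ} (hG : Integrable G) (hH : Integrable H) (x : ℝ) :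
    angularFourier (fun t => G t + H t) x = angularFourier G x + angularFourier H x := by
  simp only [angularFourier, mul_add]
  exact integral_add (integrable_phase_mul hG x) (integrable_phase_mul hH x)

theorem angularFourier_comp_neg (G : ℝ → ℂ) (x : ℝ) :
    angularFourier (fun t => G (-t)) x = angularFourier G (-x) := by
  rw [angularFourier, ← integral_neg_eq_self]
  simp [angularFourier, phase]

theorem tendsto_angularFourier {ι : Type*} {l : Filter ι} [l.IsCountablyGenerated]
    {F : ι → ℝ → ℂ} {G : ℝ → ℂ} {bound : ℝ → ℝ} (hF : ∀ i, AEStronglyMeasurable (F i))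
    (hbound : Integrable bound) (hle : ∀ i t, ‖F i t‖ ≤ bound t)
    (hlim : ∀ t, Tendsto (fun i => F i t) l (nhds (G t))) (x : ℝ) :
    Tendsto (fun i => angularFourier (F i) x) l (nhds (angularFourier G x)) :=
  tendsto_integral_filter_of_dominated_convergence bound
    (.of_forall fun i => (continuous_phase_right x).aestronglyMeasurable.mul (hF i))
    (.of_forall fun i => .of_forall fun t => by simpa [norm_phase] using hle i t) hbound
    (.of_forall fun t => (hlim t).const_mul _)

theorem angularFourier_integral_mul {m : Measure ℝ} [SFinite m] {Φ : ℝ → ℝ → ℂ} {b : ℝ → ℝ}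
    (hΦ : Measurable (Function.uncurry Φ)) (hb : Integrable b m)
    (hle : ∀ᵐ u ∂m, ∀ t, ‖Φ u t‖ ≤ b u) {G : ℝ → ℂ} (hG : Integrable G) (x : ℝ) :
    angularFourier (fun t => (∫ u, Φ u t ∂m) * G t) x
      = ∫ u, angularFourier (fun t => Φ u t * G t) x ∂m := by
  have hint : Integrable (Function.uncurry fun u t => phase x t * (Φ u t * G t))
      (m.prod volume) := by
    refine (hb.mul_prod hG.norm).mono' ?_ ?_
    · exact ((continuous_phase_right x).comp continuous_snd).aestronglyMeasurable.mul
        (hΦ.aestronglyMeasurable.mul hG.aestronglyMeasurable.comp_snd)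
    · have hle' : ∀ᵐ q : ℝ × ℝ ∂m.prod volume, ∀ t, ‖Φ q.1 t‖ ≤ b q.1 :=
        Measure.quasiMeasurePreserving_fst.ae hle
      filter_upwards [hle'] with q hq
      simpa [Function.uncurry, norm_phase] using mul_le_mul_of_nonneg_right (hq q.2) (norm_nonneg _)
  simp only [angularFourier]
  rw [integral_integral_swap hint]
  simp only [integral_const_mul, integral_mul_const]

/-- A bounded measurable `Φ` such that multiplication by `Φ` keeps Fourier integrals nonnegative.
Bounded continuous positive definite functions have this property (Bochner); the class is closed
under enough operations that Bochner's theorem is never needed. -/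
structure IsPosMultiplier (Φ : ℝ → ℂ) : Prop where
  measurable : Measurable Φ
  bounded : ∃ C : ℝ, ∀ t, ‖Φ t‖ ≤ C
  nonneg_mul : ∀ G : ℝ → ℂ, Integrable G → (∀ x, 0 ≤ angularFourier G x) →
    ∀ x, 0 ≤ angularFourier (fun t => Φ t * G t) x

theorem hasSum_inv_factorial_mul_pow (z : ℂ) :
    HasSum (fun n => (((n.factorial : ℝ)⁻¹ : ℝ) : ℂ) * z ^ n) (Complex.exp z) := by
  have := NormedSpace.expSeries_div_hasSum_exp (𝔸 := ℂ) z
  rw [← Complex.exp_eq_exp_ℂ] at this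
  simpa [div_eq_inv_mul] using this

namespace IsPosMultiplier

variable {Φ Ξ : ℝ → ℂ}

theorem integrable_mul (h : IsPosMultiplier Φ) {G : ℝ → ℂ} (hG : Integrable G) :
    Integrable (fun t => Φ t * G t) :=
  let ⟨_, hC⟩ := h.bounded
  hG.bdd_mul h.measurable.aestronglyMeasurable (.of_forall hC)

theorem mul (h : IsPosMultiplier Φ) (h' : IsPosMultiplier Ξ) :
    IsPosMultiplier fun t => Φ t * Ξ t := by
  obtain ⟨C, hC⟩ := h.bounded
  obtain ⟨C', hC'⟩ := h'.bounded
  refine ⟨h.measurable.mul h'.measurable, ⟨C * C', fun t => ?_⟩, fun G hG hpos => ?_⟩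
  · rw [norm_mul]
    exact mul_le_mul (hC t) (hC' t) (norm_nonneg _) ((norm_nonneg _).trans (hC t))
  · simpa only [mul_assoc] using
      h.nonneg_mul _ (h'.integrable_mul hG) (h'.nonneg_mul G hG hpos)

theorem add (h : IsPosMultiplier Φ) (h' : IsPosMultiplier Ξ) :
    IsPosMultiplier fun t => Φ t + Ξ t := by
  obtain ⟨C, hC⟩ := h.bounded
  obtain ⟨C', hC'⟩ := h'.bounded
  refine ⟨h.measurable.add h'.measurable,
    ⟨C + C', fun t => (norm_add_le _ _).trans (add_le_add (hC t) (hC' t))⟩, fun G hG hpos x => ?_⟩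
  simp only [add_mul]
  rw [angularFourier_add (h.integrable_mul hG) (h'.integrable_mul hG)]
  exact add_nonneg (h.nonneg_mul G hG hpos x) (h'.nonneg_mul G hG hpos x)

theorem const {c : ℝ} (hc : 0 ≤ c) : IsPosMultiplier fun _ => (c : ℂ) where
  measurable := measurable_const
  bounded := ⟨_, fun _ => le_rfl⟩
  nonneg_mul G _ hpos x := by
    rw [angularFourier_const_mul]
    exact mul_nonneg (Complex.zero_le_real.2 hc) (hpos x)

theorem phase (y : ℝ) : IsPosMultiplier (phase y) where
  measurable := (continuous_phase_right y).measurable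
  bounded := ⟨1, fun t => (norm_phase y t).le⟩
  nonneg_mul G _ hpos x := angularFourier_phase_mul y G x ▸ hpos (x + y)

theorem comp_neg (h : IsPosMultiplier Φ) : IsPosMultiplier fun t => Φ (-t) where
  measurable := h.measurable.comp measurable_neg
  bounded := let ⟨C, hC⟩ := h.bounded; ⟨C, fun t => hC (-t)⟩
  nonneg_mul G hG hpos x := by
    have := h.nonneg_mul (fun t => G (-t)) hG.comp_neg
      (fun y => angularFourier_comp_neg G y ▸ hpos (-y)) (-x)
    rw [← angularFourier_comp_neg] at this
    simpa using this

theorem of_tendsto {F : ℕ → ℝ → ℂ} {C : ℝ} (h : ∀ n, IsPosMultiplier (F n))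
    (hC : ∀ n t, ‖F n t‖ ≤ C) (hlim : ∀ t, Tendsto (fun n => F n t) atTop (nhds (Φ t))) :
    IsPosMultiplier Φ where
  measurable :=
    measurable_of_tendsto_metrizable (fun n => (h n).measurable) (tendsto_pi_nhds.2 hlim)
  bounded := ⟨C, fun t => le_of_tendsto (hlim t).norm (.of_forall fun n => hC n t)⟩
  nonneg_mul G hG hpos x := by
    refine ge_of_tendsto (tendsto_angularFourier (l := atTop)
      (fun n => ((h n).integrable_mul hG).aestronglyMeasurable) (hG.norm.const_mul C)
      (fun n t => ?_) (fun t => (hlim t).mul_const (G t)) x)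
      (.of_forall fun n => (h n).nonneg_mul G hG hpos x)
    rw [norm_mul]
    exact mul_le_mul_of_nonneg_right (hC n t) (norm_nonneg _)

theorem pow (h : IsPosMultiplier Φ) (n : ℕ) : IsPosMultiplier fun t => Φ t ^ n := by
  induction n with
  | zero => simpa using const zero_le_one
  | succ k ih => simpa only [pow_succ] using ih.mul h

theorem sum_range {F : ℕ → ℝ → ℂ} (h : ∀ n, IsPosMultiplier (F n)) (n : ℕ) :
    IsPosMultiplier fun t => ∑ k ∈ Finset.range n, F k t := by
  induction n with
  | zero => simpa using const le_rfl
  | succ k ih => simpa only [Finset.sum_range_succ] using ih.add (h k)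

theorem comp_of_hasSum (h : IsPosMultiplier Φ) {c : ℕ → ℝ} (hc : ∀ n, 0 ≤ c n) {f : ℂ → ℂ}
    (hf : ∀ z, HasSum (fun n => (c n : ℂ) * z ^ n) (f z)) : IsPosMultiplier fun t => f (Φ t) := by
  obtain ⟨C, hC⟩ := h.bounded
  have hC0 : 0 ≤ C := (norm_nonneg _).trans (hC 0)
  have hsum : Summable fun n => c n * C ^ n := by
    exact_mod_cast (hf C).summable
  refine of_tendsto (C := ∑' n, c n * C ^ n)
    (fun n => sum_range (fun k => (const (hc k)).mul (h.pow k)) n) (fun n t => ?_)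
    (fun t => (hf (Φ t)).tendsto_sum_nat)
  calc ‖∑ k ∈ Finset.range n, (c k : ℂ) * Φ t ^ k‖
      ≤ ∑ k ∈ Finset.range n, c k * C ^ k := by
        refine norm_sum_le_of_le _ fun k _ => ?_
        rw [norm_mul, norm_pow, Complex.norm_real, Real.norm_of_nonneg (hc k)]
        exact mul_le_mul_of_nonneg_left (pow_le_pow_left₀ (norm_nonneg _) (hC t) k) (hc k)
    _ ≤ ∑' n, c n * C ^ n :=
        hsum.sum_le_tsum _ fun k _ => mul_nonneg (hc k) (pow_nonneg hC0 k)

theorem exp (h : IsPosMultiplier Φ) : IsPosMultiplier fun t => Complex.exp (Φ t) :=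
  h.comp_of_hasSum (fun _ => by positivity) hasSum_inv_factorial_mul_pow

theorem exp_sub_self (h : IsPosMultiplier Φ) :
    IsPosMultiplier fun t => Complex.exp (Φ t) - Φ t := by
  refine h.comp_of_hasSum (c := Function.update (fun n => ((n.factorial : ℝ)⁻¹)) 1 0)
    (fun n => ?_) (f := fun z => Complex.exp z - z) fun z => ?_
  · rcases eq_or_ne n 1 with rfl | hn
    · simp
    · rw [Function.update_of_ne hn]; positivity
  · have := (hasSum_inv_factorial_mul_pow z).update 1 0
    simp only [Nat.factorial_one, Nat.cast_one, inv_one, Complex.ofReal_one, one_mul, pow_one,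
      zero_sub, neg_add_eq_sub] at this
    refine this.congr_fun fun n => ?_
    rcases eq_or_ne n 1 with rfl | hn <;> simp [*]

theorem integral {m : Measure ℝ} [SFinite m] {F : ℝ → ℝ → ℂ} {b : ℝ → ℝ}
    (hF : Measurable (Function.uncurry F)) (hb : Integrable b m)
    (hle : ∀ᵐ u ∂m, ∀ t, ‖F u t‖ ≤ b u) (h : ∀ᵐ u ∂m, IsPosMultiplier (F u)) :
    IsPosMultiplier fun t => ∫ u, F u t ∂m where
  measurable := (StronglyMeasurable.integral_prod_left' (f := Function.uncurry F)
    hF.stronglyMeasurable).measurable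
  bounded := ⟨∫ u, b u ∂m, fun t => norm_integral_le_of_norm_le hb (hle.mono fun _ hu => hu t)⟩
  nonneg_mul G hG hpos x := by
    rw [angularFourier_integral_mul hF hb hle hG]
    exact integral_nonneg_of_ae (h.mono fun u hu => hu.nonneg_mul G hG hpos x)

end IsPosMultiplier

end PositiveMultipliers

section LevyRepresentation

/-- Integrating this kernel in `x` and in `v` gives the two sides of the beta integral
`gamma_mul_integral_rpow_mul_one_add_sq_rpow`. -/
noncomputable def betaKernel (q k v x : ℝ) : ℝ :=
  v ^ (q - 1) * (x ^ (k - 1) * Real.exp (-((1 + v ^ 2) * x)))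

theorem betaKernel_eq (q k v x : ℝ) :
    betaKernel q k v x =
      x ^ (k - 1) * Real.exp (-x) * (v ^ (q - 1) * Real.exp (-x * v ^ (2 : ℝ))) := by
  rw [betaKernel, Real.rpow_two, show -((1 + v ^ 2) * x) = -x + -x * v ^ 2 by ring, Real.exp_add]
  ring

theorem integral_betaKernel_right (q v : ℝ) {k : ℝ} (hk : 0 < k) :
    ∫ x in Set.Ioi 0, betaKernel q k v x = Real.Gamma k * (v ^ (q - 1) * (1 + v ^ 2) ^ (-k)) := by
  simp only [betaKernel]
  rw [integral_const_mul, Real.integral_rpow_mul_exp_neg_mul_Ioi hk (by positivity), one_div,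
    Real.inv_rpow (by positivity), Real.rpow_neg (by positivity)]
  ring

theorem integral_betaKernel_left {q x : ℝ} (hq : 0 < q) (k : ℝ) (hx : 0 < x) :
    ∫ v in Set.Ioi 0, betaKernel q k v x =
      1 / 2 * Real.Gamma (q / 2) * (Real.exp (-x) * x ^ (k - q / 2 - 1)) := by
  simp only [betaKernel_eq]
  rw [integral_const_mul, integral_rpow_mul_exp_neg_mul_rpow two_pos (by linarith) hx,
    show k - q / 2 - 1 = k - 1 + -(q / 2) by ring, Real.rpow_add hx, sub_add_cancel, neg_div]
  ring

theorem integrable_betaKernel {q k : ℝ} (hq : 0 < q) (hk : q / 2 < k) :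
    Integrable (Function.uncurry (betaKernel q k))
      ((volume.restrict (Set.Ioi 0)).prod (volume.restrict (Set.Ioi 0))) := by
  have hmeas : Measurable (Function.uncurry (betaKernel q k)) := by
    unfold betaKernel Function.uncurry; fun_prop
  rw [integrable_prod_iff' hmeas.aestronglyMeasurable]
  constructor
  · filter_upwards [ae_restrict_mem measurableSet_Ioi] with x hx
    simp only [Function.uncurry_apply_pair, betaKernel_eq]
    exact (integrableOn_rpow_mul_exp_neg_mul_rpow (by linarith) two_pos hx).const_mul _
  · refine ((Real.GammaIntegral_convergent (s := k - q / 2) (by linarith)).const_mul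
      (1 / 2 * Real.Gamma (q / 2))).congr ?_
    filter_upwards [ae_restrict_mem measurableSet_Ioi] with x (hx : 0 < x)
    rw [← integral_betaKernel_left hq k hx]
    refine setIntegral_congr_fun measurableSet_Ioi fun v (hv : 0 < v) => ?_
    exact (Real.norm_of_nonneg (by unfold betaKernel; positivity)).symm

theorem gamma_mul_integral_rpow_mul_one_add_sq_rpow {q k : ℝ} (hq : 0 < q) (hk : q / 2 < k) :
    Real.Gamma k * ∫ v in Set.Ioi (0 : ℝ), v ^ (q - 1) * (1 + v ^ 2) ^ (-k) =
      1 / 2 * Real.Gamma (q / 2) * Real.Gamma (k - q / 2) := by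
  have hk0 : 0 < k := by linarith
  have hswap := integral_integral_swap (integrable_betaKernel hq hk)
  simp only [integral_betaKernel_right q _ hk0, integral_const_mul] at hswap
  rw [hswap, setIntegral_congr_fun measurableSet_Ioi fun x hx => integral_betaKernel_left hq k hx,
    integral_const_mul, ← Real.Gamma_eq_integral (by linarith)]

/-- The constant normalising the power `u ^ a` in the Lévy representation of the stable exponent of
index `a`; it is also the integral of `v ^ (a - 1) / (1 + v ^ 2)` over the half-line. -/
noncomputable def levyConst (a : ℝ) : ℝ := Real.pi / (2 * Real.sin (Real.pi * a / 2))

theorem sin_pi_mul_div_two_pos {a : ℝ} (ha : a ∈ Set.Ioo 0 2) : 0 < Real.sin (Real.pi * a / 2) :=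
  Real.sin_pos_of_pos_of_lt_pi (by have := ha.1; positivity) (by nlinarith [ha.2, Real.pi_pos])

theorem levyConst_pos {a : ℝ} (ha : a ∈ Set.Ioo 0 2) : 0 < levyConst a :=
  div_pos Real.pi_pos (mul_pos two_pos (sin_pi_mul_div_two_pos ha))

theorem integral_rpow_sub_one_div_one_add_sq {a : ℝ} (ha : a ∈ Set.Ioo 0 2) :
    ∫ v in Set.Ioi (0 : ℝ), v ^ (a - 1) / (1 + v ^ 2) = levyConst a := by
  have h := gamma_mul_integral_rpow_mul_one_add_sq_rpow (k := 1) ha.1 (by linarith [ha.2])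
  simp only [Real.Gamma_one, one_mul, Real.rpow_neg_one, ← div_eq_mul_inv] at h
  rw [h, mul_assoc, Real.Gamma_mul_Gamma_one_sub, levyConst, mul_div_assoc Real.pi a]
  ring

theorem integrableOn_rpow_div_one_add_sq {a : ℝ} (ha : a ∈ Set.Ioo (-1) 1) :
    IntegrableOn (fun v : ℝ => v ^ a / (1 + v ^ 2)) (Set.Ioi 0) := by
  have ha' : a + 1 ∈ Set.Ioo 0 2 := ⟨by linarith [ha.1], by linarith [ha.2]⟩
  have h := integral_rpow_sub_one_div_one_add_sq ha'
  rw [add_sub_cancel_right] at h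
  exact .of_integral_ne_zero (by rw [h]; exact (levyConst_pos ha').ne')

theorem gamma_one_add_mul_gamma_one_sub (w : ℝ) :
    Real.Gamma (1 + w) * Real.Gamma (1 - w) = (Real.sinc (Real.pi * w))⁻¹ := by
  rcases eq_or_ne w 0 with rfl | hw
  · simp
  · rw [add_comm, Real.Gamma_add_one hw, mul_assoc, Real.Gamma_mul_Gamma_one_sub,
      Real.sinc_of_ne_zero (mul_ne_zero Real.pi_ne_zero hw)]
    field_simp

theorem levyConst_mul_regTan {a : ℝ} (ha : a ∈ Set.Ioo 0 2) :
    levyConst a * regTan a = -(Real.sinc (Real.pi * (a - 1) / 2))⁻¹ := by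
  have hsin : Real.sin (Real.pi * a / 2) = Real.cos (Real.pi * (a - 1) / 2) := by
    rw [← Real.sin_add_pi_div_two]; congr 1; ring
  have := sin_pi_mul_div_two_pos ha
  have := Real.pi_pos
  rw [levyConst, regTan, ← hsin]
  field_simp

theorem integral_rpow_div_one_add_sq_sq {a : ℝ} (ha : a ∈ Set.Ioo 0 2) :
    ∫ v in Set.Ioi (0 : ℝ), v ^ a / (1 + v ^ 2) ^ 2 = -(levyConst a * regTan a) / 2 := by
  have h := gamma_mul_integral_rpow_mul_one_add_sq_rpow (q := a + 1) (k := 2) (by linarith [ha.1])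
    (by linarith [ha.2])
  have hpow (v : ℝ) : (1 + v ^ 2) ^ (-2 : ℝ) = ((1 + v ^ 2) ^ 2)⁻¹ := by
    rw [Real.rpow_neg (by positivity), Real.rpow_two]
  simp only [Real.Gamma_two, one_mul, add_sub_cancel_right, hpow, ← div_eq_mul_inv] at h
  rw [h, levyConst_mul_regTan ha, show (a + 1) / 2 = 1 + (a - 1) / 2 by ring,
    show 2 - (1 + (a - 1) / 2) = 1 - (a - 1) / 2 by ring, mul_assoc,
    gamma_one_add_mul_gamma_one_sub]
  ring_nf

/-- The kernel of the representation `∫₀^∞ p(u) k(u, t) du` of completely monotone jump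
intensities `∫₀^∞ p(u) e^{-uy} du`: the term `1/u` makes it vanish at `t = 0`, and the drift
correction `it/(1+u²)` makes it integrable against `u ^ a` for all `0 < a < 2`. -/
noncomputable def levyKernel (u t : ℝ) : ℂ :=
  (u - Complex.I * t)⁻¹ - u⁻¹ - Complex.I * (t / (u ^ 2 + 1))

theorem levyKernel_neg (u t : ℝ) : levyKernel u (-t) = starRingEnd ℂ (levyKernel u t) := by
  simp [levyKernel, neg_div]

theorem levyKernel_re (u t : ℝ) : (levyKernel u t).re = u / (u ^ 2 + t ^ 2) - 1 / u := by
  have hdrift : (t : ℂ) / (u ^ 2 + 1) = (t / (u ^ 2 + 1) : ℝ) := by push_cast; rfl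
  rw [levyKernel, hdrift]
  simp [Complex.inv_re, Complex.normSq_apply, pow_two, -Complex.ofReal_inv, -Complex.ofReal_div]

theorem levyKernel_im (u t : ℝ) :
    (levyKernel u t).im = t / (u ^ 2 + t ^ 2) - t / (u ^ 2 + 1) := by
  have hdrift : (t : ℂ) / (u ^ 2 + 1) = (t / (u ^ 2 + 1) : ℝ) := by push_cast; rfl
  rw [levyKernel, hdrift]
  simp [Complex.inv_im, Complex.normSq_apply, pow_two, -Complex.ofReal_inv, -Complex.ofReal_div]

theorem norm_levyKernel_le {u : ℝ} (hu : 0 < u) (t : ℝ) :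
    ‖levyKernel u t‖ ≤ 2 * (1 + t ^ 2) * (1 / (u * (u ^ 2 + 1))) := by
  have hd : 0 < u ^ 2 + t ^ 2 := by positivity
  have hre : |(levyKernel u t).re| ≤ (1 + t ^ 2) * (1 / (u * (u ^ 2 + 1))) := by
    have heq : u / (u ^ 2 + t ^ 2) - 1 / u = -(t ^ 2 / (u * (u ^ 2 + t ^ 2))) := by
      field_simp; ring
    rw [levyKernel_re, heq, abs_neg, abs_of_nonneg (by positivity), mul_one_div,
      div_le_div_iff₀ (by positivity) (by positivity)]
    have : 0 ≤ u * (u ^ 2 + t ^ 4) := by positivity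
    linarith
  have him : |(levyKernel u t).im| ≤ (1 + t ^ 2) * (1 / (u * (u ^ 2 + 1))) := by
    have heq : t / (u ^ 2 + t ^ 2) - t / (u ^ 2 + 1) =
        (1 - t ^ 2) * (t * u / (u ^ 2 + t ^ 2)) * (1 / (u * (u ^ 2 + 1))) := by
      field_simp; ring
    have hamgm : |t * u / (u ^ 2 + t ^ 2)| ≤ 1 := by
      rw [abs_div, abs_of_pos hd, div_le_one hd, abs_le]
      constructor <;> nlinarith [sq_nonneg (t - u), sq_nonneg (t + u)]
    have hsq : |1 - t ^ 2| ≤ 1 + t ^ 2 := abs_le.2 ⟨by linarith, by linarith [sq_nonneg t]⟩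
    rw [levyKernel_im, heq, abs_mul, abs_mul,
      abs_of_pos (by positivity : 0 < 1 / (u * (u ^ 2 + 1)))]
    gcongr
    exact (mul_le_mul hsq hamgm (abs_nonneg _) (by positivity)).trans_eq (mul_one _)
  linarith [Complex.norm_le_abs_re_add_abs_im (levyKernel u t)]

/-- Densities `p ≥ 0` on `(0, ∞)` against which `levyKernel · t` is integrable for every `t`. -/
structure IsLevyDensity (p : ℝ → ℝ) : Prop where
  measurable : Measurable p
  nonneg : ∀ u, 0 < u → 0 ≤ p u
  integrableOn : IntegrableOn (fun u => p u * (1 / (u * (u ^ 2 + 1)))) (Set.Ioi 0)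

/-- The exponent `∫₀^∞ p(u) k(u, t) du` with Lévy density `p`. -/
noncomputable def levyExponent (p : ℝ → ℝ) (t : ℝ) : ℂ :=
  ∫ u in Set.Ioi 0, p u * levyKernel u t

theorem measurable_levyKernel : Measurable (Function.uncurry levyKernel) := by
  unfold levyKernel Function.uncurry; fun_prop

theorem IsLevyDensity.integrableOn_mul_levyKernel {p : ℝ → ℝ} (hp : IsLevyDensity p) (t : ℝ) :
    IntegrableOn (fun u => p u * levyKernel u t) (Set.Ioi 0) := by
  refine (hp.integrableOn.const_mul (2 * (1 + t ^ 2))).mono'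
    ((Complex.measurable_ofReal.comp hp.measurable).mul
      (measurable_levyKernel.comp (measurable_id.prodMk measurable_const))).aestronglyMeasurable ?_
  filter_upwards [ae_restrict_mem measurableSet_Ioi] with u hu
  rw [norm_mul, Complex.norm_of_nonneg (hp.nonneg u hu), mul_left_comm]
  exact mul_le_mul_of_nonneg_left (norm_levyKernel_le hu t) (hp.nonneg u hu)

theorem isLevyDensity_rpow {a : ℝ} (ha : a ∈ Set.Ioo 0 2) : IsLevyDensity fun u => u ^ a where
  measurable := by fun_prop
  nonneg u hu := by positivity
  integrableOn := by
    have hint := integrableOn_rpow_div_one_add_sq (a := a - 1)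
      ⟨by linarith [ha.1], by linarith [ha.2]⟩
    refine hint.congr_fun (fun u (hu : 0 < u) => ?_) measurableSet_Ioi
    simp only [Real.rpow_sub_one hu.ne']
    field_simp
    ring

theorem integral_rpow_mul_resolvent_re {a s : ℝ} (ha : a ∈ Set.Ioo 0 2) (hs : 0 < s) :
    ∫ u in Set.Ioi (0 : ℝ), u ^ a * (u / (u ^ 2 + s ^ 2) - 1 / u) = -(levyConst a * s ^ a) := by
  have hscale : ∀ u ∈ Set.Ioi (0 : ℝ), u ^ a * (u / (u ^ 2 + s ^ 2) - 1 / u) =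
      -s ^ (a - 1) * ((s⁻¹ * u) ^ (a - 1) / (1 + (s⁻¹ * u) ^ 2)) := by
    intro u (hu : 0 < u)
    have := Real.rpow_pos_of_pos hs (a - 1)
    rw [Real.mul_rpow (by positivity) hu.le, Real.inv_rpow hs.le, Real.rpow_sub_one hu.ne']
    field_simp
    ring
  rw [setIntegral_congr_fun measurableSet_Ioi hscale, integral_const_mul,
    integral_comp_mul_left_Ioi (fun v : ℝ => v ^ (a - 1) / (1 + v ^ 2)) 0 (inv_pos.2 hs),
    mul_zero, integral_rpow_sub_one_div_one_add_sq ha, inv_inv, smul_eq_mul,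
    Real.rpow_sub_one hs.ne']
  field_simp

theorem integral_rpow_div_sq_add_sq_sq {a s : ℝ} (ha : a ∈ Set.Ioo 0 2) (hs : 0 < s) :
    ∫ u in Set.Ioi (0 : ℝ), u ^ a / (u ^ 2 + s ^ 2) ^ 2 =
      s ^ (a - 3) * (-(levyConst a * regTan a) / 2) := by
  have hscale : ∀ u ∈ Set.Ioi (0 : ℝ), u ^ a / (u ^ 2 + s ^ 2) ^ 2 =
      s ^ (a - 4) * ((s⁻¹ * u) ^ a / (1 + (s⁻¹ * u) ^ 2) ^ 2) := by
    intro u (hu : 0 < u)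
    have := Real.rpow_pos_of_pos hs a
    rw [Real.mul_rpow (by positivity) hu.le, Real.inv_rpow hs.le, Real.rpow_sub hs,
      show (4 : ℝ) = (4 : ℕ) by norm_num, Real.rpow_natCast]
    field_simp
    ring
  rw [setIntegral_congr_fun measurableSet_Ioi hscale, integral_const_mul,
    integral_comp_mul_left_Ioi (fun v : ℝ => v ^ a / (1 + v ^ 2) ^ 2) 0 (inv_pos.2 hs),
    mul_zero, integral_rpow_div_one_add_sq_sq ha, inv_inv, smul_eq_mul,
    show a - 3 = a - 4 + 1 by ring, Real.rpow_add_one hs.ne']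
  ring

theorem integrableOn_rpow_div_sq_add_sq_sq {a s : ℝ} (ha : a ∈ Set.Ioo 0 2) (hs : 0 < s) :
    IntegrableOn (fun u : ℝ => u ^ a / (u ^ 2 + s ^ 2) ^ 2) (Set.Ioi 0) := by
  refine .of_integral_ne_zero ?_
  have := sinc_pi_mul_sub_one_pos ha
  rw [integral_rpow_div_sq_add_sq_sq ha hs, levyConst_mul_regTan ha, neg_neg]
  positivity

theorem integrableOn_rpow_mul_resolvent_im {a s : ℝ} (ha : a ∈ Set.Ioo 0 2) (hs : 0 < s) :
    IntegrableOn (fun u : ℝ => u ^ a * (1 / (u ^ 2 + s ^ 2) - 1 / (u ^ 2 + 1))) (Set.Ioi 0) := by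
  refine IntegrableOn.congr_fun
    (((isLevyDensity_rpow ha).integrableOn_mul_levyKernel s).im.const_mul s⁻¹)
    (fun u (hu : 0 < u) => ?_) measurableSet_Ioi
  simp only [RCLike.im_to_complex, Complex.im_ofReal_mul, levyKernel_im]
  field_simp

theorem hasDerivAt_integral_rpow_mul_resolvent_im {a s : ℝ} (ha : a ∈ Set.Ioo 0 2) (hs : 0 < s) :
    HasDerivAt
      (fun s => ∫ u in Set.Ioi (0 : ℝ), u ^ a * (1 / (u ^ 2 + s ^ 2) - 1 / (u ^ 2 + 1)))
      (levyConst a * regTan a * s ^ (a - 2)) s := by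
  have hderiv := hasDerivAt_integral_of_dominated_loc_of_deriv_le
    (μ := volume.restrict (Set.Ioi (0 : ℝ)))
    (F := fun s u => u ^ a * (1 / (u ^ 2 + s ^ 2) - 1 / (u ^ 2 + 1)))
    (F' := fun s u => -(2 * s) * (u ^ a / (u ^ 2 + s ^ 2) ^ 2))
    (bound := fun u => 4 * s * (u ^ a / (u ^ 2 + (s / 2) ^ 2) ^ 2))
    (Ioo_mem_nhds (half_lt_self hs) (by linarith : s < 2 * s))
    (.of_forall fun x => Measurable.aestronglyMeasurable (by fun_prop))
    (integrableOn_rpow_mul_resolvent_im ha hs) (Measurable.aestronglyMeasurable (by fun_prop))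
    ?_ ((integrableOn_rpow_div_sq_add_sq_sq ha (half_pos hs)).const_mul _) ?_
  · refine hderiv.2.congr_deriv ?_
    rw [integral_const_mul, integral_rpow_div_sq_add_sq_sq ha hs,
      show a - 2 = a - 3 + 1 by ring, Real.rpow_add_one hs.ne']
    ring
  · filter_upwards [ae_restrict_mem measurableSet_Ioi] with u (hu : 0 < u) x hx
    have hx0 : 0 < x := (half_pos hs).trans hx.1
    rw [norm_mul, norm_neg, Real.norm_of_nonneg (by positivity),
      Real.norm_of_nonneg (by positivity)]
    gcongr ?_ * (_ / (_ + ?_ ^ 2) ^ 2)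
    · linarith [hx.2]
    · exact hx.1.le
  · filter_upwards [ae_restrict_mem measurableSet_Ioi] with u (hu : 0 < u) x _
    have hne : u ^ 2 + x ^ 2 ≠ 0 := by positivity
    simp only [one_div]
    refine (((((hasDerivAt_pow 2 x).const_add (u ^ 2)).inv hne).sub_const _).const_mul
      (u ^ a)).congr_deriv ?_
    push_cast
    ring

theorem integral_rpow_mul_resolvent_im {a s : ℝ} (ha : a ∈ Set.Ioo 0 2) (hs : 0 < s) :
    ∫ u in Set.Ioi (0 : ℝ), u ^ a * (1 / (u ^ 2 + s ^ 2) - 1 / (u ^ 2 + 1)) =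
      levyConst a * regTan a * logMoment 0 a s := by
  have hleft {x : ℝ} (hx : 0 < x) := hasDerivAt_integral_rpow_mul_resolvent_im ha hx
  have hright {x : ℝ} (hx : 0 < x) :=
    (hasDerivAt_logMoment 0 a hx).const_mul (levyConst a * regTan a)
  refine isOpen_Ioi.eqOn_of_deriv_eq isPreconnected_Ioi
    (fun x hx => (hleft hx).differentiableAt.differentiableWithinAt)
    (fun x hx => (hright hx).differentiableAt.differentiableWithinAt)
    (fun x hx => ?_) (Set.mem_Ioi.2 one_pos) (by simp [logMoment]) hs
  rw [(hleft hx).deriv, (hright hx).deriv, pow_zero, one_mul]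

theorem levyExponent_neg (p : ℝ → ℝ) (t : ℝ) :
    levyExponent p (-t) = starRingEnd ℂ (levyExponent p t) := by
  simp only [levyExponent, levyKernel_neg, ← integral_conj, map_mul, Complex.conj_ofReal]

theorem levyExponent_re {p : ℝ → ℝ} (hp : IsLevyDensity p) (t : ℝ) :
    (levyExponent p t).re = ∫ u in Set.Ioi 0, p u * (u / (u ^ 2 + t ^ 2) - 1 / u) := by
  rw [levyExponent, ← RCLike.re_to_complex, ← integral_re (hp.integrableOn_mul_levyKernel t)]
  refine setIntegral_congr_fun measurableSet_Ioi fun u _ => ?_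
  simp only [RCLike.re_to_complex, Complex.re_ofReal_mul, levyKernel_re]

theorem levyExponent_im {p : ℝ → ℝ} (hp : IsLevyDensity p) (t : ℝ) :
    (levyExponent p t).im = ∫ u in Set.Ioi 0, p u * (t / (u ^ 2 + t ^ 2) - t / (u ^ 2 + 1)) := by
  rw [levyExponent, ← RCLike.im_to_complex, ← integral_im (hp.integrableOn_mul_levyKernel t)]
  refine setIntegral_congr_fun measurableSet_Ioi fun u _ => ?_
  simp only [RCLike.im_to_complex, Complex.im_ofReal_mul, levyKernel_im]

theorem levyExponent_rpow {a : ℝ} (ha : a ∈ Set.Ioo 0 2) (t : ℝ) :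
    levyExponent (fun u => u ^ a) t = levyConst a * stableExponent a 1 t := by
  have hpos {t : ℝ} (ht : 0 < t) :
      levyExponent (fun u => u ^ a) t = levyConst a * stableExponent a 1 t := by
    have him (u : ℝ) : u ^ a * (t / (u ^ 2 + t ^ 2) - t / (u ^ 2 + 1)) =
        t * (u ^ a * (1 / (u ^ 2 + t ^ 2) - 1 / (u ^ 2 + 1))) := by ring
    apply Complex.ext
    · rw [levyExponent_re (isLevyDensity_rpow ha), integral_rpow_mul_resolvent_re ha ht,
        Complex.re_ofReal_mul, stableExponent_re, abs_of_pos ht, mul_neg]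
    · rw [levyExponent_im (isLevyDensity_rpow ha)]
      simp only [him]
      rw [integral_const_mul, integral_rpow_mul_resolvent_im ha ht]
      simp [stableExponent]
      ring
  rcases lt_trichotomy t 0 with ht | rfl | ht
  · rw [← neg_neg t, levyExponent_neg, hpos (neg_pos.2 ht), stableExponent_neg]
    simp
  · simp [levyExponent, levyKernel, stableExponent_zero ha.1.ne']
  · exact hpos ht

theorem stableExponent_eq_add (a b t : ℝ) :
    stableExponent a b t =
      ((1 + b) / 2 : ℝ) * stableExponent a 1 t + ((1 - b) / 2 : ℝ) * stableExponent a 1 (-t) := by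
  simp only [stableExponent, abs_neg, logMoment_neg]
  push_cast
  ring

end LevyRepresentation

section LevyMultipliers

open scoped ComplexOrder

theorem integral_exp_neg_mul_phase {u : ℝ} (hu : 0 < u) (t : ℝ) :
    ∫ y in Set.Ioi (0 : ℝ), Real.exp (-u * y) * phase y t = (u + Complex.I * t)⁻¹ := by
  have hexp (y : ℝ) : (Real.exp (-u * y) : ℂ) * phase y t =
      Complex.exp (-(u + Complex.I * t) * y) := by
    rw [phase, Complex.ofReal_exp, ← Complex.exp_add]
    congr 1
    push_cast
    ring
  simp only [hexp]
  rw [integral_exp_mul_complex_Ioi (by simpa using hu), Complex.ofReal_zero, mul_zero,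
    Complex.exp_zero, neg_div_neg_eq, one_div]

theorem isPosMultiplier_inv_add_I_mul {u : ℝ} (hu : 0 < u) :
    IsPosMultiplier fun t => (u + Complex.I * t)⁻¹ := by
  simp only [← integral_exp_neg_mul_phase hu]
  refine .integral (b := fun y => Real.exp (-u * y)) (Continuous.measurable ?_)
    (integrableOn_exp_mul_Ioi (by linarith) 0) (.of_forall fun y t => ?_)
    (.of_forall fun y => (IsPosMultiplier.const (Real.exp_pos _).le).mul (.phase y))
  · unfold Function.uncurry; fun_prop
  · rw [norm_mul, norm_phase, Complex.norm_of_nonneg (Real.exp_pos _).le, mul_one]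

theorem isPosMultiplier_inv_sub_I_mul {u : ℝ} (hu : 0 < u) :
    IsPosMultiplier fun t => (u - Complex.I * t)⁻¹ := by
  simpa [sub_eq_add_neg] using (isPosMultiplier_inv_add_I_mul hu).comp_neg

theorem norm_inv_sub_I_mul_le {u : ℝ} (hu : 0 < u) (t : ℝ) :
    ‖(u - Complex.I * t : ℂ)⁻¹‖ ≤ u⁻¹ := by
  rw [norm_inv]
  refine inv_anti₀ hu ?_
  simpa [abs_of_pos hu] using Complex.abs_re_le_norm (u - Complex.I * t)

theorem levyKernel_re_nonpos {u : ℝ} (hu : 0 < u) (t : ℝ) : (levyKernel u t).re ≤ 0 := by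
  rw [levyKernel_re, sub_nonpos, div_le_div_iff₀ (by positivity) hu]
  nlinarith [sq_nonneg t]

namespace IsLevyDensity

variable {p q : ℝ → ℝ}

theorem const_mul (hp : IsLevyDensity p) {c : ℝ} (hc : 0 ≤ c) : IsLevyDensity fun u => c * p u where
  measurable := hp.measurable.const_mul c
  nonneg u hu := mul_nonneg hc (hp.nonneg u hu)
  integrableOn := by simpa only [mul_assoc, IntegrableOn] using hp.integrableOn.const_mul c

theorem mono (hp : IsLevyDensity p) (hq : Measurable q) (hq0 : ∀ u, 0 < u → 0 ≤ q u)
    (hqp : ∀ u, 0 < u → q u ≤ p u) : IsLevyDensity q where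
  measurable := hq
  nonneg := hq0
  integrableOn := by
    refine hp.integrableOn.mono' (Measurable.aestronglyMeasurable (by fun_prop)) ?_
    filter_upwards [ae_restrict_mem measurableSet_Ioi] with u (hu : 0 < u)
    rw [norm_mul, Real.norm_of_nonneg (hq0 u hu), Real.norm_of_nonneg (by positivity)]
    exact mul_le_mul_of_nonneg_right (hqp u hu) (by positivity)

theorem integrableOn_mul_of_continuousOn (hp : IsLevyDensity p) {ε R : ℝ} (hε : 0 < ε)
    {E : Type*} [NormedAddCommGroup E] [NormedSpace ℝ E] {g : ℝ → E}
    (hg : ContinuousOn g (Set.Icc ε R)) : IntegrableOn (fun u => p u • g u) (Set.Icc ε R) := by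
  have hsub : Set.Icc ε R ⊆ Set.Ioi 0 := fun u hu => hε.trans_le hu.1
  have hcont : ContinuousOn (fun u : ℝ => (u * (u ^ 2 + 1)) • g u) (Set.Icc ε R) :=
    ContinuousOn.smul (by fun_prop) hg
  refine ((hp.integrableOn.mono_set hsub).smul_continuousOn hcont isCompact_Icc).congr_fun
    (fun u hu => ?_) measurableSet_Icc
  have : 0 < u := hsub hu
  simp only [smul_smul]
  congr 1
  field_simp

theorem integrableOn_mul_inv (hp : IsLevyDensity p) {ε R : ℝ} (hε : 0 < ε) :
    IntegrableOn (fun u => p u * u⁻¹) (Set.Icc ε R) :=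
  hp.integrableOn_mul_of_continuousOn hε
    (continuousOn_inv₀.mono fun _ hu => (hε.trans_le hu.1).ne')

theorem isPosMultiplier_integral_Icc_inv_sub_I_mul (hp : IsLevyDensity p) {ε R : ℝ} (hε : 0 < ε) :
    IsPosMultiplier fun t => ∫ u in Set.Icc ε R, p u * (u - Complex.I * t : ℂ)⁻¹ := by
  have hmem {u : ℝ} (hu : u ∈ Set.Icc ε R) : 0 < u := hε.trans_le hu.1
  have := hp.measurable
  refine .integral (b := fun u => p u * u⁻¹) (by unfold Function.uncurry; fun_prop)
    (hp.integrableOn_mul_inv hε) ?_ ?_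
  · filter_upwards [ae_restrict_mem measurableSet_Icc] with u hu t
    rw [norm_mul, Complex.norm_of_nonneg (hp.nonneg u (hmem hu))]
    exact mul_le_mul_of_nonneg_left (norm_inv_sub_I_mul_le (hmem hu) t) (hp.nonneg u (hmem hu))
  · filter_upwards [ae_restrict_mem measurableSet_Icc] with u hu
    exact (IsPosMultiplier.const (hp.nonneg u (hmem hu))).mul
      (isPosMultiplier_inv_sub_I_mul (hmem hu))

theorem integral_Icc_mul_levyKernel (hp : IsLevyDensity p) {ε R : ℝ} (hε : 0 < ε) (t : ℝ) :
    ∫ u in Set.Icc ε R, p u * levyKernel u t =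
      (∫ u in Set.Icc ε R, p u * (u - Complex.I * t : ℂ)⁻¹)
        + (-∫ u in Set.Icc ε R, p u * u⁻¹ : ℝ)
        + -(Complex.I * (((∫ u in Set.Icc ε R, p u * (u ^ 2 + 1)⁻¹) * t : ℝ) : ℂ)) := by
  have hRes : IntegrableOn (fun u => p u * (u - Complex.I * t : ℂ)⁻¹) (Set.Icc ε R) := by
    refine (hp.integrableOn_mul_of_continuousOn hε (g := fun u : ℝ => (u - Complex.I * t : ℂ)⁻¹)
      (ContinuousOn.inv₀ (by fun_prop) fun u hu h => (hε.trans_le hu.1).ne' ?_)).congr ?_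
    · simpa using congrArg Complex.re h
    · simp
  have hInv : IntegrableOn (fun u => ((p u * u⁻¹ : ℝ) : ℂ)) (Set.Icc ε R) :=
    (hp.integrableOn_mul_inv hε).ofReal
  have hDrift : IntegrableOn
      (fun u => Complex.I * t * ((p u * (u ^ 2 + 1)⁻¹ : ℝ) : ℂ)) (Set.Icc ε R) :=
    (hp.integrableOn_mul_of_continuousOn hε
      (ContinuousOn.inv₀ (by fun_prop) fun u _ => by positivity)).ofReal.const_mul _
  have hResInv : IntegrableOn (fun u => p u * (u - Complex.I * t : ℂ)⁻¹
      - ((p u * u⁻¹ : ℝ) : ℂ)) (Set.Icc ε R) := hRes.sub hInv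
  have hkernel (u : ℝ) : p u * levyKernel u t = p u * (u - Complex.I * t : ℂ)⁻¹
      - ((p u * u⁻¹ : ℝ) : ℂ) - Complex.I * t * ((p u * (u ^ 2 + 1)⁻¹ : ℝ) : ℂ) := by
    rw [levyKernel]
    push_cast
    ring
  simp only [hkernel]
  rw [integral_sub hResInv hDrift, integral_sub hRes hInv, integral_const_mul,
    integral_complex_ofReal, integral_complex_ofReal]
  push_cast
  ring

theorem isPosMultiplier_exp_integral_Icc (hp : IsLevyDensity p) {ε R : ℝ} (hε : 0 < ε) :
    IsPosMultiplier fun t => Complex.exp (∫ u in Set.Icc ε R, p u * levyKernel u t) := by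
  simp only [hp.integral_Icc_mul_levyKernel hε, Complex.exp_add, ← Complex.ofReal_exp]
  exact ((hp.isPosMultiplier_integral_Icc_inv_sub_I_mul hε).exp.mul
    (.const (Real.exp_pos _).le)).mul (.phase _)

theorem isPosMultiplier_exp_levyExponent (hp : IsLevyDensity p) :
    IsPosMultiplier fun t => Complex.exp (levyExponent p t) := by
  let s (n : ℕ) : Set ℝ := Set.Icc (1 / (n + 1 : ℝ)) (n + 1)
  have hs : Monotone s := fun m n hmn => by
    have : (m : ℝ) ≤ n := by exact_mod_cast hmn
    exact Set.Icc_subset_Icc (by gcongr) (by gcongr)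
  have hUnion : ⋃ n, s n = Set.Ioi 0 := by
    ext u
    simp only [s, Set.mem_iUnion, Set.mem_Icc, Set.mem_Ioi]
    refine ⟨fun ⟨n, hn, _⟩ => lt_of_lt_of_le (by positivity) hn, fun hu => ?_⟩
    obtain ⟨m, hm⟩ := exists_nat_one_div_lt hu
    obtain ⟨n, hn⟩ := exists_nat_ge u
    refine ⟨max m n, le_trans ?_ hm.le, ?_⟩
    · gcongr
      exact_mod_cast le_max_left m n
    · have : (n : ℝ) ≤ (max m n : ℕ) := by exact_mod_cast le_max_right m n
      linarith
  refine .of_tendsto (C := 1)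
    (fun n => hp.isPosMultiplier_exp_integral_Icc (ε := 1 / (n + 1 : ℝ)) (R := n + 1)
      (by positivity))
    (fun n t => ?_) (fun t => ?_)
  · have hsub : s n ⊆ Set.Ioi 0 := hUnion ▸ Set.subset_iUnion s n
    rw [Complex.norm_exp, Real.exp_le_one_iff, ← RCLike.re_to_complex,
      ← integral_re ((hp.integrableOn_mul_levyKernel t).mono_set hsub)]
    refine setIntegral_nonpos measurableSet_Icc fun u hu => ?_
    rw [RCLike.re_to_complex, Complex.re_ofReal_mul]
    exact mul_nonpos_of_nonneg_of_nonpos (hp.nonneg u (hsub hu)) (levyKernel_re_nonpos (hsub hu) t)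
  · refine (Complex.continuous_exp.tendsto _).comp ?_
    have := tendsto_setIntegral_of_monotone (fun n => measurableSet_Icc) hs
      (hUnion ▸ hp.integrableOn_mul_levyKernel t)
    rwa [hUnion] at this

end IsLevyDensity

end LevyMultipliers

section Taming

open scoped ComplexOrder

/-- The Fourier transform `2u / (u² + t²)` of `y ↦ e^{-u|y|}`. -/
noncomputable def cauchyKernel (u t : ℝ) : ℝ := 2 * u / (u ^ 2 + t ^ 2)

theorem cauchyKernel_nonneg {u : ℝ} (hu : 0 ≤ u) (t : ℝ) : 0 ≤ cauchyKernel u t := by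
  unfold cauchyKernel; positivity

theorem norm_cauchyKernel_le {u : ℝ} (hu : 0 < u) (t : ℝ) :
    ‖(cauchyKernel u t : ℂ)‖ ≤ 2 / u := by
  rw [Complex.norm_of_nonneg (cauchyKernel_nonneg hu.le t), cauchyKernel,
    div_le_div_iff₀ (by positivity) hu]
  nlinarith [sq_nonneg t]

theorem measurable_cauchyKernel : Measurable (Function.uncurry cauchyKernel) := by
  unfold cauchyKernel Function.uncurry; fun_prop

theorem cauchyKernel_eq_inv_add_inv (u t : ℝ) :
    (cauchyKernel u t : ℂ) = (u - Complex.I * t)⁻¹ + (u + Complex.I * t)⁻¹ := by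
  apply Complex.ext <;>
  simp [cauchyKernel, Complex.inv_re, Complex.inv_im, Complex.normSq_apply, -Complex.ofReal_div,
    -Complex.ofReal_mul] <;> ring

theorem isPosMultiplier_cauchyKernel {u : ℝ} (hu : 0 < u) :
    IsPosMultiplier fun t => (cauchyKernel u t : ℂ) := by
  simpa only [cauchyKernel_eq_inv_add_inv] using
    (isPosMultiplier_inv_sub_I_mul hu).add (isPosMultiplier_inv_add_I_mul hu)

theorem integrable_comp_abs {f : ℝ → ℝ} (hf : IntegrableOn f (Set.Ioi 0)) :
    Integrable fun t => f |t| := by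
  have hIoi : IntegrableOn (fun t => f |t|) (Set.Ioi 0) :=
    hf.congr_fun (fun t ht => by rw [abs_of_pos ht]) measurableSet_Ioi
  have hIio : IntegrableOn (fun t => f |t|) (Set.Iio 0) := by
    have h := hIoi
    rw [← neg_zero] at h
    simpa only [abs_neg] using h.comp_neg_Iio
  rw [← integrableOn_univ, ← Set.Iic_union_Ioi (a := (0 : ℝ))]
  exact ((integrableOn_Iic_iff_integrableOn_Iio).2 hIio).union hIoi

theorem integrable_exp_neg_mul_abs {u : ℝ} (hu : 0 < u) :
    Integrable fun y : ℝ => Real.exp (-u * |y|) :=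
  integrable_comp_abs (f := fun y => Real.exp (-u * y))
    (integrableOn_exp_mul_Ioi (neg_neg_of_pos hu) 0)

theorem integral_exp_neg_mul_abs_mul_phase {u : ℝ} (hu : 0 < u) (t : ℝ) :
    ∫ y : ℝ, Real.exp (-u * |y|) * phase y t = cauchyKernel u t := by
  have hint : Integrable fun y : ℝ => (Real.exp (-u * |y|) * phase y t : ℂ) :=
    (integrable_exp_neg_mul_abs hu).ofReal.mul_bdd (c := 1)
      (Continuous.aestronglyMeasurable (by fun_prop)) (.of_forall fun y => (norm_phase y t).le)
  have hIoi : ∫ y in Set.Ioi 0, Real.exp (-u * |y|) * phase y t = (u + Complex.I * t)⁻¹ := by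
    rw [← integral_exp_neg_mul_phase hu]
    exact setIntegral_congr_fun measurableSet_Ioi fun y hy => by
      simp only [abs_of_pos (Set.mem_Ioi.1 hy)]
  have hIic : ∫ y in Set.Iic 0, Real.exp (-u * |y|) * phase y t = (u - Complex.I * t)⁻¹ := by
    rw [← neg_zero, ← integral_comp_neg_Ioi, sub_eq_add_neg, ← mul_neg, ← Complex.ofReal_neg,
      ← integral_exp_neg_mul_phase hu]
    exact setIntegral_congr_fun measurableSet_Ioi fun y hy => by
      simp [abs_of_pos (Set.mem_Ioi.1 hy), phase]
  rw [← intervalIntegral.integral_Iic_add_Ioi (b := 0) hint.integrableOn hint.integrableOn,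
    hIoi, hIic, cauchyKernel_eq_inv_add_inv]

theorem levyKernel_add_neg (u t : ℝ) :
    levyKernel u t + levyKernel u (-t) = (cauchyKernel u t - cauchyKernel u 0 : ℝ) := by
  rw [levyKernel_neg, Complex.add_conj, levyKernel_re, cauchyKernel, cauchyKernel]
  congr 1
  rcases eq_or_ne u 0 with rfl | hu
  · simp
  · field_simp
    ring

/-- Lévy densities `χ` for which the jump measure `∫₀^∞ χ(u) e^{-uy} du dy` is finite. -/
structure IsFiniteLevyDensity (χ : ℝ → ℝ) : Prop where
  measurable : Measurable χ
  nonneg : ∀ u, 0 < u → 0 ≤ χ u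
  integrableOn : IntegrableOn (fun u => χ u * (2 / u)) (Set.Ioi 0)

/-- The symmetric mixture `∫₀^∞ χ(u) 2u/(u² + t²) du` of Cauchy kernels. -/
noncomputable def cauchyMixture (χ : ℝ → ℝ) (t : ℝ) : ℝ :=
  ∫ u in Set.Ioi 0, χ u * cauchyKernel u t

theorem ofReal_cauchyMixture (χ : ℝ → ℝ) (t : ℝ) :
    (cauchyMixture χ t : ℂ) = ∫ u in Set.Ioi 0, (χ u * cauchyKernel u t : ℂ) := by
  rw [cauchyMixture, ← integral_complex_ofReal]
  simp only [Complex.ofReal_mul]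

namespace IsFiniteLevyDensity

variable {χ : ℝ → ℝ}

theorem norm_mul_cauchyKernel_le (hχ : IsFiniteLevyDensity χ) {u : ℝ} (hu : 0 < u) (t : ℝ) :
    ‖(χ u * cauchyKernel u t : ℂ)‖ ≤ χ u * (2 / u) := by
  rw [norm_mul, Complex.norm_of_nonneg (hχ.nonneg u hu)]
  exact mul_le_mul_of_nonneg_left (norm_cauchyKernel_le hu t) (hχ.nonneg u hu)

theorem measurable_mul_cauchyKernel (hχ : IsFiniteLevyDensity χ) :
    Measurable (Function.uncurry fun u t => (χ u * cauchyKernel u t : ℂ)) := by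
  have := hχ.measurable
  have := measurable_cauchyKernel
  unfold Function.uncurry at *
  fun_prop

theorem integrableOn_mul_cauchyKernel (hχ : IsFiniteLevyDensity χ) (t : ℝ) :
    IntegrableOn (fun u => χ u * cauchyKernel u t) (Set.Ioi 0) := by
  refine hχ.integrableOn.mono'
    (hχ.measurable.mul (measurable_cauchyKernel.of_uncurry_right)).aestronglyMeasurable ?_
  filter_upwards [ae_restrict_mem measurableSet_Ioi] with u hu
  simpa [-Complex.ofReal_mul] using hχ.norm_mul_cauchyKernel_le hu t

theorem cauchyMixture_nonneg (hχ : IsFiniteLevyDensity χ) (t : ℝ) : 0 ≤ cauchyMixture χ t :=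
  setIntegral_nonneg measurableSet_Ioi fun u hu =>
    mul_nonneg (hχ.nonneg u hu) (cauchyKernel_nonneg (le_of_lt hu) t)

theorem isPosMultiplier_cauchyMixture (hχ : IsFiniteLevyDensity χ) :
    IsPosMultiplier fun t => (cauchyMixture χ t : ℂ) := by
  simp only [ofReal_cauchyMixture]
  refine .integral hχ.measurable_mul_cauchyKernel hχ.integrableOn ?_ ?_
  · filter_upwards [ae_restrict_mem measurableSet_Ioi] with u hu
    exact hχ.norm_mul_cauchyKernel_le hu
  · filter_upwards [ae_restrict_mem measurableSet_Ioi] with u hu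
    exact (IsPosMultiplier.const (hχ.nonneg u hu)).mul (isPosMultiplier_cauchyKernel hu)

theorem continuous_cauchyMixture (hχ : IsFiniteLevyDensity χ) : Continuous (cauchyMixture χ) := by
  refine continuous_of_dominated (bound := fun u => χ u * (2 / u))
    (fun t => (hχ.integrableOn_mul_cauchyKernel t).aestronglyMeasurable) (fun t => ?_)
    hχ.integrableOn ?_
  · filter_upwards [ae_restrict_mem measurableSet_Ioi] with u hu
    simpa [-Complex.ofReal_mul] using hχ.norm_mul_cauchyKernel_le hu t
  · filter_upwards [ae_restrict_mem measurableSet_Ioi] with u (hu : 0 < u)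
    exact continuous_const.mul (continuous_const.div (by fun_prop) fun t => by positivity)

end IsFiniteLevyDensity

theorem levyExponent_add_neg {χ : ℝ → ℝ} (hχ : IsFiniteLevyDensity χ) (hχ' : IsLevyDensity χ)
    (t : ℝ) : levyExponent χ t + levyExponent χ (-t) =
      (cauchyMixture χ t - cauchyMixture χ 0 : ℝ) := by
  rw [levyExponent, levyExponent, ← integral_add (hχ'.integrableOn_mul_levyKernel t)
    (hχ'.integrableOn_mul_levyKernel (-t)), cauchyMixture, cauchyMixture,
    ← integral_sub (hχ.integrableOn_mul_cauchyKernel t) (hχ.integrableOn_mul_cauchyKernel 0),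
    ← integral_complex_ofReal]
  simp only [← mul_add, ← mul_sub, levyKernel_add_neg, Complex.ofReal_mul]

theorem levyExponent_sub {p q : ℝ → ℝ} (hp : IsLevyDensity p) (hq : IsLevyDensity q) (t : ℝ) :
    levyExponent (fun u => p u - q u) t = levyExponent p t - levyExponent q t := by
  rw [levyExponent, levyExponent, levyExponent, ← integral_sub (hp.integrableOn_mul_levyKernel t)
    (hq.integrableOn_mul_levyKernel t)]
  simp only [Complex.ofReal_sub, sub_mul]

theorem levyExponent_const_mul (c : ℝ) (p : ℝ → ℝ) (t : ℝ) :
    levyExponent (fun u => c * p u) t = c * levyExponent p t := by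
  simp only [levyExponent, Complex.ofReal_mul, mul_assoc, integral_const_mul]

theorem isPosMultiplier_exp_sub_cauchyMixture {p q χ : ℝ → ℝ} (hp : IsLevyDensity p)
    (hq : IsLevyDensity q) (hχ : IsFiniteLevyDensity χ) (hχp : ∀ u, 0 < u → χ u ≤ p u)
    (hχq : ∀ u, 0 < u → χ u ≤ q u) :
    IsPosMultiplier fun t => Complex.exp (levyExponent p t + levyExponent q (-t)
      - (cauchyMixture χ t - cauchyMixture χ 0 : ℝ)) := by
  have hχ' : IsLevyDensity χ := hp.mono hχ.measurable hχ.nonneg hχp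
  have hsub {p : ℝ → ℝ} (hp : IsLevyDensity p) (hχp : ∀ u, 0 < u → χ u ≤ p u) :
      IsLevyDensity fun u => p u - χ u :=
    hp.mono (hp.measurable.sub hχ.measurable) (fun u hu => sub_nonneg.2 (hχp u hu))
      fun u hu => sub_le_self _ (hχ.nonneg u hu)
  have h := (hsub hp hχp).isPosMultiplier_exp_levyExponent.mul
    (hsub hq hχq).isPosMultiplier_exp_levyExponent.comp_neg
  simp only [← Complex.exp_add, levyExponent_sub hp hχ', levyExponent_sub hq hχ',
    sub_add_sub_comm, levyExponent_add_neg hχ hχ'] at h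
  exact h

end Taming

section LowerBound

open scoped ComplexOrder

theorem angularFourier_gaussian_nonneg {ε : ℝ} (hε : 0 < ε) (x : ℝ) :
    0 ≤ angularFourier (fun t => Complex.exp (-(ε : ℂ) * (t : ℂ) ^ 2)) x := by
  have hphase (t : ℝ) : phase x t = Complex.exp (Complex.I * (-x : ℂ) * t) := by
    rw [phase]
    push_cast
    ring_nf
  have hval : angularFourier (fun t => Complex.exp (-(ε : ℂ) * (t : ℂ) ^ 2)) x =
      (((Real.pi / ε) ^ (1 / 2 : ℝ) * Real.exp (-x ^ 2 / (4 * ε)) : ℝ) : ℂ) := by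
    simp only [angularFourier, hphase]
    rw [fourierIntegral_gaussian (by simpa using hε), Complex.ofReal_mul,
      Complex.ofReal_cpow (by positivity), Complex.ofReal_exp, neg_sq]
    push_cast
    rfl
  rw [hval]
  exact Complex.zero_le_real.2 (by positivity)

theorem IsPosMultiplier.angularFourier_nonneg {Φ : ℝ → ℂ} (h : IsPosMultiplier Φ)
    (hint : Integrable Φ) (x : ℝ) : 0 ≤ angularFourier Φ x := by
  let ε (n : ℕ) : ℝ := 1 / (n + 1)
  have hε (n : ℕ) : 0 < ε n := by positivity
  have hgauss (n : ℕ) : Integrable fun t : ℝ => Complex.exp (-(ε n : ℂ) * (t : ℂ) ^ 2) :=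
    integrable_cexp_neg_mul_sq (by simpa using hε n)
  refine ge_of_tendsto (tendsto_angularFourier (l := atTop)
    (fun n => (h.integrable_mul (hgauss n)).aestronglyMeasurable) hint.norm (fun n t => ?_)
    (fun t => ?_) x) (.of_forall fun n =>
      h.nonneg_mul _ (hgauss n) (angularFourier_gaussian_nonneg (hε n)) x)
  · rw [norm_mul]
    refine mul_le_of_le_one_right (norm_nonneg _) ?_
    rw [Complex.norm_exp, Real.exp_le_one_iff, ← Complex.ofReal_pow, ← Complex.ofReal_neg,
      ← Complex.ofReal_mul, Complex.ofReal_re]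
    nlinarith [hε n, sq_nonneg t]
  · have hlim : Tendsto (fun n => Complex.exp (-(ε n : ℂ) * (t : ℂ) ^ 2)) atTop (nhds 1) := by
      have hε0 : Tendsto ε atTop (nhds 0) := tendsto_one_div_add_atTop_nhds_zero_nat
      have hcont : Continuous fun e : ℝ => Complex.exp (-(e : ℂ) * (t : ℂ) ^ 2) := by fun_prop
      simpa [Function.comp_def] using (hcont.tendsto 0).comp hε0
    simpa using hlim.const_mul (Φ t)

theorem norm_angularFourier_le (G : ℝ → ℂ) (x : ℝ) : ‖angularFourier G x‖ ≤ ∫ t, ‖G t‖ := by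
  refine (norm_integral_le_integral_norm _).trans_eq ?_
  simp only [norm_mul, norm_phase, one_mul]

theorem continuous_angularFourier {G : ℝ → ℂ} (hG : Integrable G) :
    Continuous (angularFourier G) := by
  refine continuous_of_dominated (bound := fun t => ‖G t‖)
    (fun x => (integrable_phase_mul hG x).aestronglyMeasurable)
    (fun x => .of_forall fun t => ?_) hG.norm (.of_forall fun t => by fun_prop)
  rw [norm_mul, norm_phase, one_mul]

/-- The Abel mean at scale `1/u` of the Fourier integral of `G` around the point `z`. -/
noncomputable def abelMean (G : ℝ → ℂ) (u z : ℝ) : ℝ :=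
  ∫ y, Real.exp (-u * |y|) * (angularFourier G (z + y)).re

theorem integrable_exp_mul_angularFourier {G : ℝ → ℂ} (hG : Integrable G) {u : ℝ} (hu : 0 < u)
    (z : ℝ) : Integrable fun y : ℝ => Real.exp (-u * |y|) * (angularFourier G (z + y)).re :=
  (integrable_exp_neg_mul_abs hu).mul_bdd
    (Complex.continuous_re.comp
      ((continuous_angularFourier hG).comp (continuous_const_add z))).aestronglyMeasurable
    (.of_forall fun _ => (Complex.abs_re_le_norm _).trans (norm_angularFourier_le G _))

theorem re_angularFourier_cauchyKernel_mul {G : ℝ → ℂ} (hG : Integrable G) {u : ℝ} (hu : 0 < u)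
    (z : ℝ) :
    (angularFourier (fun t => cauchyKernel u t * G t) z).re = abelMean G u z := by
  simp only [← integral_exp_neg_mul_abs_mul_phase hu]
  rw [angularFourier_integral_mul (b := fun y => Real.exp (-u * |y|))
    (Continuous.measurable (by unfold Function.uncurry; fun_prop)) (integrable_exp_neg_mul_abs hu)
    (.of_forall fun y t => ?_) hG]
  · simp only [mul_assoc, angularFourier_const_mul, angularFourier_phase_mul]
    rw [← RCLike.re_to_complex, ← integral_re ?_, abelMean]
    · simp only [RCLike.re_to_complex, Complex.re_ofReal_mul]
    · exact (integrable_exp_neg_mul_abs hu).ofReal.mul_bdd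
        ((continuous_angularFourier hG).comp (continuous_const_add z)).aestronglyMeasurable
        (.of_forall fun y => norm_angularFourier_le G _)
  · rw [norm_mul, norm_phase, mul_one, Complex.norm_of_nonneg (Real.exp_pos _).le]

theorem abelMean_nonneg {G : ℝ → ℂ} (hpos : ∀ x, 0 ≤ angularFourier G x) (u z : ℝ) :
    0 ≤ abelMean G u z :=
  integral_nonneg fun _ => mul_nonneg (Real.exp_pos _).le (Complex.le_def.1 (hpos _)).1

theorem abelMean_zero_le {G : ℝ → ℂ} (hG : Integrable G) (hpos : ∀ x, 0 ≤ angularFourier G x)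
    {u r z : ℝ} (hu : 0 < u) (hr : r ≤ 1) (hur : u * (1 + |z|) ≤ r) :
    Real.exp (-1) * abelMean G r 0 ≤ abelMean G u z := by
  have hr0 : 0 < r := lt_of_lt_of_le (by positivity) hur
  have hshift : abelMean G u z = ∫ y, Real.exp (-u * |y - z|) * (angularFourier G y).re := by
    rw [abelMean, ← integral_sub_right_eq_self _ z]
    simp only [add_sub_cancel]
  have hint : Integrable fun y => Real.exp (-u * |y - z|) * (angularFourier G y).re := by
    simpa using (integrable_exp_mul_angularFourier hG hu z).comp_sub_right z
  rw [hshift, abelMean, ← integral_const_mul]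
  refine integral_mono ((integrable_exp_mul_angularFourier hG hr0 0).const_mul _) hint fun y => ?_
  dsimp only
  rw [← mul_assoc, ← Real.exp_add, zero_add]
  refine mul_le_mul_of_nonneg_right (Real.exp_le_exp.2 ?_) (Complex.le_def.1 (hpos y)).1
  have huy : u * |y| ≤ r * |y| := by
    gcongr
    nlinarith [abs_nonneg z]
  nlinarith [abs_sub y z, abs_nonneg z]

theorem tendsto_abelMean_inv {G : ℝ → ℂ} (hG : Integrable G) (hG0 : ContinuousAt G 0) :
    Tendsto (fun c => abelMean G c⁻¹ 0) atTop (nhds (2 * Real.pi * (G 0).re)) := by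
  have hpeak : Tendsto (fun c : ℝ => ∫ t, (c * (Real.pi⁻¹ * (1 + (c * t) ^ 2)⁻¹)) • G t) atTop
      (nhds (G 0)) := by
    have hdecay : Tendsto (fun x : ℝ => ‖x‖ ^ Module.finrank ℝ ℝ * (Real.pi⁻¹ * (1 + x ^ 2)⁻¹))
        (Bornology.cobounded ℝ) (nhds 0) := by
      refine squeeze_zero (fun x => by positivity) (fun x => ?_)
        (tendsto_inv_atTop_zero.comp tendsto_norm_cobounded_atTop)
      have hx := norm_nonneg x
      rw [Module.finrank_self, pow_one, Function.comp_apply, ← sq_abs, ← Real.norm_eq_abs]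
      rcases hx.eq_or_lt with h0 | h0
      · simp [← h0]
      · rw [← mul_inv, ← div_eq_mul_inv, div_le_iff₀ (by positivity)]
        have := Real.pi_gt_three
        field_simp
        nlinarith
    simpa only [Module.finrank_self, pow_one, smul_eq_mul] using
      tendsto_integral_comp_smul_smul_of_integrable (fun x => by positivity)
        (by rw [integral_const_mul, integral_univ_inv_one_add_sq, inv_mul_cancel₀ Real.pi_ne_zero])
        hdecay hG hG0
  refine (((Complex.continuous_re.tendsto _).comp hpeak).const_mul (2 * Real.pi)).congr' ?_
  filter_upwards [eventually_gt_atTop 0] with c hc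
  have hkernel (t : ℝ) : c * (Real.pi⁻¹ * (1 + (c * t) ^ 2)⁻¹) =
      (2 * Real.pi)⁻¹ * cauchyKernel c⁻¹ t := by
    have := Real.pi_ne_zero
    rw [cauchyKernel]
    field_simp
  rw [← re_angularFourier_cauchyKernel_mul hG (inv_pos.2 hc), Function.comp_apply,
    ← Complex.re_ofReal_mul, angularFourier, ← integral_const_mul]
  congr 2 with t
  have hphase : phase 0 t = 1 := by simp [phase]
  have := Real.pi_ne_zero
  rw [hkernel, hphase, Complex.real_smul]
  push_cast
  field_simp

theorem exists_abelMean_pos {G : ℝ → ℂ} (hG : Integrable G) (hG0 : ContinuousAt G 0)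
    (hpos : 0 < (G 0).re) : ∃ r, 0 < r ∧ r ≤ 1 ∧ 0 < abelMean G r 0 := by
  have hlim := (tendsto_abelMean_inv hG hG0).eventually_const_lt
    (mul_pos Real.two_pi_pos hpos)
  obtain ⟨c, hc, hc1⟩ := (hlim.and (eventually_ge_atTop 1)).exists
  exact ⟨c⁻¹, by positivity, inv_le_one_of_one_le₀ hc1, hc⟩

section CauchyMixture

variable {χ : ℝ → ℝ} {G : ℝ → ℂ}

theorem angularFourier_cauchyMixture_mul (hχ : IsFiniteLevyDensity χ) (hG : Integrable G) (z : ℝ) :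
    angularFourier (fun t => cauchyMixture χ t * G t) z
      = ∫ u in Set.Ioi 0, angularFourier (fun t => χ u * cauchyKernel u t * G t) z := by
  simp only [ofReal_cauchyMixture]
  refine angularFourier_integral_mul hχ.measurable_mul_cauchyKernel hχ.integrableOn ?_ hG z
  filter_upwards [ae_restrict_mem measurableSet_Ioi] with u hu
  exact hχ.norm_mul_cauchyKernel_le hu

theorem integrableOn_angularFourier_cauchyKernel_mul (hχ : IsFiniteLevyDensity χ)
    (hG : Integrable G) (z : ℝ) :
    IntegrableOn (fun u => angularFourier (fun t => χ u * cauchyKernel u t * G t) z)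
      (Set.Ioi 0) := by
  have hmeas : AEStronglyMeasurable
      (fun q : ℝ × ℝ => phase z q.2 * (χ q.1 * cauchyKernel q.1 q.2 * G q.2))
      ((volume.restrict (Set.Ioi (0 : ℝ))).prod volume) :=
    ((continuous_phase_right z).comp continuous_snd).aestronglyMeasurable.mul
      (hχ.measurable_mul_cauchyKernel.aestronglyMeasurable.mul hG.aestronglyMeasurable.comp_snd)
  refine (hχ.integrableOn.mul_const (∫ t, ‖G t‖)).mono' hmeas.integral_prod_right' ?_
  filter_upwards [ae_restrict_mem measurableSet_Ioi] with u hu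
  refine (norm_angularFourier_le _ z).trans ?_
  rw [← integral_const_mul]
  refine integral_mono_of_nonneg (.of_forall fun t => norm_nonneg _) (hG.norm.const_mul _)
    (.of_forall fun t => ?_)
  dsimp only
  rw [norm_mul]
  exact mul_le_mul_of_nonneg_right (hχ.norm_mul_cauchyKernel_le hu t) (norm_nonneg _)

theorem le_re_angularFourier_cauchyMixture_mul (hχ : IsFiniteLevyDensity χ) (hG : Integrable G)
    (hpos : ∀ x, 0 ≤ angularFourier G x) {r : ℝ} (hr : r ≤ 1) (z : ℝ)
    (hχint : IntegrableOn χ (Set.Ioc 0 (r / (1 + |z|)))) :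
    (∫ u in Set.Ioc 0 (r / (1 + |z|)), χ u) * (Real.exp (-1) * abelMean G r 0)
      ≤ (angularFourier (fun t => cauchyMixture χ t * G t) z).re := by
  have hint := integrableOn_angularFourier_cauchyKernel_mul hχ hG z
  have hint_re : IntegrableOn
      (fun u => RCLike.re (angularFourier (fun t => χ u * cauchyKernel u t * G t) z))
      (Set.Ioi 0) := hint.re
  have hre {u : ℝ} (hu : 0 < u) :
      (angularFourier (fun t => χ u * cauchyKernel u t * G t) z).re = χ u * abelMean G u z := by
    simp only [mul_assoc, angularFourier_const_mul, Complex.re_ofReal_mul,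
      re_angularFourier_cauchyKernel_mul hG hu]
  have hsub : Set.Ioc 0 (r / (1 + |z|)) ⊆ Set.Ioi 0 := Set.Ioc_subset_Ioi_self
  rw [angularFourier_cauchyMixture_mul hχ hG, ← RCLike.re_to_complex, ← integral_re hint,
    ← integral_mul_const]
  refine (setIntegral_mono_on (hχint.mul_const _) (hint_re.mono_set hsub)
    measurableSet_Ioc fun u hu => ?_).trans
    (setIntegral_mono_set hint_re ?_ hsub.eventuallyLE)
  · rw [RCLike.re_to_complex, hre hu.1]
    exact mul_le_mul_of_nonneg_left (abelMean_zero_le hG hpos hu.1 hr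
      ((le_div_iff₀ (by positivity)).1 hu.2)) (hχ.nonneg u hu.1)
  · filter_upwards [ae_restrict_mem measurableSet_Ioi] with u hu
    rw [RCLike.re_to_complex, hre hu]
    exact mul_nonneg (hχ.nonneg u hu) (abelMean_nonneg hpos u z)

end CauchyMixture

theorem IsPosMultiplier.re_angularFourier_mul_le {Φ G : ℝ → ℂ} (h : IsPosMultiplier Φ)
    (hG : Integrable G) (hpos : ∀ x, 0 ≤ angularFourier G x) (z : ℝ) :
    (angularFourier (fun t => Φ t * G t) z).re
      ≤ (angularFourier (fun t => Complex.exp (Φ t) * G t) z).re := by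
  have hsum : angularFourier (fun t => Complex.exp (Φ t) * G t) z =
      angularFourier (fun t => (Complex.exp (Φ t) - Φ t) * G t) z
        + angularFourier (fun t => Φ t * G t) z := by
    rw [← angularFourier_add (h.exp_sub_self.integrable_mul hG) (h.integrable_mul hG)]
    simp only [sub_mul, sub_add_cancel]
  rw [hsum, Complex.add_re]
  exact le_add_of_nonneg_left (Complex.le_def.1 (h.exp_sub_self.nonneg_mul G hG hpos z)).1

end LowerBound

section StableLowerBound

open scoped ComplexOrder

/-- The part `κ u^A`, `0 < u ≤ 1`, of the Lévy density of a stable law that is split off to bound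
the probability density from below. -/
noncomputable def truncatedPower (κ A : ℝ) : ℝ → ℝ :=
  (Set.Ioc 0 1).indicator fun u => κ * u ^ A

theorem integrableOn_Ioc_rpow {A : ℝ} (hA : -1 < A) {ρ : ℝ} (hρ : 0 ≤ ρ) :
    IntegrableOn (fun u : ℝ => u ^ A) (Set.Ioc 0 ρ) :=
  (intervalIntegrable_iff_integrableOn_Ioc_of_le hρ).1
    (intervalIntegral.intervalIntegrable_rpow' hA)

theorem truncatedPower_le {κ A c a : ℝ} (hκ : 0 ≤ κ) (hκc : κ ≤ c) (ha : a ≤ A) {u : ℝ}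
    (hu : 0 < u) : truncatedPower κ A u ≤ c * u ^ a :=
  Set.indicator_apply_le' (fun h => mul_le_mul hκc
    (Real.rpow_le_rpow_of_exponent_ge hu h.2 ha) (by positivity) (hκ.trans hκc))
    fun _ => mul_nonneg (hκ.trans hκc) (by positivity)

theorem isFiniteLevyDensity_truncatedPower {κ A : ℝ} (hκ : 0 ≤ κ) (hA : 0 < A) :
    IsFiniteLevyDensity (truncatedPower κ A) where
  measurable := Measurable.indicator (by fun_prop) measurableSet_Ioc
  nonneg u _ := Set.indicator_nonneg (fun v hv => mul_nonneg hκ (Real.rpow_nonneg hv.1.le A)) u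
  integrableOn := by
    have hint := (integrableOn_Ioc_rpow (A := A - 1) (by linarith) zero_le_one).const_mul (2 * κ)
    refine ((integrable_indicator_iff measurableSet_Ioc).2 hint).integrableOn.congr_fun
      (fun u (hu : 0 < u) => ?_) measurableSet_Ioi
    by_cases h : u ∈ Set.Ioc (0 : ℝ) 1
    · simp only [truncatedPower, Set.indicator_of_mem h, Real.rpow_sub_one hu.ne']
      ring
    · simp only [truncatedPower, Set.indicator_of_notMem h, zero_mul]

theorem eqOn_truncatedPower {κ A ρ : ℝ} (hρ : ρ ≤ 1) :
    Set.EqOn (truncatedPower κ A) (fun u => κ * u ^ A) (Set.Ioc 0 ρ) := fun _ hu =>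
  Set.indicator_of_mem (Set.Ioc_subset_Ioc_right hρ hu) _

theorem integrableOn_truncatedPower {κ A ρ : ℝ} (hA : -1 < A) (hρ0 : 0 ≤ ρ) (hρ : ρ ≤ 1) :
    IntegrableOn (truncatedPower κ A) (Set.Ioc 0 ρ) :=
  IntegrableOn.congr_fun ((integrableOn_Ioc_rpow hA hρ0).const_mul κ)
    (eqOn_truncatedPower hρ).symm measurableSet_Ioc

theorem setIntegral_truncatedPower {κ A ρ : ℝ} (hA : -1 < A) (hρ0 : 0 ≤ ρ) (hρ : ρ ≤ 1) :
    ∫ u in Set.Ioc 0 ρ, truncatedPower κ A u = κ * (ρ ^ (A + 1) / (A + 1)) := by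
  rw [setIntegral_congr_fun measurableSet_Ioc (eqOn_truncatedPower hρ), integral_const_mul,
    ← intervalIntegral.integral_of_le hρ0, integral_rpow (.inl hA),
    Real.zero_rpow (by linarith), sub_zero]

/-- The stable characteristic function with the Lévy density `χ` removed from both half-lines. -/
noncomputable def tamedCharFun (χ : ℝ → ℝ) (a b t : ℝ) : ℂ :=
  Complex.exp (stableExponent a b t - (cauchyMixture χ t - cauchyMixture χ 0 : ℝ))

section Tamed

variable {χ : ℝ → ℝ} {a b : ℝ}

theorem isPosMultiplier_tamedCharFun (hχ : IsFiniteLevyDensity χ) (ha : a ∈ Set.Ioo 0 2)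
    (hb : |b| ≤ 1) (hle : ∀ u, 0 < u → χ u ≤ (1 - |b|) / (2 * levyConst a) * u ^ a) :
    IsPosMultiplier (tamedCharFun χ a b) := by
  have hK := levyConst_pos ha
  have hplus : (1 - |b|) / (2 * levyConst a) ≤ (1 + b) / (2 * levyConst a) := by
    gcongr; linarith [neg_abs_le b]
  have hminus : (1 - |b|) / (2 * levyConst a) ≤ (1 - b) / (2 * levyConst a) := by
    gcongr; exact le_abs_self b
  have hzero : 0 ≤ (1 - |b|) / (2 * levyConst a) := div_nonneg (by linarith) (by positivity)
  have h := isPosMultiplier_exp_sub_cauchyMixture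
    ((isLevyDensity_rpow ha).const_mul (hzero.trans hplus))
    ((isLevyDensity_rpow ha).const_mul (hzero.trans hminus)) hχ
    (fun u hu => (hle u hu).trans (by gcongr)) (fun u hu => (hle u hu).trans (by gcongr))
  have hKc : (levyConst a : ℂ) ≠ 0 := Complex.ofReal_ne_zero.2 hK.ne'
  convert h using 4 with t
  rw [tamedCharFun, stableExponent_eq_add, levyExponent_const_mul, levyExponent_const_mul,
    levyExponent_rpow ha, levyExponent_rpow ha]
  push_cast
  field_simp

theorem norm_tamedCharFun_le (hχ : IsFiniteLevyDensity χ) (a b t : ℝ) :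
    ‖tamedCharFun χ a b t‖ ≤ Real.exp (cauchyMixture χ 0) * Real.exp (-|t| ^ a) := by
  rw [tamedCharFun, Complex.norm_exp, Complex.sub_re, stableExponent_re, Complex.ofReal_re,
    ← Real.exp_add]
  exact Real.exp_le_exp.2 (by linarith [hχ.cauchyMixture_nonneg t])

theorem integrable_exp_neg_abs_rpow (ha : 0 < a) : Integrable fun t : ℝ => Real.exp (-|t| ^ a) :=
  integrable_comp_abs (f := fun t => Real.exp (-t ^ a))
    (by simpa using integrableOn_rpow_mul_exp_neg_rpow (s := 0) (by norm_num) ha)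

theorem integrable_tamedCharFun (hχ : IsFiniteLevyDensity χ) (ha : a ∈ Set.Ioo 0 2)
    (hb : |b| ≤ 1) (hle : ∀ u, 0 < u → χ u ≤ (1 - |b|) / (2 * levyConst a) * u ^ a) :
    Integrable (tamedCharFun χ a b) :=
  ((integrable_exp_neg_abs_rpow ha.1).const_mul _).mono'
    (isPosMultiplier_tamedCharFun hχ ha hb hle).measurable.aestronglyMeasurable
    (.of_forall (norm_tamedCharFun_le hχ a b))

theorem le_re_angularFourier_exp_stableExponent (hχ : IsFiniteLevyDensity χ)
    (ha : a ∈ Set.Ioo 0 2) (hb : |b| ≤ 1)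
    (hle : ∀ u, 0 < u → χ u ≤ (1 - |b|) / (2 * levyConst a) * u ^ a) {r : ℝ} (hr : r ≤ 1) (z : ℝ)
    (hχint : IntegrableOn χ (Set.Ioc 0 (r / (1 + |z|)))) :
    Real.exp (-cauchyMixture χ 0) * ((∫ u in Set.Ioc 0 (r / (1 + |z|)), χ u)
        * (Real.exp (-1) * abelMean (tamedCharFun χ a b) r 0))
      ≤ (angularFourier (fun t => Complex.exp (stableExponent a b t)) z).re := by
  have hG := integrable_tamedCharFun hχ ha hb hle
  have hpos := (isPosMultiplier_tamedCharFun hχ ha hb hle).angularFourier_nonneg hG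
  have hfactor (t : ℝ) : Complex.exp (stableExponent a b t) = (Real.exp (-cauchyMixture χ 0) : ℝ)
      * (Complex.exp (cauchyMixture χ t) * tamedCharFun χ a b t) := by
    rw [tamedCharFun, Complex.ofReal_exp, ← Complex.exp_add, ← Complex.exp_add]
    push_cast
    ring_nf
  simp only [hfactor]
  rw [angularFourier_const_mul, Complex.re_ofReal_mul]
  exact mul_le_mul_of_nonneg_left ((le_re_angularFourier_cauchyMixture_mul hχ hG hpos hr z
    hχint).trans (hχ.isPosMultiplier_cauchyMixture.re_angularFourier_mul_le hG hpos z))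
    (Real.exp_pos _).le

end Tamed

theorem continuousAt_stableExponent_zero {a : ℝ} (ha : 0 < a) (b : ℝ) :
    ContinuousAt (stableExponent a b) 0 := by
  have hbound : Tendsto (fun s : ℝ => |Real.log s| * (|s| + |s| ^ a)) (nhdsWithin 0 {0}ᶜ)
      (nhds 0) := by
    have h := ((tendsto_log_mul_rpow_nhdsGT_zero zero_lt_one).abs.add
      (tendsto_log_mul_rpow_nhdsGT_zero ha).abs).comp tendsto_abs_nhdsNE_zero
    simp only [abs_zero, add_zero] at h
    refine h.congr fun s => ?_
    simp only [Function.comp_apply, Real.rpow_one, Real.log_abs, abs_mul, abs_abs,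
      abs_of_nonneg (Real.rpow_nonneg (abs_nonneg s) a)]
    ring
  have hmoment : Tendsto (fun s => s * logMoment 0 a s) (nhds 0) (nhds 0) := by
    suffices h : Tendsto (fun s => s * logMoment 0 a s) (nhdsWithin 0 {0}ᶜ) (nhds 0) by
      have hcont : ContinuousAt (fun s => s * logMoment 0 a s) 0 :=
        continuousAt_iff_punctured_nhds.2 (by simpa using h)
      simpa [ContinuousAt] using hcont
    refine squeeze_zero_norm' ?_ hbound
    filter_upwards [self_mem_nhdsWithin] with s hs
    have h := abs_mul_logMoment_le 0 a (abs_pos.2 hs)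
    rw [zero_add, pow_one, Real.log_abs] at h
    refine le_of_eq_of_le ?_ h
    rcases abs_choice s with h | h <;> simp [h, logMoment_neg]
  rw [ContinuousAt, stableExponent_zero ha.ne']
  have hpow : Tendsto (fun s : ℝ => |s| ^ a) (nhds 0) (nhds 0) := by
    simpa [Real.zero_rpow ha.ne'] using
      (continuous_abs.rpow_const fun _ => .inr ha.le).tendsto (0 : ℝ)
  unfold stableExponent
  simpa using
    ((Complex.continuous_ofReal.tendsto _).comp hpow).neg.add
      (((Complex.continuous_ofReal.tendsto _).comp (hmoment.const_mul (b * regTan a))).const_mul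
        Complex.I)

theorem continuousAt_levyConst {a : ℝ} (ha : a ∈ Set.Ioo 0 2) : ContinuousAt levyConst a :=
  continuousAt_const.div (Continuous.continuousAt (by fun_prop))
    (mul_pos two_pos (sin_pi_mul_div_two_pos ha)).ne'

theorem continuousAt_stableExponent_left {a : ℝ} (ha : a ∈ Set.Ioo 0 2) (b t : ℝ) :
    ContinuousAt (fun p : ℝ × ℝ => stableExponent p.1 p.2 t) (a, b) := by
  refine .add ?_ (continuousAt_const.mul ?_)
  · exact (Complex.continuous_ofReal.continuousAt.comp
      (Real.continuousAt_const_rpow' ha.1.ne').fst'').neg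
  · exact Complex.continuous_ofReal.continuousAt.comp
      ((continuousAt_snd.mul (hasDerivAt_regTan ha).continuousAt.fst'').mul
        (continuousAt_const.mul
          (continuous_logMoment_left 0 t).continuousAt.fst''))

theorem exp_neg_rpow_le {x a a' : ℝ} (hx : 0 ≤ x) (ha : 0 ≤ a) (haa' : a ≤ a') :
    Real.exp (-x ^ a') ≤ Real.exp 1 * Real.exp (-x ^ a) := by
  rw [← Real.exp_add, Real.exp_le_exp]
  rcases le_total x 1 with h | h
  · linarith [Real.rpow_le_one hx h ha, Real.rpow_nonneg hx a']
  · linarith [Real.rpow_le_rpow_of_exponent_le h haa']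

theorem continuousAt_abelMean_tamedCharFun {χ : ℝ → ℝ} {a b r : ℝ} (hχ : IsFiniteLevyDensity χ)
    (ha : a ∈ Set.Ioo 0 2) (hb : |b| < 1) (hr : 0 < r)
    (hle : ∀ᶠ p : ℝ × ℝ in nhds (a, b), ∀ u, 0 < u →
      χ u ≤ (1 - |p.2|) / (2 * levyConst p.1) * u ^ p.1) :
    ContinuousAt (fun p : ℝ × ℝ => abelMean (tamedCharFun χ p.1 p.2) r 0) (a, b) := by
  have hIoo : ∀ᶠ p : ℝ × ℝ in nhds (a, b), p.1 ∈ Set.Ioo (a / 2) 2 :=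
    continuousAt_fst.eventually_mem (Ioo_mem_nhds (half_lt_self ha.1) ha.2)
  have hlt : ∀ᶠ p : ℝ × ℝ in nhds (a, b), |p.2| < 1 :=
    continuousAt_snd.abs.eventually_lt_const hb
  have hint : ∀ᶠ p : ℝ × ℝ in nhds (a, b), Integrable (tamedCharFun χ p.1 p.2) := by
    filter_upwards [hIoo, hlt, hle] with p hp hp2 hple
    exact integrable_tamedCharFun hχ ⟨(half_pos ha.1).trans hp.1, hp.2⟩ hp2.le hple
  suffices ContinuousAt (fun p : ℝ × ℝ =>
      angularFourier (fun t => cauchyKernel r t * tamedCharFun χ p.1 p.2 t) 0) (a, b) by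
    refine (Complex.continuous_re.continuousAt.comp this).congr ?_
    filter_upwards [hint] with p hp
    exact re_angularFourier_cauchyKernel_mul hp hr 0
  refine continuousAt_of_dominated (bound := fun t => 2 / r *
    (Real.exp (cauchyMixture χ 0) * (Real.exp 1 * Real.exp (-|t| ^ (a / 2))))) ?_ ?_
    ((((integrable_exp_neg_abs_rpow (half_pos ha.1)).const_mul _).const_mul _).const_mul _)
    (.of_forall fun t => ?_)
  · filter_upwards [hint] with p hp
    exact (integrable_phase_mul ((isPosMultiplier_cauchyKernel hr).integrable_mul hp)
      0).aestronglyMeasurable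
  · filter_upwards [hIoo] with p hp
    refine .of_forall fun t => ?_
    rw [norm_mul, norm_phase, one_mul, norm_mul]
    gcongr
    · exact norm_cauchyKernel_le hr t
    · exact (norm_tamedCharFun_le hχ _ _ t).trans
        (by gcongr; exact exp_neg_rpow_le (abs_nonneg t) (half_pos ha.1).le hp.1.le)
  · exact continuousAt_const.mul (continuousAt_const.mul
      ((continuousAt_stableExponent_left ha b t).sub continuousAt_const).cexp)

theorem exists_abelMean_tamedCharFun_pos {χ : ℝ → ℝ} {a b : ℝ} (hχ : IsFiniteLevyDensity χ)
    (ha : a ∈ Set.Ioo 0 2) (hb : |b| ≤ 1)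
    (hle : ∀ u, 0 < u → χ u ≤ (1 - |b|) / (2 * levyConst a) * u ^ a) :
    ∃ r, 0 < r ∧ r ≤ 1 ∧ 0 < abelMean (tamedCharFun χ a b) r 0 := by
  refine exists_abelMean_pos (integrable_tamedCharFun hχ ha hb hle) ?_ ?_
  · exact ((continuousAt_stableExponent_zero ha.1 b).sub
      (Complex.continuous_ofReal.comp
        (hχ.continuous_cauchyMixture.sub continuous_const)).continuousAt).cexp
  · simp [tamedCharFun, stableExponent_zero ha.1.ne']

theorem eventually_le_re_angularFourier_exp_stableExponent {a b A : ℝ} (ha : a ∈ Set.Ioo 0 2)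
    (hb : |b| < 1) (hA : a < A) :
    ∃ c > 0, ∀ᶠ p : ℝ × ℝ in nhds (a, b), ∀ z : ℝ, c * (1 + |z|) ^ (-(1 + A)) ≤
      (angularFourier (fun t => Complex.exp (stableExponent p.1 p.2 t)) z).re := by
  have hK := levyConst_pos ha
  have hA0 : 0 < A := ha.1.trans hA
  obtain ⟨κ, hκ, hκlt⟩ : ∃ κ, 0 < κ ∧ κ < (1 - |b|) / (2 * levyConst a) :=
    exists_between (div_pos (by linarith) (by positivity))
  have hχ := isFiniteLevyDensity_truncatedPower hκ.le hA0
  set χ := truncatedPower κ A with hχdef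
  have hIoo : ∀ᶠ p : ℝ × ℝ in nhds (a, b), p.1 ∈ Set.Ioo 0 2 :=
    continuousAt_fst.eventually_mem (Ioo_mem_nhds ha.1 ha.2)
  have hlt : ∀ᶠ p : ℝ × ℝ in nhds (a, b), |p.2| < 1 :=
    continuousAt_snd.abs.eventually_lt_const hb
  have hle : ∀ᶠ p : ℝ × ℝ in nhds (a, b), ∀ u, 0 < u →
      χ u ≤ (1 - |p.2|) / (2 * levyConst p.1) * u ^ p.1 := by
    have hcont : ContinuousAt (fun p : ℝ × ℝ => (1 - |p.2|) / (2 * levyConst p.1)) (a, b) :=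
      (continuousAt_const.sub continuousAt_snd.abs).div
        (continuousAt_const.mul (continuousAt_levyConst ha).fst'')
        (by positivity)
    filter_upwards [hcont.eventually_const_lt hκlt,
      continuousAt_fst.eventually_lt_const hA] with p hpκ hpA u hu
    exact truncatedPower_le hκ.le hpκ.le hpA.le hu
  obtain ⟨r, hr0, hr1, hpos⟩ := exists_abelMean_tamedCharFun_pos hχ ha hb.le hle.self_of_nhds
  set M := abelMean (tamedCharFun χ a b) r 0
  refine ⟨Real.exp (-cauchyMixture χ 0) * (κ * (r ^ (A + 1) / (A + 1))
    * (Real.exp (-1) * (M / 2))), by positivity, ?_⟩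
  filter_upwards [hIoo, hlt, hle, (continuousAt_abelMean_tamedCharFun hχ ha hb hr0
    hle).eventually_const_lt (half_lt_self hpos)] with p hp hp2 hple hpM z
  have hz : 0 < 1 + |z| := by positivity
  have hρ0 : 0 ≤ r / (1 + |z|) := by positivity
  have hρ1 : r / (1 + |z|) ≤ 1 := (div_le_one hz).2 (by linarith [abs_nonneg z])
  refine le_trans ?_ (le_re_angularFourier_exp_stableExponent hχ hp hp2.le hple hr1 z
    (integrableOn_truncatedPower (by linarith) hρ0 hρ1))
  rw [hχdef, setIntegral_truncatedPower (by linarith) hρ0 hρ1, Real.div_rpow hr0.le hz.le,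
    add_comm 1 A, Real.rpow_neg hz.le]
  calc _ = Real.exp (-cauchyMixture χ 0) * (κ * (r ^ (A + 1) / (1 + |z|) ^ (A + 1) / (A + 1))
        * (Real.exp (-1) * (M / 2))) := by ring
    _ ≤ _ := by gcongr

end StableLowerBound

section OscillatoryDecay

theorem hasDerivAt_phase (x s : ℝ) : HasDerivAt (phase x) (-(Complex.I * x) * phase x s) s := by
  have h : HasDerivAt (fun s : ℝ => -(Complex.I * ((x * s : ℝ) : ℂ))) (-(Complex.I * x)) s := by
    simpa using ((((hasDerivAt_id s).const_mul x).ofReal_comp.const_mul Complex.I).fun_neg)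
  exact h.cexp.congr_deriv (mul_comm _ _)

theorem norm_setIntegral_phase_mul_le (S : Set ℝ) (x : ℝ) (f : ℝ → ℂ) :
    ‖∫ s in S, phase x s * f s‖ ≤ ∫ s in S, ‖f s‖ := by
  simpa [norm_phase] using norm_integral_le_integral_norm (μ := volume.restrict S)
    fun s => phase x s * f s

theorem abs_mul_norm_integral_Ioi_phase_mul_le {c : ℝ} {f f' : ℝ → ℂ} {f₀ : ℂ}
    (hderiv : ∀ s ∈ Set.Ioi c, HasDerivAt f (f' s) s) (hf : IntegrableOn f (Set.Ioi c))
    (hf' : IntegrableOn f' (Set.Ioi c)) (hf₀ : Tendsto f (nhdsWithin c (Set.Ioi c)) (nhds f₀))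
    (htop : Tendsto f atTop (nhds 0)) (x : ℝ) :
    |x| * ‖∫ s in Set.Ioi c, phase x s * f s‖ ≤
      ‖f₀‖ + ‖∫ s in Set.Ioi c, phase x s * f' s‖ := by
  have hparts := integral_Ioi_mul_deriv_eq_deriv_mul (v := phase x)
    (v' := fun s => -(Complex.I * x) * phase x s) hderiv (fun s _ => hasDerivAt_phase x s)
    (((integrable_phase_mul hf x).const_mul (-(Complex.I * x))).congr
      (.of_forall fun s => by simp only [Pi.mul_apply]; ring))
    ((integrable_phase_mul hf' x).congr (.of_forall fun s => mul_comm _ _))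
    (hf₀.mul ((continuous_phase_right x).continuousAt.mono_left nhdsWithin_le_nhds))
    (squeeze_zero_norm (a := fun s => ‖f s‖) (fun s => by simp [norm_phase])
      (by simpa using htop.norm))
  have hleft : ∫ s in Set.Ioi c, f s * (-(Complex.I * x) * phase x s) =
      -(Complex.I * x) * ∫ s in Set.Ioi c, phase x s * f s := by
    rw [← integral_const_mul]
    exact integral_congr_ae (.of_forall fun s => by ring)
  simp only [hleft, mul_comm (f' _)] at hparts
  calc |x| * ‖∫ s in Set.Ioi c, phase x s * f s‖
      = ‖-(Complex.I * x) * ∫ s in Set.Ioi c, phase x s * f s‖ := by simp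
    _ ≤ ‖f₀ * phase x c‖ + ‖∫ s in Set.Ioi c, phase x s * f' s‖ := by
      rw [hparts, zero_sub, ← norm_neg (f₀ * phase x c)]
      exact norm_sub_le _ _
    _ = _ := by rw [norm_mul, norm_phase, mul_one]

theorem tendsto_zero_of_norm_le_rpow_div {C r : ℝ} {g : ℝ → ℂ} (hr : r < 2)
    (hg : ∀ s, 0 < s → ‖g s‖ ≤ C * (s ^ r / (1 + s ^ 2))) (hC : 0 ≤ C) :
    Tendsto g atTop (nhds 0) := by
  have h := (tendsto_rpow_neg_atTop (sub_pos.2 hr)).const_mul C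
  rw [mul_zero] at h
  refine squeeze_zero_norm' ((eventually_gt_atTop 0).mono fun s hs => (hg s hs).trans ?_) h
  have hpow : s ^ (-(2 - r)) = s ^ r / s ^ 2 := by
    rw [neg_sub, Real.rpow_sub hs]
    norm_cast
  rw [hpow]
  gcongr
  linarith

/-- `f` is twice differentiable on `(0, ∞)`, and `f`, `f₁ = s f'` and `f₂ = s f₁'` are bounded by
the weight `w`. The Euler operator `s d/ds` is used in place of the derivative because it preserves
the order of magnitude of powers and logarithms. -/
structure HasEulerBound (w : ℝ → ℝ) (f f₁ f₂ : ℝ → ℂ) : Prop where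
  hasDerivAt : ∀ s, 0 < s → HasDerivAt f (f₁ s / s) s
  hasDerivAt₁ : ∀ s, 0 < s → HasDerivAt f₁ (f₂ s / s) s
  norm_le : ∀ s, 0 < s → ‖f s‖ ≤ w s
  norm_le₁ : ∀ s, 0 < s → ‖f₁ s‖ ≤ w s
  norm_le₂ : ∀ s, 0 < s → ‖f₂ s‖ ≤ w s

namespace HasEulerBound

section Algebra

variable {v w : ℝ → ℝ} {f f₁ f₂ g g₁ g₂ : ℝ → ℂ}

theorem mono (hf : HasEulerBound v f f₁ f₂) (hvw : ∀ s, 0 < s → v s ≤ w s) :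
    HasEulerBound w f f₁ f₂ where
  hasDerivAt := hf.hasDerivAt
  hasDerivAt₁ := hf.hasDerivAt₁
  norm_le s hs := (hf.norm_le s hs).trans (hvw s hs)
  norm_le₁ s hs := (hf.norm_le₁ s hs).trans (hvw s hs)
  norm_le₂ s hs := (hf.norm_le₂ s hs).trans (hvw s hs)

theorem mul (hf : HasEulerBound v f f₁ f₂) (hg : HasEulerBound w g g₁ g₂) :
    HasEulerBound (fun s => 4 * (v s * w s)) (fun s => f s * g s)
      (fun s => f₁ s * g s + f s * g₁ s)
      (fun s => f₂ s * g s + 2 * (f₁ s * g₁ s) + f s * g₂ s) := by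
  have hle {s : ℝ} {y z : ℂ} (hy : ‖y‖ ≤ v s) (hz : ‖z‖ ≤ w s) : ‖y * z‖ ≤ v s * w s :=
    (norm_mul y z).trans_le (mul_le_mul hy hz (norm_nonneg z) ((norm_nonneg y).trans hy))
  refine ⟨fun s hs => ?_, fun s hs => ?_, fun s hs => ?_, fun s hs => ?_, fun s hs => ?_⟩
  · exact ((hf.hasDerivAt s hs).mul (hg.hasDerivAt s hs)).congr_deriv (by ring)
  · exact (((hf.hasDerivAt₁ s hs).mul (hg.hasDerivAt s hs)).add
      ((hf.hasDerivAt s hs).mul (hg.hasDerivAt₁ s hs))).congr_deriv (by ring)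
  all_goals
    have h₀₀ := hle (hf.norm_le s hs) (hg.norm_le s hs)
    have hnonneg := (norm_nonneg _).trans h₀₀
  · linarith
  · linarith [norm_add_le_of_le (hle (hf.norm_le₁ s hs) (hg.norm_le s hs))
      (hle (hf.norm_le s hs) (hg.norm_le₁ s hs))]
  · have h₁₁ : ‖2 * (f₁ s * g₁ s)‖ ≤ 2 * (v s * w s) := by
      simpa [mul_assoc] using hle (hf.norm_le₁ s hs) (hg.norm_le₁ s hs)
    refine norm_add₃_le.trans ?_
    linarith [hle (hf.norm_le₂ s hs) (hg.norm_le s hs), hle (hf.norm_le s hs) (hg.norm_le₂ s hs)]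

theorem cexp (hf : HasEulerBound v f f₁ f₂) (hw : ∀ s, 0 < s → ‖Complex.exp (f s)‖ ≤ w s) :
    HasEulerBound (fun s => (1 + v s) ^ 2 * w s) (fun s => Complex.exp (f s))
      (fun s => f₁ s * Complex.exp (f s)) (fun s => (f₂ s + f₁ s ^ 2) * Complex.exp (f s)) := by
  have hv (s) (hs : 0 < s) : 0 ≤ v s := (norm_nonneg _).trans (hf.norm_le s hs)
  have hle {s : ℝ} (hs : 0 < s) {y : ℂ} (hy : ‖y‖ ≤ (1 + v s) ^ 2) :
      ‖y * Complex.exp (f s)‖ ≤ (1 + v s) ^ 2 * w s := by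
    rw [norm_mul]
    exact mul_le_mul hy (hw s hs) (norm_nonneg _) (sq_nonneg _)
  refine ⟨fun s hs => ?_, fun s hs => ?_, fun s hs => ?_, fun s hs => ?_, fun s hs => ?_⟩
  · exact (hf.hasDerivAt s hs).cexp.congr_deriv (by ring)
  · exact ((hf.hasDerivAt₁ s hs).mul (hf.hasDerivAt s hs).cexp).congr_deriv (by ring)
  · simpa using hle hs (y := 1) (by rw [norm_one]; nlinarith [hv s hs])
  · exact hle hs ((hf.norm_le₁ s hs).trans (by nlinarith [hv s hs]))
  · refine hle hs ((norm_add_le _ _).trans ?_)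
    rw [norm_pow]
    nlinarith [hf.norm_le₂ s hs, pow_le_pow_left₀ (norm_nonneg _) (hf.norm_le₁ s hs) 2, hv s hs]

end Algebra

section Decay

variable {a C : ℝ} {f f₁ f₂ : ℝ → ℂ}

theorem nonneg_of_rpow_div (hf : HasEulerBound (fun s => C * (s ^ a / (1 + s ^ 2))) f f₁ f₂) :
    0 ≤ C := by
  have h := (norm_nonneg _).trans (hf.norm_le 1 one_pos)
  norm_num at h
  exact h

theorem norm_deriv_le (hf : HasEulerBound (fun s => C * (s ^ a / (1 + s ^ 2))) f f₁ f₂) {s : ℝ}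
    (hs : 0 < s) : ‖f₁ s / s‖ ≤ C * (s ^ (a - 1) / (1 + s ^ 2)) := by
  rw [norm_div, Complex.norm_real, Real.norm_of_nonneg hs.le, Real.rpow_sub_one hs.ne']
  exact (div_le_div_of_nonneg_right (hf.norm_le₁ s hs) hs.le).trans_eq (by ring)

theorem hasDerivAt_deriv (hf : HasEulerBound (fun s => C * (s ^ a / (1 + s ^ 2))) f f₁ f₂)
    {s : ℝ} (hs : 0 < s) : HasDerivAt (fun s => f₁ s / s) ((f₂ s - f₁ s) / s ^ 2) s := by
  have hs' : (s : ℂ) ≠ 0 := Complex.ofReal_ne_zero.2 hs.ne'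
  exact ((hf.hasDerivAt₁ s hs).div (hasDerivAt_id s).ofReal_comp hs').congr_deriv
    (by simp only [id, Complex.ofReal_one]; field_simp)

theorem norm_deriv_deriv_le (hf : HasEulerBound (fun s => C * (s ^ a / (1 + s ^ 2))) f f₁ f₂)
    {s : ℝ} (hs : 0 < s) : ‖(f₂ s - f₁ s) / (s : ℂ) ^ 2‖ ≤ 2 * C * s ^ (a - 2) := by
  have hC := hf.nonneg_of_rpow_div
  have hpow : s ^ (a - 2) = s ^ a / s ^ 2 := by rw [Real.rpow_sub hs]; norm_cast
  rw [norm_div, norm_pow, Complex.norm_real, Real.norm_of_nonneg hs.le, hpow, ← mul_div_assoc]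
  gcongr
  calc ‖f₂ s - f₁ s‖ ≤ 2 * C * (s ^ a / (1 + s ^ 2)) := by
        linarith [norm_sub_le_of_le (hf.norm_le₂ s hs) (hf.norm_le₁ s hs)]
    _ ≤ 2 * C * s ^ a := by
        gcongr
        exact div_le_self (by positivity) (by nlinarith)

theorem norm_deriv_le_rpow (hf : HasEulerBound (fun s => C * (s ^ a / (1 + s ^ 2))) f f₁ f₂)
    {s : ℝ} (hs : 0 < s) : ‖f₁ s / s‖ ≤ C * s ^ (a - 1) :=
  (hf.norm_deriv_le hs).trans <| mul_le_mul_of_nonneg_left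
    (div_le_self (by positivity) (by nlinarith)) hf.nonneg_of_rpow_div

theorem tendsto_nhdsGT_zero (hf : HasEulerBound (fun s => C * (s ^ a / (1 + s ^ 2))) f f₁ f₂)
    (ha : 0 < a) : Tendsto f (nhdsWithin 0 (Set.Ioi 0)) (nhds 0) := by
  have h : Tendsto (fun s : ℝ => C * (s ^ a / (1 + s ^ 2))) (nhds 0) (nhds 0) := by
    have hcont : Continuous fun s : ℝ => C * (s ^ a / (1 + s ^ 2)) :=
      continuous_const.mul ((Real.continuous_rpow_const ha.le).div (by fun_prop)
        fun s => by positivity)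
    simpa [Real.zero_rpow ha.ne'] using hcont.tendsto 0
  exact squeeze_zero_norm' (eventually_nhdsWithin_of_forall fun s hs => hf.norm_le s hs)
    (h.mono_left nhdsWithin_le_nhds)

theorem integrableOn_deriv (hf : HasEulerBound (fun s => C * (s ^ a / (1 + s ^ 2))) f f₁ f₂)
    (ha : a ∈ Set.Ioo 0 1) : IntegrableOn (fun s => f₁ s / s) (Set.Ioi 0) := by
  have hbound := integrableOn_rpow_div_one_add_sq (a := a - 1)
    ⟨by linarith [ha.1], by linarith [ha.2]⟩
  exact (hbound.const_mul C).mono' (ContinuousOn.aestronglyMeasurable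
    (fun s hs => (hf.hasDerivAt_deriv hs).continuousAt.continuousWithinAt) measurableSet_Ioi)
    ((ae_restrict_mem measurableSet_Ioi).mono fun s hs => hf.norm_deriv_le hs)

theorem integrableOn_and_integral_norm_le
    (hf : HasEulerBound (fun s => C * (s ^ a / (1 + s ^ 2))) f f₁ f₂) (ha : a ∈ Set.Ioo 0 1) :
    IntegrableOn f (Set.Ioi 0) ∧ ∫ s in Set.Ioi 0, ‖f s‖ ≤ C * levyConst (a + 1) := by
  have ha' : a + 1 ∈ Set.Ioo 0 2 := ⟨by linarith [ha.1], by linarith [ha.2]⟩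
  have hval := integral_rpow_sub_one_div_one_add_sq ha'
  rw [add_sub_cancel_right] at hval
  have hbound := integrableOn_rpow_div_one_add_sq ⟨by linarith [ha.1], ha.2⟩
  have hint : IntegrableOn f (Set.Ioi 0) :=
    (hbound.const_mul C).mono' (ContinuousOn.aestronglyMeasurable
      (fun s hs => (hf.hasDerivAt s hs).continuousAt.continuousWithinAt) measurableSet_Ioi)
      ((ae_restrict_mem measurableSet_Ioi).mono hf.norm_le)
  refine ⟨hint, ?_⟩
  rw [← hval, ← integral_const_mul]
  exact setIntegral_mono_on hint.norm (hbound.const_mul C) measurableSet_Ioi hf.norm_le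

theorem norm_integral_Ioc_deriv_le
    (hf : HasEulerBound (fun s => C * (s ^ a / (1 + s ^ 2))) f f₁ f₂) (ha : a ∈ Set.Ioo 0 1)
    {δ : ℝ} (hδ : 0 < δ) (x : ℝ) :
    ‖∫ s in Set.Ioc 0 δ, phase x s * (f₁ s / s)‖ ≤ C * (δ ^ a / a) := by
  have hval : ∫ s in Set.Ioc 0 δ, s ^ (a - 1) = δ ^ a / a := by
    rw [← intervalIntegral.integral_of_le hδ.le, integral_rpow (.inl (by linarith [ha.1])),
      sub_add_cancel, Real.zero_rpow ha.1.ne', sub_zero]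
  refine (norm_setIntegral_phase_mul_le _ x _).trans ?_
  rw [← hval, ← integral_const_mul]
  exact setIntegral_mono_on ((hf.integrableOn_deriv ha).mono_set Set.Ioc_subset_Ioi_self).norm
    ((integrableOn_Ioc_rpow (by linarith [ha.1]) hδ.le).const_mul C) measurableSet_Ioc
    fun s hs => hf.norm_deriv_le_rpow hs.1

theorem integrableOn_and_integral_norm_deriv_deriv_le
    (hf : HasEulerBound (fun s => C * (s ^ a / (1 + s ^ 2))) f f₁ f₂) (ha : a < 1) {δ : ℝ}
    (hδ : 0 < δ) :
    IntegrableOn (fun s : ℝ => (f₂ s - f₁ s) / (s : ℂ) ^ 2) (Set.Ioi δ) ∧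
      ∫ s in Set.Ioi δ, ‖(f₂ s - f₁ s) / (s : ℂ) ^ 2‖ ≤ 2 * C * (δ ^ (a - 1) / (1 - a)) := by
  have hpos (s) (hs : s ∈ Set.Ioi δ) : 0 < s := hδ.trans hs
  have hval : ∫ s in Set.Ioi δ, s ^ (a - 2) = δ ^ (a - 1) / (1 - a) := by
    rw [integral_Ioi_rpow_of_lt (by linarith) hδ, ← neg_div_neg_eq, neg_neg]
    ring_nf
  have hbound := (integrableOn_Ioi_rpow_of_lt (a := a - 2) (by linarith) hδ).const_mul (2 * C)
  have hmeas : AEStronglyMeasurable (fun s : ℝ => (f₂ s - f₁ s) / (s : ℂ) ^ 2)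
      (volume.restrict (Set.Ioi δ)) :=
    (stronglyMeasurable_deriv fun s : ℝ => f₁ s / s).aestronglyMeasurable.congr
      ((ae_restrict_mem measurableSet_Ioi).mono fun s hs => (hf.hasDerivAt_deriv (hpos s hs)).deriv)
  have hint := hbound.mono' hmeas
    ((ae_restrict_mem measurableSet_Ioi).mono fun s hs => hf.norm_deriv_deriv_le (hpos s hs))
  refine ⟨hint, ?_⟩
  rw [← hval, ← integral_const_mul]
  exact setIntegral_mono_on hint.norm hbound measurableSet_Ioi
    fun s hs => hf.norm_deriv_deriv_le (hpos s hs)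

theorem abs_mul_norm_integral_Ioi_deriv_le
    (hf : HasEulerBound (fun s => C * (s ^ a / (1 + s ^ 2))) f f₁ f₂) (ha : a ∈ Set.Ioo 0 1)
    {δ : ℝ} (hδ : 0 < δ) (x : ℝ) :
    |x| * ‖∫ s in Set.Ioi δ, phase x s * (f₁ s / s)‖ ≤
      C * δ ^ (a - 1) * (1 + 2 / (1 - a)) := by
  have hderiv₂ := hf.integrableOn_and_integral_norm_deriv_deriv_le ha.2 hδ
  calc |x| * ‖∫ s in Set.Ioi δ, phase x s * (f₁ s / s)‖
      ≤ ‖f₁ δ / δ‖ + ‖∫ s in Set.Ioi δ, phase x s * ((f₂ s - f₁ s) / (s : ℂ) ^ 2)‖ :=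
        abs_mul_norm_integral_Ioi_phase_mul_le (fun s hs => hf.hasDerivAt_deriv (hδ.trans hs))
          ((hf.integrableOn_deriv ha).mono_set (Set.Ioi_subset_Ioi hδ.le)) hderiv₂.1
          ((hf.hasDerivAt_deriv hδ).continuousAt.mono_left nhdsWithin_le_nhds)
          (tendsto_zero_of_norm_le_rpow_div (by linarith [ha.2]) (fun s hs => hf.norm_deriv_le hs)
            hf.nonneg_of_rpow_div) x
    _ ≤ C * δ ^ (a - 1) + 2 * C * (δ ^ (a - 1) / (1 - a)) :=
        add_le_add (hf.norm_deriv_le_rpow hδ)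
          ((norm_setIntegral_phase_mul_le _ x _).trans hderiv₂.2)
    _ = C * δ ^ (a - 1) * (1 + 2 / (1 - a)) := by ring

/- The derivative is split at `δ = 1 / |x|`: below `δ` it is small in `L¹`, and above `δ` a second
integration by parts gains another factor `1 / |x|`. -/
theorem norm_integral_phase_mul_le_rpow
    (hf : HasEulerBound (fun s => C * (s ^ a / (1 + s ^ 2))) f f₁ f₂) (ha : a ∈ Set.Ioo 0 1)
    {x : ℝ} (hx : x ≠ 0) :
    ‖∫ s in Set.Ioi 0, phase x s * f s‖ ≤
      C * (1 / a + (1 + 2 / (1 - a))) * |x| ^ (-(1 + a)) := by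
  have hx' := abs_pos.2 hx
  obtain ⟨δ, hδ⟩ : ∃ δ, δ = |x|⁻¹ := ⟨_, rfl⟩
  have hδ0 : 0 < δ := hδ ▸ inv_pos.2 hx'
  have hsplit : ‖∫ s in Set.Ioi 0, phase x s * (f₁ s / s)‖ ≤
      ‖∫ s in Set.Ioc 0 δ, phase x s * (f₁ s / s)‖ +
        ‖∫ s in Set.Ioi δ, phase x s * (f₁ s / s)‖ := by
    have hint := integrable_phase_mul (hf.integrableOn_deriv ha) x
    rw [← Set.Ioc_union_Ioi_eq_Ioi hδ0.le, setIntegral_union (Set.Ioc_disjoint_Ioi le_rfl)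
      measurableSet_Ioi (hint.mono_measure (Measure.restrict_mono Set.Ioc_subset_Ioi_self le_rfl))
      (hint.mono_measure (Measure.restrict_mono (Set.Ioi_subset_Ioi hδ0.le) le_rfl))]
    exact norm_add_le _ _
  have hparts : |x| * ‖∫ s in Set.Ioi 0, phase x s * f s‖ ≤
      ‖∫ s in Set.Ioi 0, phase x s * (f₁ s / s)‖ := by
    simpa using abs_mul_norm_integral_Ioi_phase_mul_le (fun s hs => hf.hasDerivAt s hs)
      (hf.integrableOn_and_integral_norm_le ha).1 (hf.integrableOn_deriv ha)
      (hf.tendsto_nhdsGT_zero ha.1)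
      (tendsto_zero_of_norm_le_rpow_div (by linarith [ha.2]) hf.norm_le hf.nonneg_of_rpow_div) x
  have hδa : δ ^ (a - 1) = |x| * δ ^ a := by
    rw [Real.rpow_sub_one hδ0.ne', hδ, div_inv_eq_mul, mul_comm]
  have htail : ‖∫ s in Set.Ioi δ, phase x s * (f₁ s / s)‖ ≤
      C * δ ^ a * (1 + 2 / (1 - a)) := by
    refine le_of_mul_le_mul_left ((hf.abs_mul_norm_integral_Ioi_deriv_le ha hδ0 x).trans_eq ?_) hx'
    rw [hδa]
    ring
  have hpow : |x| ^ (-(1 + a)) = δ ^ a / |x| := by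
    rw [hδ, Real.inv_rpow hx'.le, neg_add', Real.rpow_sub hx', Real.rpow_neg_one,
      div_eq_mul_inv, div_eq_mul_inv, mul_comm]
  rw [hpow, ← mul_div_assoc, le_div_iff₀' hx']
  calc |x| * ‖∫ s in Set.Ioi 0, phase x s * f s‖
      ≤ C * (δ ^ a / a) + C * δ ^ a * (1 + 2 / (1 - a)) :=
        hparts.trans (hsplit.trans (add_le_add (hf.norm_integral_Ioc_deriv_le ha hδ0 x) htail))
    _ = C * (1 / a + (1 + 2 / (1 - a))) * δ ^ a := by ring

end Decay

end HasEulerBound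

theorem le_two_rpow_mul_one_add_rpow_neg {u M x r : ℝ} (hM : 0 ≤ M) (hx : 0 ≤ x) (hr : 0 ≤ r)
    (hsmall : u ≤ M) (hlarge : 1 ≤ x → u ≤ M * x ^ (-r)) :
    u ≤ 2 ^ r * M * (1 + x) ^ (-r) := by
  rw [Real.rpow_neg (by positivity), ← div_eq_mul_inv, le_div_iff₀ (by positivity)]
  rcases le_total x 1 with h | h
  · calc u * (1 + x) ^ r ≤ M * (1 + x) ^ r := by gcongr
      _ ≤ M * 2 ^ r := by gcongr; linarith
      _ = 2 ^ r * M := mul_comm _ _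
  · calc u * (1 + x) ^ r ≤ M * x ^ (-r) * (2 * x) ^ r := by
          have hu := hlarge h
          gcongr
          linarith
      _ = 2 ^ r * M := by
          rw [Real.mul_rpow zero_le_two hx, Real.rpow_neg hx]
          field_simp

theorem HasEulerBound.exists_norm_integral_phase_mul_le {a : ℝ} (ha : a ∈ Set.Ioo 0 1) :
    ∃ K, ∀ {C : ℝ} {f f₁ f₂ : ℝ → ℂ},
      HasEulerBound (fun s => C * (s ^ a / (1 + s ^ 2))) f f₁ f₂ →
        ∀ x, ‖∫ s in Set.Ioi 0, phase x s * f s‖ ≤ K * C * (1 + |x|) ^ (-(1 + a)) := by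
  set D := 1 / a + (1 + 2 / (1 - a))
  have hD : 0 ≤ D := by
    have := ha.1
    have := sub_pos.2 ha.2
    positivity
  have hL : 0 ≤ levyConst (a + 1) :=
    (levyConst_pos ⟨by linarith [ha.1], by linarith [ha.2]⟩).le
  refine ⟨2 ^ (1 + a) * (levyConst (a + 1) + D), fun {C f f₁ f₂} hf x => ?_⟩
  have hC := hf.nonneg_of_rpow_div
  rw [mul_assoc (2 ^ (1 + a) : ℝ)]
  refine le_two_rpow_mul_one_add_rpow_neg (by positivity) (abs_nonneg x) (by linarith [ha.1]) ?_
    fun hx => ?_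
  · calc ‖∫ s in Set.Ioi 0, phase x s * f s‖ ≤ C * levyConst (a + 1) :=
          (norm_setIntegral_phase_mul_le _ x f).trans (hf.integrableOn_and_integral_norm_le ha).2
      _ ≤ _ := by nlinarith [mul_nonneg hC hD]
  · refine (hf.norm_integral_phase_mul_le_rpow ha (abs_pos.1 (by linarith))).trans
      (mul_le_mul_of_nonneg_right ?_ (by positivity))
    nlinarith [mul_nonneg hC hL]

end OscillatoryDecay

section LogPowerSums

theorem exists_one_add_abs_log_sq_mul_le {a m : ℝ} (ha : 0 ≤ a) (ham : a < m) (hm : m ≤ 1) :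
    ∃ C, ∀ α ∈ Set.Icc m 2, ∀ s, 0 < s →
      (1 + |Real.log s|) ^ 2 * (s + s ^ α) ≤ C * (s ^ a * (1 + s) ^ 4) := by
  obtain ⟨e, he, rfl⟩ : ∃ e, 0 < e ∧ m = a + e * 2 := ⟨(m - a) / 2, by linarith, by ring⟩
  refine ⟨2 * (1 + 1 / e) ^ 2, fun α hα s hs => ?_⟩
  rcases le_total s 1 with h | h
  · have hlog : (1 + |Real.log s|) * s ^ e ≤ 1 + 1 / e := by
      have h₁ := (Real.abs_log_mul_self_rpow_lt s e hs h he).le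
      rw [abs_mul, abs_of_pos (Real.rpow_pos_of_pos hs e)] at h₁
      linarith [Real.rpow_le_one hs.le h he.le]
    have hpow : s + s ^ α ≤ 2 * (s ^ a * (s ^ e) ^ 2) := by
      have h₁ := Real.rpow_le_rpow_of_exponent_ge hs h hm
      have h₂ := Real.rpow_le_rpow_of_exponent_ge hs h hα.1
      rw [Real.rpow_add hs, Real.rpow_mul hs.le, Real.rpow_two] at h₁ h₂
      rw [Real.rpow_one] at h₁
      linarith
    calc (1 + |Real.log s|) ^ 2 * (s + s ^ α)
        ≤ (1 + |Real.log s|) ^ 2 * (2 * (s ^ a * (s ^ e) ^ 2)) := by gcongr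
      _ = 2 * ((1 + |Real.log s|) * s ^ e) ^ 2 * (s ^ a * 1) := by ring
      _ ≤ 2 * (1 + 1 / e) ^ 2 * (s ^ a * (1 + s) ^ 4) := by
        gcongr
        exact one_le_pow₀ (by linarith)
  · have hlog : |Real.log s| ≤ s - 1 := by
      rw [abs_of_nonneg (Real.log_nonneg h)]
      exact Real.log_le_sub_one_of_pos hs
    have hpow : s ^ α ≤ s ^ 2 := by
      simpa using Real.rpow_le_rpow_of_exponent_le h hα.2
    calc (1 + |Real.log s|) ^ 2 * (s + s ^ α) ≤ s ^ 2 * (s ^ 2 + s ^ 2) := by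
          gcongr
          · linarith
          · nlinarith
      _ = 2 * 1 * (1 * s ^ 4) := by ring
      _ ≤ 2 * (1 + 1 / e) ^ 2 * (s ^ a * (1 + s) ^ 4) := by
          have h₁ := Real.one_le_rpow h ha
          have h₂ : (1 : ℝ) ≤ (1 + 1 / e) ^ 2 := one_le_pow₀ (by simp [he.le])
          gcongr
          linarith

theorem exists_exp_neg_rpow_le_div_one_add_pow {m : ℝ} (hm : m ∈ Set.Ioc 0 1) (N : ℕ) :
    ∃ D, ∀ α, m ≤ α → ∀ s, 0 ≤ s → Real.exp (-s ^ α) ≤ D / (1 + s) ^ N := by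
  obtain ⟨k, hk⟩ := exists_nat_ge (N / m)
  rw [div_le_iff₀' hm.1] at hk
  refine ⟨Real.exp 2 * k.factorial, fun α hα s hs => ?_⟩
  have hshift : (1 + s) ^ m ≤ 1 + s ^ m := by
    simpa using Real.rpow_add_le_add_rpow zero_le_one hs hm.1.le hm.2
  have hfactorial : (1 + s) ^ N ≤ k.factorial * Real.exp ((1 + s) ^ m) := by
    calc (1 + s) ^ N = (1 + s) ^ (N : ℝ) := (Real.rpow_natCast _ _).symm
      _ ≤ (1 + s) ^ (m * k) := Real.rpow_le_rpow_of_exponent_le (by linarith) hk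
      _ = ((1 + s) ^ m) ^ k := by rw [Real.rpow_mul (by positivity), Real.rpow_natCast]
      _ ≤ k.factorial * Real.exp ((1 + s) ^ m) :=
        (div_le_iff₀' (by positivity)).1 (Real.pow_div_factorial_le_exp _ (by positivity) k)
  rw [le_div_iff₀ (by positivity)]
  calc Real.exp (-s ^ α) * (1 + s) ^ N
      ≤ Real.exp 1 * Real.exp (-s ^ m) * (k.factorial * Real.exp ((1 + s) ^ m)) :=
        mul_le_mul (exp_neg_rpow_le hs hm.1.le hα) hfactorial (by positivity) (by positivity)
    _ = Real.exp (1 - s ^ m + (1 + s) ^ m) * k.factorial := by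
        rw [Real.exp_add, sub_eq_add_neg, Real.exp_add]
        ring
    _ ≤ Real.exp 2 * k.factorial := by
        gcongr
        linarith

/-- The functions of `s` spanning the characteristic exponent and its parameter derivatives; their
span is preserved by the Euler operator `s d/ds`. -/
noncomputable def logPowerBasis (a s : ℝ) : Fin 5 → ℝ :=
  ![s, s ^ a, s * logMoment 0 a s, s ^ a * Real.log s, s * logMoment 1 a s]

/-- The linear combination of the functions `logPowerBasis a` with coefficients `c`. -/
noncomputable def logPowerSum (a : ℝ) (c : Fin 5 → ℂ) (s : ℝ) : ℂ :=
  ∑ k, c k * logPowerBasis a s k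

/-- The action of the Euler operator `s d/ds` on coefficients in the basis `logPowerBasis a`. -/
def eulerCoeff (a : ℝ) (c : Fin 5 → ℂ) : Fin 5 → ℂ :=
  ![c 0, a * c 1 + c 2 + c 3, c 2, a * c 3 + c 4, c 4]

theorem hasDerivAt_logPowerSum (a : ℝ) (c : Fin 5 → ℂ) {s : ℝ} (hs : 0 < s) :
    HasDerivAt (logPowerSum a c) (logPowerSum a (eulerCoeff a c) s / s) s := by
  have hpow := Real.hasDerivAt_rpow_const (p := a) (.inl hs.ne')
  have hbasis : HasDerivAt (fun s => logPowerBasis a s)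
      ![1, a * s ^ (a - 1), logMoment 0 a s + s * s ^ (a - 2),
        a * s ^ (a - 1) * Real.log s + s ^ a * s⁻¹,
        logMoment 1 a s + s * (Real.log s * s ^ (a - 2))] s := by
    refine hasDerivAt_pi.2 fun k => ?_
    fin_cases k
    · exact hasDerivAt_id s
    · exact hpow
    · exact ((hasDerivAt_id s).mul (hasDerivAt_logMoment 0 a hs)).congr_deriv (by simp)
    · exact hpow.mul (Real.hasDerivAt_log hs.ne')
    · exact ((hasDerivAt_id s).mul (hasDerivAt_logMoment 1 a hs)).congr_deriv (by simp)
  refine (HasDerivAt.fun_sum fun k _ =>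
    ((hasDerivAt_pi.1 hbasis k).ofReal_comp.const_mul (c k))).congr_deriv ?_
  have hs' : (s : ℂ) ≠ 0 := Complex.ofReal_ne_zero.2 hs.ne'
  have h₂ : s ^ (a - 2) = s ^ a / s ^ 2 := by rw [Real.rpow_sub hs, Real.rpow_two]
  simp only [logPowerSum, logPowerBasis, eulerCoeff, h₂, Real.rpow_sub_one hs.ne',
    Fin.sum_univ_five, Fin.isValue, Matrix.cons_val_zero, Matrix.cons_val_one, Matrix.cons_val,
    Complex.ofReal_one, Complex.ofReal_mul, Complex.ofReal_div, Complex.ofReal_add,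
    Complex.ofReal_pow, Complex.ofReal_inv, mul_one]
  field_simp
  ring

theorem abs_logPowerBasis_le (a : ℝ) {s : ℝ} (hs : 0 < s) (k : Fin 5) :
    |logPowerBasis a s k| ≤ (1 + |Real.log s|) ^ 2 * (s + s ^ a) := by
  have hlog := abs_nonneg (Real.log s)
  have hsa := Real.rpow_pos_of_pos hs a
  have hmono {n : ℕ} (hn : n ≤ 2) :
      |Real.log s| ^ n * (s + s ^ a) ≤ (1 + |Real.log s|) ^ 2 * (s + s ^ a) := by
    gcongr
    exact (pow_le_pow_left₀ hlog (by linarith) n).trans (pow_le_pow_right₀ (by linarith) hn)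
  have h₀ : s + s ^ a ≤ (1 + |Real.log s|) ^ 2 * (s + s ^ a) := by
    simpa using hmono zero_le_two
  fin_cases k
  · exact ((abs_of_pos hs).trans_le (by linarith)).trans h₀
  · exact ((abs_of_pos hsa).trans_le (by linarith)).trans h₀
  · exact (abs_mul_logMoment_le 0 a hs).trans (hmono one_le_two)
  · refine le_trans ?_ (hmono one_le_two)
    change |s ^ a * Real.log s| ≤ _
    rw [abs_mul, abs_of_pos hsa, pow_one]
    nlinarith
  · exact (abs_mul_logMoment_le 1 a hs).trans (hmono le_rfl)

theorem norm_logPowerSum_le (a : ℝ) (c : Fin 5 → ℂ) {s : ℝ} (hs : 0 < s) :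
    ‖logPowerSum a c s‖ ≤ 5 * ‖c‖ * ((1 + |Real.log s|) ^ 2 * (s + s ^ a)) := by
  refine (norm_sum_le_of_le _ fun k _ => ?_).trans_eq
    (b := ∑ _k : Fin 5, ‖c‖ * ((1 + |Real.log s|) ^ 2 * (s + s ^ a))) (by simp [mul_assoc])
  rw [norm_mul, Complex.norm_real]
  exact mul_le_mul (norm_le_pi_norm c k) (abs_logPowerBasis_le a hs k) (norm_nonneg _)
    (norm_nonneg c)

theorem norm_eulerCoeff_le {a : ℝ} (ha : a ∈ Set.Icc 0 2) (c : Fin 5 → ℂ) :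
    ‖eulerCoeff a c‖ ≤ 4 * ‖c‖ := by
  have hc := norm_le_pi_norm c
  have hac (k : Fin 5) : ‖(a : ℂ) * c k‖ ≤ 2 * ‖c‖ := by
    rw [norm_mul, Complex.norm_real, Real.norm_of_nonneg ha.1]
    exact mul_le_mul ha.2 (hc k) (norm_nonneg _) zero_le_two
  refine (pi_norm_le_iff_of_nonneg (by positivity)).2 fun k => ?_
  fin_cases k <;> simp only [eulerCoeff]
  · exact (hc 0).trans (by linarith [norm_nonneg c])
  · exact norm_add₃_le.trans (by linarith [hac 1, hc 2, hc 3])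
  · exact (hc 2).trans (by linarith [norm_nonneg c])
  · exact (norm_add_le _ _).trans (by linarith [hac 3, hc 4, norm_nonneg c])
  · exact (hc 4).trans (by linarith [norm_nonneg c])

theorem hasEulerBound_logPowerSum {a L : ℝ} {w : ℝ → ℝ} (ha : a ∈ Set.Icc 0 2)
    (hw : ∀ s, 0 < s → (1 + |Real.log s|) ^ 2 * (s + s ^ a) ≤ w s) {c : Fin 5 → ℂ}
    (hc : ‖c‖ ≤ L) :
    HasEulerBound (fun s => 80 * L * w s) (logPowerSum a c) (logPowerSum a (eulerCoeff a c))
      (logPowerSum a (eulerCoeff a (eulerCoeff a c))) := by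
  have hbound {d : Fin 5 → ℂ} (hd : ‖d‖ ≤ 16 * L) (s : ℝ) (hs : 0 < s) :
      ‖logPowerSum a d s‖ ≤ 80 * L * w s := by
    calc ‖logPowerSum a d s‖ ≤ 5 * ‖d‖ * ((1 + |Real.log s|) ^ 2 * (s + s ^ a)) :=
          norm_logPowerSum_le a d hs
      _ ≤ 5 * (16 * L) * w s := by
          have hw' := hw s hs
          gcongr
          exact mul_nonneg (by norm_num) ((norm_nonneg d).trans hd)
      _ = 80 * L * w s := by ring
  have hL := (norm_nonneg c).trans hc
  have h₁ := norm_eulerCoeff_le ha c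
  have h₂ := norm_eulerCoeff_le ha (eulerCoeff a c)
  exact ⟨fun s hs => hasDerivAt_logPowerSum a c hs, fun s hs => hasDerivAt_logPowerSum a _ hs,
    hbound (by linarith), hbound (by linarith), hbound (by linarith)⟩

theorem mul_one_add_mul_sq_mul_div_pow_le {a M D s : ℝ} (ha : a ∈ Set.Icc 0 1) (hM : 0 ≤ M)
    (hD : 0 ≤ D) (hs : 0 < s) :
    M * (s ^ a * (1 + s) ^ 4) * ((1 + M * (s ^ a * (1 + s) ^ 4)) ^ 2 * (D / (1 + s) ^ 16)) ≤
      M * (1 + M) ^ 2 * D * (s ^ a / (1 + s ^ 2)) := by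
  have hsa : s ^ a ≤ 1 + s := by
    calc s ^ a ≤ (1 + s) ^ a := Real.rpow_le_rpow hs.le (by linarith) ha.1
      _ ≤ 1 + s := Real.rpow_le_self_of_one_le (by linarith) ha.2
  have hpow : (1 : ℝ) ≤ (1 + s) ^ 5 := one_le_pow₀ (by linarith)
  have hfactor : 1 + M * (s ^ a * (1 + s) ^ 4) ≤ (1 + M) * (1 + s) ^ 5 := by
    calc 1 + M * (s ^ a * (1 + s) ^ 4) ≤ (1 + s) ^ 5 + M * ((1 + s) * (1 + s) ^ 4) := by gcongr
      _ = (1 + M) * (1 + s) ^ 5 := by ring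
  calc M * (s ^ a * (1 + s) ^ 4) * ((1 + M * (s ^ a * (1 + s) ^ 4)) ^ 2 * (D / (1 + s) ^ 16))
      ≤ M * (s ^ a * (1 + s) ^ 4) * (((1 + M) * (1 + s) ^ 5) ^ 2 * (D / (1 + s) ^ 16)) := by
        gcongr
    _ = M * (1 + M) ^ 2 * D * (s ^ a / (1 + s) ^ 2) := by field_simp
    _ ≤ M * (1 + M) ^ 2 * D * (s ^ a / (1 + s ^ 2)) := by
        gcongr
        nlinarith

theorem exists_hasEulerBound_logPowerSum_mul_cexp {a m : ℝ} (ha : 0 ≤ a) (ham : a < m)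
    (hm : m ≤ 1) (L : ℝ) :
    ∃ C, ∀ α ∈ Set.Icc m 2, ∀ c d : Fin 5 → ℂ, ‖c‖ ≤ L → ‖d‖ ≤ L →
      (∀ s, 0 < s → (logPowerSum α d s).re = -s ^ α) → ∃ f₁ f₂,
        HasEulerBound (fun s => C * (s ^ a / (1 + s ^ 2)))
          (fun s => logPowerSum α c s * Complex.exp (logPowerSum α d s)) f₁ f₂ := by
  obtain ⟨K, hK⟩ := exists_one_add_abs_log_sq_mul_le ha ham hm
  obtain ⟨D, hD⟩ := exists_exp_neg_rpow_le_div_one_add_pow ⟨ha.trans_lt ham, hm⟩ 16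
  refine ⟨4 * (80 * L * K) * (1 + 80 * L * K) ^ 2 * D, fun α hα c d hc hd hre => ?_⟩
  have hα' : α ∈ Set.Icc 0 2 := ⟨by linarith [hα.1], hα.2⟩
  have hexp (s : ℝ) (hs : 0 < s) : ‖Complex.exp (logPowerSum α d s)‖ ≤ D / (1 + s) ^ 16 := by
    rw [Complex.norm_exp, hre s hs]
    exact hD α hα.1 s hs.le
  refine ⟨_, _, ((hasEulerBound_logPowerSum hα' (hK α hα) hc).mul
    ((hasEulerBound_logPowerSum hα' (hK α hα) hd).cexp hexp)).mono fun s hs => ?_⟩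
  have hL : 0 ≤ L := (norm_nonneg c).trans hc
  have hK0 : 0 ≤ K := by
    have h := hK α hα 1 one_pos
    norm_num at h
    linarith
  have hD0 : 0 ≤ D := by simpa using (Real.exp_pos _).le.trans (hD 1 (by linarith) 0 le_rfl)
  calc 4 * (80 * L * (K * (s ^ a * (1 + s) ^ 4)) *
        ((1 + 80 * L * (K * (s ^ a * (1 + s) ^ 4))) ^ 2 * (D / (1 + s) ^ 16)))
      = 4 * (80 * L * K * (s ^ a * (1 + s) ^ 4) *
          ((1 + 80 * L * K * (s ^ a * (1 + s) ^ 4)) ^ 2 * (D / (1 + s) ^ 16))) := by ring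
    _ ≤ 4 * (80 * L * K * (1 + 80 * L * K) ^ 2 * D * (s ^ a / (1 + s ^ 2))) := by
        gcongr 4 * ?_
        exact mul_one_add_mul_sq_mul_div_pow_le ⟨ha, ham.le.trans hm⟩ (by positivity) hD0 hs
    _ = 4 * (80 * L * K) * (1 + 80 * L * K) ^ 2 * D * (s ^ a / (1 + s ^ 2)) := by ring

end LogPowerSums

section StandardDensity

/-- Coefficients of the stable exponent with index `p.1` and skewness `p.2` in the basis
`logPowerBasis p.1`. -/
noncomputable def exponentCoeff (p : ℝ × ℝ) : Fin 5 → ℂ :=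
  ![0, -1, Complex.I * ((p.2 * regTan p.1 : ℝ) : ℂ), 0, 0]

/-- Coefficients in the basis `logPowerBasis p.1` of the derivatives of the exponent
`I * s * z + stableExponent p.1 p.2 s`: with respect to the location `z`, along the Euler operator
`s d/ds` (which is the scale derivative), and with respect to the index and the skewness. -/
noncomputable def exponentDerivCoeff (i : Fin 4) (p : ℝ × ℝ) : Fin 5 → ℂ :=
  ![![Complex.I, 0, 0, 0, 0],
    eulerCoeff p.1 (exponentCoeff p),
    ![0, 0, Complex.I * ((p.2 * deriv regTan p.1 : ℝ) : ℂ), -1,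
      Complex.I * ((p.2 * regTan p.1 : ℝ) : ℂ)],
    ![0, 0, Complex.I * (regTan p.1 : ℂ), 0, 0]] i

/-- The derivative of the standardised stable characteristic function in the `i`-th of the
parameters location, log-scale, index and skewness. -/
noncomputable def charFunDeriv (i : Fin 4) (p : ℝ × ℝ) (s : ℝ) : ℂ :=
  logPowerSum p.1 (exponentDerivCoeff i p) s * Complex.exp (logPowerSum p.1 (exponentCoeff p) s)

theorem stableExponent_eq_logPowerSum (p : ℝ × ℝ) {s : ℝ} (hs : 0 < s) :
    stableExponent p.1 p.2 s = logPowerSum p.1 (exponentCoeff p) s := by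
  simp [stableExponent, logPowerSum, logPowerBasis, exponentCoeff, Fin.sum_univ_five,
    abs_of_pos hs, mul_assoc]

theorem continuousAt_exponentCoeff {p : ℝ × ℝ} (hp : p.1 ∈ Set.Ioo 0 2) :
    ContinuousAt exponentCoeff p := by
  have hreg : ContinuousAt (fun p : ℝ × ℝ => regTan p.1) p :=
    (hasDerivAt_regTan hp).continuousAt.fst''
  unfold exponentCoeff
  fun_prop

theorem continuous_eulerCoeff :
    Continuous fun q : ℝ × (Fin 5 → ℂ) => eulerCoeff q.1 q.2 := by
  unfold eulerCoeff
  fun_prop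

theorem continuousAt_exponentDerivCoeff {p : ℝ × ℝ} (hp : p.1 ∈ Set.Ioo 0 2) (i : Fin 4) :
    ContinuousAt (exponentDerivCoeff i) p := by
  have hreg : ContinuousAt (fun p : ℝ × ℝ => regTan p.1) p :=
    (hasDerivAt_regTan hp).continuousAt.fst''
  have hreg' : ContinuousAt (fun p : ℝ × ℝ => deriv regTan p.1) p :=
    (continuousAt_deriv_regTan hp).fst''
  fin_cases i
  · exact continuousAt_const
  · exact continuous_eulerCoeff.continuousAt.comp
      (continuousAt_fst.prodMk (continuousAt_exponentCoeff hp))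
  · change ContinuousAt (fun p : ℝ × ℝ => ![0, 0,
      Complex.I * ((p.2 * deriv regTan p.1 : ℝ) : ℂ), -1,
      Complex.I * ((p.2 * regTan p.1 : ℝ) : ℂ)]) p
    fun_prop
  · change ContinuousAt (fun p : ℝ × ℝ => ![0, 0, Complex.I * (regTan p.1 : ℂ), 0, 0]) p
    fun_prop

theorem continuousAt_logPowerSum {p : ℝ × ℝ} {c : ℝ × ℝ → Fin 5 → ℂ} (hc : ContinuousAt c p)
    {s : ℝ} (hs : 0 < s) : ContinuousAt (fun p => logPowerSum p.1 (c p) s) p := by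
  have hpow : Continuous fun a : ℝ => s ^ a := Real.continuous_const_rpow hs.ne'
  have hmoment₀ := continuous_logMoment_left 0 s
  have hmoment₁ := continuous_logMoment_left 1 s
  have hbasis : Continuous fun a => logPowerBasis a s := by
    unfold logPowerBasis
    fun_prop
  have hbasis' (k : Fin 5) : Continuous fun p : ℝ × ℝ => logPowerBasis p.1 s k :=
    ((continuous_apply k).comp hbasis).comp continuous_fst
  exact tendsto_finsetSum _ fun k _ => (continuousAt_pi.1 hc k).mul
    (Complex.continuous_ofReal.comp (hbasis' k)).continuousAt

theorem continuousAt_charFunDeriv_left {p : ℝ × ℝ} (hp : p.1 ∈ Set.Ioo 0 2) (i : Fin 4) {s : ℝ}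
    (hs : 0 < s) : ContinuousAt (fun p => charFunDeriv i p s) p :=
  (continuousAt_logPowerSum (continuousAt_exponentDerivCoeff hp i) hs).mul
    (continuousAt_logPowerSum (continuousAt_exponentCoeff hp) hs).cexp

theorem continuousOn_charFunDeriv (i : Fin 4) (p : ℝ × ℝ) :
    ContinuousOn (charFunDeriv i p) (Set.Ioi 0) := fun _ hs =>
  ((hasDerivAt_logPowerSum _ _ hs).continuousAt.mul
    (hasDerivAt_logPowerSum _ _ hs).continuousAt.cexp).continuousWithinAt

theorem exists_eventually_hasEulerBound_charFunDeriv {p₀ : ℝ × ℝ} {a : ℝ} (hp : p₀.1 < 2)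
    (ha : 0 ≤ a) (ha₁ : a < 1) (hap : a < p₀.1) (i : Fin 4) :
    ∃ C, ∀ᶠ p in nhds p₀, ∃ f₁ f₂,
      HasEulerBound (fun s => C * (s ^ a / (1 + s ^ 2))) (charFunDeriv i p) f₁ f₂ := by
  obtain ⟨m, ham, hm⟩ := exists_between (lt_min ha₁ hap)
  obtain ⟨hm₁, hmp⟩ := lt_min_iff.1 hm
  have hp₀ : p₀.1 ∈ Set.Ioo 0 2 := ⟨ha.trans_lt hap, hp⟩
  set L := max (‖exponentDerivCoeff i p₀‖ + 1) (‖exponentCoeff p₀‖ + 1)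
  obtain ⟨C, hC⟩ := exists_hasEulerBound_logPowerSum_mul_cexp ha ham hm₁.le L
  refine ⟨C, ?_⟩
  filter_upwards [
    (continuousAt_exponentDerivCoeff hp₀ i).norm.eventually_lt_const
      ((lt_add_one _).trans_le (le_max_left _ _) : _ < L),
    (continuousAt_exponentCoeff hp₀).norm.eventually_lt_const
      ((lt_add_one _).trans_le (le_max_right _ _) : _ < L),
    continuousAt_fst.eventually_const_lt hmp, continuousAt_fst.eventually_lt_const hp]
    with p hderiv hcoeff hmp hp
  refine hC p.1 ⟨hmp.le, hp.le⟩ _ _ hderiv.le hcoeff.le fun s hs => ?_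
  rw [← stableExponent_eq_logPowerSum p hs, stableExponent_re, abs_of_pos hs]

/-- The standardised stable density with index `p.1` and skewness `p.2`, by Fourier inversion. -/
noncomputable def stdDensity (p : ℝ × ℝ) (z : ℝ) : ℝ :=
  (2 * Real.pi)⁻¹ * (angularFourier (fun t => Complex.exp (stableExponent p.1 p.2 t)) z).re

/-- The derivative of the stable density in the `i`-th of the parameters location, log-scale, index
and skewness at location `0` and scale `1`, by Fourier inversion folded to the half-line. -/
noncomputable def stdDensityDeriv (i : Fin 4) (p : ℝ × ℝ) (z : ℝ) : ℝ :=
  Real.pi⁻¹ * (∫ s in Set.Ioi 0, phase z s * charFunDeriv i p s).re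

theorem continuous_stableExponent {a : ℝ} (ha : 0 < a) (b : ℝ) :
    Continuous (stableExponent a b) := by
  have hpos (s : ℝ) (hs : 0 < s) : ContinuousAt (stableExponent a b) s :=
    (hasDerivAt_logPowerSum a (exponentCoeff (a, b)) hs).continuousAt.congr <|
      (lt_mem_nhds hs).mono fun t ht => (stableExponent_eq_logPowerSum (a, b) ht).symm
  refine continuous_iff_continuousAt.2 fun s => ?_
  rcases lt_trichotomy s 0 with hs | rfl | hs
  · have h := Complex.continuous_conj.continuousAt.comp
      ((hpos (-s) (neg_pos.2 hs)).comp (f := fun t : ℝ => -t) continuous_neg.continuousAt)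
    refine h.congr (.of_forall fun t => ?_)
    simp [← stableExponent_neg]
  · exact continuousAt_stableExponent_zero ha b
  · exact hpos s hs

theorem integrable_exp_stableExponent {a : ℝ} (ha : 0 < a) (b : ℝ) :
    Integrable fun t => Complex.exp (stableExponent a b t) :=
  (integrable_exp_neg_abs_rpow ha).mono' (continuous_stableExponent ha b).cexp.aestronglyMeasurable
    (.of_forall fun t => (norm_exp_stableExponent a b t).le)

theorem continuous_stdDensity {p : ℝ × ℝ} (hp : 0 < p.1) : Continuous (stdDensity p) :=
  (Complex.continuous_re.comp
    (continuous_angularFourier (integrable_exp_stableExponent hp p.2))).const_mul _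

theorem continuousAt_stdDensity_left {p₀ : ℝ × ℝ} (hp : p₀.1 ∈ Set.Ioo 0 2) (z : ℝ) :
    ContinuousAt (fun p => stdDensity p z) p₀ := by
  refine continuousAt_const.mul (Complex.continuous_re.continuousAt.comp ?_)
  have hhalf : ∀ᶠ p : ℝ × ℝ in nhds p₀, p₀.1 / 2 < p.1 :=
    continuousAt_fst.eventually_const_lt (half_lt_self hp.1)
  refine continuousAt_of_dominated (hhalf.mono fun p h => ?_) (hhalf.mono fun p h => .of_forall
    fun t => ?_) ((integrable_exp_neg_abs_rpow (half_pos hp.1)).const_mul (Real.exp 1))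
    (.of_forall fun t => continuousAt_const.mul (continuousAt_stableExponent_left hp p₀.2 t).cexp)
  · exact (integrable_phase_mul
      (integrable_exp_stableExponent ((half_pos hp.1).trans h) p.2) z).aestronglyMeasurable
  · rw [norm_mul, norm_phase, one_mul, norm_exp_stableExponent]
    exact exp_neg_rpow_le (abs_nonneg t) (half_pos hp.1).le h.le

theorem exists_eventually_le_stdDensity {p₀ : ℝ × ℝ} {A : ℝ} (hp : p₀.1 ∈ Set.Ioo 0 2)
    (hb : |p₀.2| < 1) (hA : p₀.1 < A) :
    ∃ c > 0, ∀ᶠ p in nhds p₀, ∀ z, c * (1 + |z|) ^ (-(1 + A)) ≤ stdDensity p z := by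
  obtain ⟨c, hc, h⟩ := eventually_le_re_angularFourier_exp_stableExponent hp hb hA
  refine ⟨(2 * Real.pi)⁻¹ * c, by positivity, h.mono fun p hp z => ?_⟩
  rw [mul_assoc]
  exact mul_le_mul_of_nonneg_left (hp z) (by positivity)

theorem exists_eventually_abs_stdDensityDeriv_le {p₀ : ℝ × ℝ} {a : ℝ} (hp : p₀.1 < 2)
    (ha : a ∈ Set.Ioo 0 1) (hap : a < p₀.1) (i : Fin 4) :
    ∃ C, ∀ᶠ p in nhds p₀, ∀ z, |stdDensityDeriv i p z| ≤ C * (1 + |z|) ^ (-(1 + a)) := by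
  obtain ⟨C, hC⟩ := exists_eventually_hasEulerBound_charFunDeriv hp ha.1.le ha.2 hap i
  obtain ⟨K, hK⟩ := HasEulerBound.exists_norm_integral_phase_mul_le ha
  refine ⟨Real.pi⁻¹ * (K * C), hC.mono fun p ⟨f₁, f₂, hf⟩ z => ?_⟩
  rw [stdDensityDeriv, abs_mul, abs_of_pos (inv_pos.2 Real.pi_pos), mul_assoc]
  gcongr
  exact (Complex.abs_re_le_norm _).trans (hK hf z)

theorem continuous_stdDensityDeriv {p : ℝ × ℝ} (hp : p.1 ∈ Set.Ioo 0 2) (i : Fin 4) :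
    Continuous (stdDensityDeriv i p) := by
  obtain ⟨a, ha, ha'⟩ := exists_between (lt_min one_pos hp.1)
  obtain ⟨ha₁, hap⟩ := lt_min_iff.1 ha'
  obtain ⟨C, hC⟩ := exists_eventually_hasEulerBound_charFunDeriv hp.2 ha.le ha₁ hap i
  obtain ⟨f₁, f₂, hf⟩ := hC.self_of_nhds
  have hint := (integrable_indicator_iff measurableSet_Ioi).2
    (hf.integrableOn_and_integral_norm_le ⟨ha, ha₁⟩).1
  refine ((Complex.continuous_re.comp (continuous_angularFourier hint)).const_mul Real.pi⁻¹).congr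
    fun z => ?_
  simp only [stdDensityDeriv, angularFourier, Function.comp_apply, ← integral_indicator,
    measurableSet_Ioi, Set.indicator_mul_right]

theorem continuousAt_stdDensityDeriv_left {p₀ : ℝ × ℝ} (hp : p₀.1 ∈ Set.Ioo 0 2) (i : Fin 4)
    (z : ℝ) : ContinuousAt (fun p => stdDensityDeriv i p z) p₀ := by
  obtain ⟨a, ha, ha'⟩ := exists_between (lt_min one_pos hp.1)
  obtain ⟨ha₁, hap⟩ := lt_min_iff.1 ha'
  obtain ⟨C, hC⟩ := exists_eventually_hasEulerBound_charFunDeriv hp.2 ha.le ha₁ hap i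
  refine continuousAt_const.mul (Complex.continuous_re.continuousAt.comp ?_)
  refine continuousAt_of_dominated (bound := fun s => C * (s ^ a / (1 + s ^ 2)))
    (.of_forall fun p => ?_) (hC.mono fun p ⟨f₁, f₂, hf⟩ => ?_)
    ((integrableOn_rpow_div_one_add_sq ⟨by linarith, ha₁⟩).const_mul C) ?_
  · exact ((continuous_phase_right z).continuousOn.mul
      (continuousOn_charFunDeriv i p)).aestronglyMeasurable measurableSet_Ioi
  · filter_upwards [ae_restrict_mem measurableSet_Ioi] with s hs
    rw [norm_mul, norm_phase, one_mul]
    exact hf.norm_le s hs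
  · filter_upwards [ae_restrict_mem measurableSet_Ioi] with s hs
    exact continuousAt_const.mul (continuousAt_charFunDeriv_left hp i hs)

end StandardDensity

section LocationScale

variable {θ : Fin 4 → ℝ}

theorem phase_neg_right (x t : ℝ) : phase x (-t) = starRingEnd ℂ (phase x t) := by
  simp [phase, ← Complex.exp_conj]

theorem phase_div_mul {σ : ℝ} (hσ : σ ≠ 0) (x t : ℝ) : phase (x / σ) (σ * t) = phase x t := by
  rw [phase, phase, ← mul_assoc, div_mul_cancel₀ x hσ]

theorem re_angularFourier_of_hermitian {G : ℝ → ℂ} (hG : Integrable G)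
    (hneg : ∀ t, G (-t) = starRingEnd ℂ (G t)) (x : ℝ) :
    (angularFourier G x).re = 2 * (∫ t in Set.Ioi 0, phase x t * G t).re := by
  have hint := integrable_phase_mul hG x
  have hfull : ∫ t, (phase x t * G t).re = (angularFourier G x).re := integral_re hint
  have hhalf : ∫ t in Set.Ioi 0, (phase x t * G t).re = (∫ t in Set.Ioi 0, phase x t * G t).re :=
    integral_re hint.integrableOn
  rw [← hfull, ← hhalf, ← integral_comp_abs (f := fun t => (phase x t * G t).re)]
  congr 1 with t
  rcases abs_choice t with h | h
  · rw [h]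
  · rw [h, phase_neg_right, hneg, ← map_mul, Complex.conj_re]

/-- The integrand of the Fourier inversion formula for the density `fM θ x`. -/
noncomputable def densityIntegrand (θ : Fin 4 → ℝ) (x t : ℝ) : ℂ :=
  phase (x - θ 0) t * Complex.exp (stableExponent (θ 2) (θ 3) (θ 1 * t))

theorem integrable_exp_stableExponent_comp_mul (hσ : 0 < θ 1) (hα : 0 < θ 2) :
    Integrable fun t => Complex.exp (stableExponent (θ 2) (θ 3) (θ 1 * t)) :=
  (integrable_exp_stableExponent hα (θ 3)).comp_mul_left' hσ.ne'

theorem integrable_densityIntegrand (hσ : 0 < θ 1) (hα : 0 < θ 2) (x : ℝ) :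
    Integrable (densityIntegrand θ x) :=
  integrable_phase_mul (integrable_exp_stableExponent_comp_mul hσ hα) _

theorem fM_eq_angularFourier (hσ : 0 < θ 1) (hα : 0 < θ 2) (x : ℝ) :
    fM θ x = (2 * Real.pi)⁻¹ * (angularFourier
      (fun t => Complex.exp (stableExponent (θ 2) (θ 3) (θ 1 * t))) (x - θ 0)).re := by
  rw [fM, one_div, angularFourier]
  congr 3 with t
  rw [phiM, psiM_eq_stableExponent hσ hα.ne', phase, ← Complex.exp_add, ← Complex.exp_add]
  congr 1
  push_cast
  ring

theorem fM_eq_stdDensity (hσ : 0 < θ 1) (hα : 0 < θ 2) (x : ℝ) :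
    fM θ x = (θ 1)⁻¹ * stdDensity (θ 2, θ 3) ((x - θ 0) / θ 1) := by
  have h := Measure.integral_comp_mul_left (fun s => phase ((x - θ 0) / θ 1) s *
    Complex.exp (stableExponent (θ 2) (θ 3) s)) (θ 1)
  simp only [phase_div_mul hσ.ne'] at h
  rw [fM_eq_angularFourier hσ hα, angularFourier, h, abs_of_pos (inv_pos.2 hσ), Complex.smul_re,
    smul_eq_mul, mul_left_comm, stdDensity, angularFourier]

theorem fM_eq_integral_Ioi (hσ : 0 < θ 1) (hα : 0 < θ 2) (x : ℝ) :
    fM θ x = Real.pi⁻¹ * (∫ t in Set.Ioi 0, densityIntegrand θ x t).re := by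
  rw [fM_eq_angularFourier hσ hα, re_angularFourier_of_hermitian
    (integrable_exp_stableExponent_comp_mul hσ hα)]
  · simp only [densityIntegrand]
    ring
  · intro t
    rw [mul_neg, stableExponent_neg, Complex.exp_conj]

theorem hasDerivAt_phase_sub (x μ t : ℝ) :
    HasDerivAt (fun u => phase (x - u) t) (Complex.I * t * phase (x - μ) t) μ := by
  have h : HasDerivAt (fun u : ℝ => -(Complex.I * (((x - u) * t : ℝ) : ℂ))) (Complex.I * t) μ :=
    ((((hasDerivAt_id μ).const_sub x).mul_const t).ofReal_comp.const_mul
      Complex.I).fun_neg.congr_deriv (by simp)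
  exact h.cexp.congr_deriv (mul_comm _ _)

theorem hasDerivAt_stableExponent_comp_mul (p : ℝ × ℝ) {σ t : ℝ} (hσ : 0 < σ) (ht : 0 < t) :
    HasDerivAt (fun u => stableExponent p.1 p.2 (u * t))
      (((σ⁻¹ : ℝ) : ℂ) * logPowerSum p.1 (exponentDerivCoeff 1 p) (σ * t)) σ := by
  have h := (hasDerivAt_logPowerSum p.1 (exponentCoeff p) (mul_pos hσ ht)).scomp σ
    (hasDerivAt_mul_const t)
  refine (h.congr_deriv ?_).congr_of_eventuallyEq <| (lt_mem_nhds hσ).mono fun u hu =>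
    stableExponent_eq_logPowerSum p (mul_pos hu ht)
  have hσ' : (σ : ℂ) ≠ 0 := Complex.ofReal_ne_zero.2 hσ.ne'
  have ht' : (t : ℂ) ≠ 0 := Complex.ofReal_ne_zero.2 ht.ne'
  rw [Complex.real_smul, Complex.ofReal_mul, Complex.ofReal_inv]
  change _ = _ * logPowerSum p.1 (eulerCoeff p.1 (exponentCoeff p)) (σ * t)
  field_simp

theorem hasDerivAt_stableExponent_left {p : ℝ × ℝ} (hp : p.1 ∈ Set.Ioo 0 2) {s : ℝ} (hs : 0 < s) :
    HasDerivAt (fun a => stableExponent a p.2 s)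
      (logPowerSum p.1 (exponentDerivCoeff 2 p) s) p.1 := by
  have hre : HasDerivAt (fun a => |s| ^ a) (s ^ p.1 * Real.log s) p.1 := by
    rw [abs_of_pos hs]
    exact (Real.hasStrictDerivAt_const_rpow hs p.1).hasDerivAt
  have him := ((hasDerivAt_regTan hp).const_mul p.2).mul
    ((hasDerivAt_logMoment_left 0 p.1 s).const_mul s)
  refine (hre.ofReal_comp.fun_neg.add (him.ofReal_comp.const_mul Complex.I)).congr_deriv ?_
  simp [logPowerSum, logPowerBasis, exponentDerivCoeff, Fin.sum_univ_five]
  ring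

theorem hasDerivAt_stableExponent_right (p : ℝ × ℝ) (s : ℝ) :
    HasDerivAt (fun b => stableExponent p.1 b s)
      (logPowerSum p.1 (exponentDerivCoeff 3 p) s) p.2 := by
  have him : HasDerivAt (fun b => b * regTan p.1 * (s * logMoment 0 p.1 s))
      (regTan p.1 * (s * logMoment 0 p.1 s)) p.2 :=
    (hasDerivAt_mul_const _).mul_const _
  refine ((him.ofReal_comp.const_mul Complex.I).const_add _).congr_deriv ?_
  simp [logPowerSum, logPowerBasis, exponentDerivCoeff, Fin.sum_univ_five, mul_assoc]

/-- The factor by which the `i`-th parameter derivative at scale `σ` differs from the one at scale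
`1`, apart from the Jacobian `σ⁻¹` of the density. -/
noncomputable def derivScale (i : Fin 4) (σ : ℝ) : ℝ := ![σ⁻¹, σ⁻¹, 1, 1] i

/-- The derivative of `densityIntegrand θ x t` in the `i`-th coordinate of `θ`. -/
noncomputable def densityIntegrandDeriv (i : Fin 4) (θ : Fin 4 → ℝ) (x t : ℝ) : ℂ :=
  derivScale i (θ 1) * (phase (x - θ 0) t * charFunDeriv i (θ 2, θ 3) (θ 1 * t))

theorem continuousAt_derivScale (i : Fin 4) {σ : ℝ} (hσ : σ ≠ 0) :
    ContinuousAt (derivScale i) σ := by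
  have hinv := continuousAt_inv₀ hσ
  fin_cases i
  exacts [hinv, hinv, continuousAt_const, continuousAt_const]

theorem hasDerivAt_densityIntegrand (hσ : 0 < θ 1) (hα : θ 2 ∈ Set.Ioo 0 2) (i : Fin 4) (x : ℝ)
    {t : ℝ} (ht : 0 < t) :
    HasDerivAt (fun u => densityIntegrand (Function.update θ i u) x t)
      (densityIntegrandDeriv i θ x t) (θ i) := by
  have hs := mul_pos hσ ht
  have hexp (v : ℂ) : v * Complex.exp (stableExponent (θ 2) (θ 3) (θ 1 * t)) =
      v * Complex.exp (logPowerSum (θ 2) (exponentCoeff (θ 2, θ 3)) (θ 1 * t)) := by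
    rw [← stableExponent_eq_logPowerSum (θ 2, θ 3) hs]
  unfold densityIntegrand densityIntegrandDeriv charFunDeriv
  rw [← hexp]
  fin_cases i
  · refine (((hasDerivAt_phase_sub x (θ 0) t).mul_const (Complex.exp (stableExponent (θ 2) (θ 3)
      (θ 1 * t)))).congr_deriv ?_).congr_of_eventuallyEq (.of_forall fun u => ?_)
    · have hσ' : (θ 1 : ℂ) ≠ 0 := Complex.ofReal_ne_zero.2 hσ.ne'
      simp [derivScale, logPowerSum, logPowerBasis, exponentDerivCoeff, Fin.sum_univ_five]
      field_simp
    · simp [Function.update]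
  · refine (((hasDerivAt_stableExponent_comp_mul (θ 2, θ 3) hσ ht).cexp.const_mul
      (phase (x - θ 0) t)).congr_deriv ?_).congr_of_eventuallyEq (.of_forall fun u => ?_)
    · simp [derivScale]
      ring
    · simp [Function.update]
  · refine (((hasDerivAt_stableExponent_left (p := (θ 2, θ 3)) hα hs).cexp.const_mul
      (phase (x - θ 0) t)).congr_deriv ?_).congr_of_eventuallyEq (.of_forall fun u => ?_)
    · simp [derivScale, mul_comm]
    · simp [Function.update]
  · refine (((hasDerivAt_stableExponent_right (θ 2, θ 3) (θ 1 * t)).cexp.const_mul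
      (phase (x - θ 0) t)).congr_deriv ?_).congr_of_eventuallyEq (.of_forall fun u => ?_)
    · simp [derivScale, mul_comm]
    · simp [Function.update]

theorem integrableOn_mul_rpow_div_one_add_mul_sq {a k l : ℝ} (ha : a ∈ Set.Ioo (-1) 1) (hk : 0 ≤ k)
    (hl : 0 < l) : IntegrableOn (fun t => (k * t) ^ a / (1 + (l * t) ^ 2)) (Set.Ioi 0) := by
  have hscaled : IntegrableOn (fun t => (l * t) ^ a / (1 + (l * t) ^ 2)) (Set.Ioi 0) := by
    rw [integrableOn_Ioi_comp_mul_left_iff (fun v => v ^ a / (1 + v ^ 2)) 0 hl, mul_zero]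
    exact integrableOn_rpow_div_one_add_sq ha
  refine IntegrableOn.congr_fun (hscaled.const_mul ((k / l) ^ a)) (fun t (ht : 0 < t) => ?_)
    measurableSet_Ioi
  rw [← mul_div_assoc, ← Real.mul_rpow (by positivity) (by positivity), ← mul_assoc,
    div_mul_cancel₀ k hl.ne']

theorem exists_integrableOn_bound_densityIntegrandDeriv (hσ : 0 < θ 1) (hα : θ 2 ∈ Set.Ioo 0 2)
    (i : Fin 4) :
    ∃ bound : ℝ → ℝ, IntegrableOn bound (Set.Ioi 0) ∧ ∀ᶠ η in nhds θ, ∀ x, ∀ t, 0 < t →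
      ‖densityIntegrandDeriv i η x t‖ ≤ bound t := by
  obtain ⟨a, ha, ha'⟩ := exists_between (lt_min one_pos hα.1)
  obtain ⟨ha₁, haα⟩ := lt_min_iff.1 ha'
  obtain ⟨C, hC⟩ := exists_eventually_hasEulerBound_charFunDeriv (p₀ := (θ 2, θ 3)) hα.2 ha.le ha₁
    haα i
  have hshape : Tendsto (fun η : Fin 4 → ℝ => (η 2, η 3)) (nhds θ) (nhds (θ 2, θ 3)) :=
    Continuous.tendsto (by fun_prop) θ
  have hscale : Tendsto (fun η : Fin 4 → ℝ => η 1) (nhds θ) (nhds (θ 1)) :=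
    Continuous.tendsto (by fun_prop) θ
  have hfactor := ((continuousAt_derivScale i hσ.ne').tendsto.comp hscale).abs
  refine ⟨fun t => (|derivScale i (θ 1)| + 1) * (C * ((2 * θ 1 * t) ^ a / (1 + (θ 1 / 2 * t) ^ 2))),
    ?_, ?_⟩
  · exact ((integrableOn_mul_rpow_div_one_add_mul_sq ⟨neg_one_lt_zero.trans ha, ha₁⟩
      (by positivity) (half_pos hσ)).const_mul C).const_mul _
  · filter_upwards [hshape.eventually hC, hscale.eventually_const_lt (half_lt_self hσ),
      hscale.eventually_lt_const (lt_two_mul_self hσ),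
      hfactor.eventually_lt_const (lt_add_one _)] with η ⟨_, _, hη⟩ hlo hhi hk x t ht
    have hη₁ : 0 < η 1 := (half_pos hσ).trans hlo
    have hC₀ := hη.nonneg_of_rpow_div
    have hbound := hη.norm_le _ (mul_pos hη₁ ht)
    rw [densityIntegrandDeriv, norm_mul, norm_mul, norm_phase, one_mul, Complex.norm_real]
    gcongr
    · exact hk.le
    · refine hbound.trans ?_
      gcongr

theorem continuous_densityIntegrand (hα : 0 < θ 2) (x : ℝ) : Continuous (densityIntegrand θ x) :=
  (continuous_phase_right _).mul
    (((continuous_stableExponent hα (θ 3)).comp (continuous_const_mul (θ 1))).cexp)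

theorem continuousOn_densityIntegrandDeriv (hσ : 0 < θ 1) (i : Fin 4) (x : ℝ) :
    ContinuousOn (densityIntegrandDeriv i θ x) (Set.Ioi 0) :=
  continuousOn_const.mul ((continuous_phase_right _).continuousOn.mul
    ((continuousOn_charFunDeriv i _).comp (by fun_prop) fun _ ht => mul_pos hσ ht))

theorem isOpen_thetaInt : IsOpen ThetaInt :=
  (isOpen_lt continuous_const (continuous_apply 1)).inter
    ((isOpen_Ioo.preimage (continuous_apply 2)).inter (isOpen_Ioo.preimage (continuous_apply 3)))

theorem tendsto_update_nhds (θ : Fin 4 → ℝ) (i : Fin 4) :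
    Tendsto (Function.update θ i) (nhds (θ i)) (nhds θ) := by
  have h : Continuous fun u : ℝ => Function.update θ i u := continuous_const.update i continuous_id
  simpa using h.tendsto (θ i)

theorem hasDerivAt_integral_densityIntegrand (hθ : θ ∈ ThetaInt) (i : Fin 4) (x : ℝ) :
    HasDerivAt (fun u => ∫ t in Set.Ioi 0, densityIntegrand (Function.update θ i u) x t)
      (∫ t in Set.Ioi 0, densityIntegrandDeriv i θ x t) (θ i) := by
  have ⟨hσ, hα, _⟩ := hθ
  obtain ⟨bound, hint, hbound⟩ := exists_integrableOn_bound_densityIntegrandDeriv hσ hα i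
  have hnear :=
    (tendsto_update_nhds θ i).eventually ((isOpen_thetaInt.eventually_mem hθ).and hbound)
  have h := (hasDerivAt_integral_of_dominated_loc_of_deriv_le (bound := bound)
    (μ := volume.restrict (Set.Ioi 0))
    (F := fun u t => densityIntegrand (Function.update θ i u) x t)
    (F' := fun u t => densityIntegrandDeriv i (Function.update θ i u) x t) hnear
    (hnear.mono fun u hu => (continuous_densityIntegrand hu.1.2.1.1 x).aestronglyMeasurable)
    ?_ ?_ ?_ hint ?_).2
  · simpa using h
  · rw [Function.update_eq_self]
    exact (integrable_densityIntegrand hσ hα.1 x).integrableOn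
  · rw [Function.update_eq_self]
    exact (continuousOn_densityIntegrandDeriv hσ i x).aestronglyMeasurable measurableSet_Ioi
  · filter_upwards [ae_restrict_mem measurableSet_Ioi] with t ht u hu
    exact hu.2 x t ht
  · filter_upwards [ae_restrict_mem measurableSet_Ioi] with t ht u hu
    simpa using hasDerivAt_densityIntegrand hu.1.1 hu.1.2.1 i x ht

theorem fP_eq_stdDensityDeriv (hθ : θ ∈ ThetaInt) (i : Fin 4) (x : ℝ) :
    fP i θ x = derivScale i (θ 1) * (θ 1)⁻¹ *
      stdDensityDeriv i (θ 2, θ 3) ((x - θ 0) / θ 1) := by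
  have hσ := hθ.1
  have hre : HasDerivAt
      (fun u => Real.pi⁻¹ * (∫ t in Set.Ioi 0, densityIntegrand (Function.update θ i u) x t).re)
      (Real.pi⁻¹ * (∫ t in Set.Ioi 0, densityIntegrandDeriv i θ x t).re) (θ i) :=
    (Complex.reCLM.hasFDerivAt.comp_hasDerivAt (θ i)
      (hasDerivAt_integral_densityIntegrand hθ i x)).const_mul _
  have hupd : ∀ᶠ u in nhds (θ i), Function.update θ i u ∈ ThetaInt :=
    (tendsto_update_nhds θ i).eventually (isOpen_thetaInt.eventually_mem hθ)
  have hfM : HasDerivAt (fun u => fM (Function.update θ i u) x) _ (θ i) :=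
    hre.congr_of_eventuallyEq (hupd.mono fun u hu => fM_eq_integral_Ioi hu.1 hu.2.1.1 x)
  have hscale := integral_comp_mul_left_Ioi (fun s => phase ((x - θ 0) / θ 1) s *
    charFunDeriv i (θ 2, θ 3) s) 0 hσ
  simp only [phase_div_mul hσ.ne', mul_zero] at hscale
  rw [fP, hfM.deriv]
  simp only [densityIntegrandDeriv, stdDensityDeriv]
  rw [integral_const_mul, hscale, Complex.re_ofReal_mul, Complex.smul_re, smul_eq_mul]
  ring

end LocationScale

section FisherInformation

/-- The integrand of the `(i, j)` Fisher information entry at location `0` and scale `1`, up to the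
factors `derivScale`; the shape is `p = (α, β)`. -/
noncomputable def fisherIntegrand (i j : Fin 4) (p : ℝ × ℝ) (z : ℝ) : ℝ :=
  stdDensityDeriv i p z * stdDensityDeriv j p z / stdDensity p z

theorem abs_mul_div_le_rpow {f g h c C C' a A r : ℝ} (hr : 0 < r) (hc : 0 < c)
    (hf : |f| ≤ C * r ^ (-(1 + a))) (hg : |g| ≤ C' * r ^ (-(1 + a)))
    (hh : c * r ^ (-(1 + A)) ≤ h) : |f * g / h| ≤ C * C' / c * r ^ (-(1 + 2 * a - A)) := by
  have hlow : 0 < c * r ^ (-(1 + A)) := by positivity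
  have hexp : r ^ (-(1 + 2 * a - A)) = r ^ (-(1 + a)) * r ^ (-(1 + a)) / r ^ (-(1 + A)) := by
    rw [← Real.rpow_add hr, ← Real.rpow_sub hr]
    ring_nf
  calc |f * g / h| = |f| * |g| / h := by rw [abs_div, abs_mul, abs_of_pos (hlow.trans_le hh)]
    _ ≤ C * r ^ (-(1 + a)) * (C' * r ^ (-(1 + a))) / (c * r ^ (-(1 + A))) := by
      have hf₀ := (abs_nonneg f).trans hf
      have hg₀ := (abs_nonneg g).trans hg
      gcongr
    _ = C * C' / c * r ^ (-(1 + 2 * a - A)) := by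
      rw [hexp]
      field_simp

theorem exists_integrable_bound_fisherIntegrand {p₀ : ℝ × ℝ} (hp : p₀.1 ∈ Set.Ioo 0 2)
    (hb : |p₀.2| < 1) (i j : Fin 4) :
    ∃ bound : ℝ → ℝ, Integrable bound ∧
      ∀ᶠ p in nhds p₀, ∀ z, ‖fisherIntegrand i j p z‖ ≤ bound z := by
  obtain ⟨A, hA, hA'⟩ := exists_between (lt_min hp.2 (lt_mul_of_one_lt_left hp.1 one_lt_two))
  obtain ⟨hA₂, hA₂p⟩ := lt_min_iff.1 hA'
  obtain ⟨a, hAa, ha'⟩ := exists_between (show A / 2 < min 1 p₀.1 from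
    lt_min (by linarith) (by linarith))
  obtain ⟨ha₁, hap⟩ := lt_min_iff.1 ha'
  have ha : a ∈ Set.Ioo 0 1 := ⟨by linarith [hp.1], ha₁⟩
  obtain ⟨C, hC⟩ := exists_eventually_abs_stdDensityDeriv_le hp.2 ha hap i
  obtain ⟨C', hC'⟩ := exists_eventually_abs_stdDensityDeriv_le hp.2 ha hap j
  obtain ⟨c, hc, hlow⟩ := exists_eventually_le_stdDensity hp hb hA
  refine ⟨fun z => C * C' / c * (1 + ‖z‖) ^ (-(1 + 2 * a - A)),
    (integrable_one_add_norm (by simp; linarith)).const_mul _, ?_⟩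
  filter_upwards [hC, hC', hlow] with p hi hj hp z
  exact abs_mul_div_le_rpow (by positivity) hc (hi z) (hj z) (hp z)

theorem stdDensity_pos {p : ℝ × ℝ} (hp : p.1 ∈ Set.Ioo 0 2) (hb : |p.2| < 1) (z : ℝ) :
    0 < stdDensity p z := by
  obtain ⟨c, hc, h⟩ := exists_eventually_le_stdDensity hp hb hp.2
  exact lt_of_lt_of_le (by positivity) (h.self_of_nhds z)

theorem aestronglyMeasurable_fisherIntegrand {p : ℝ × ℝ} (hp : p.1 ∈ Set.Ioo 0 2) (i j : Fin 4) :
    AEStronglyMeasurable (fisherIntegrand i j p) :=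
  (((continuous_stdDensityDeriv hp i).mul (continuous_stdDensityDeriv hp j)).measurable.div
    (continuous_stdDensity hp.1).measurable).aestronglyMeasurable

theorem integrable_fisherIntegrand {p : ℝ × ℝ} (hp : p.1 ∈ Set.Ioo 0 2) (hb : |p.2| < 1)
    (i j : Fin 4) : Integrable (fisherIntegrand i j p) := by
  obtain ⟨bound, hint, hbound⟩ := exists_integrable_bound_fisherIntegrand hp hb i j
  exact hint.mono' (aestronglyMeasurable_fisherIntegrand hp i j)
    (.of_forall hbound.self_of_nhds)

theorem continuousAt_integral_fisherIntegrand {p₀ : ℝ × ℝ} (hp : p₀.1 ∈ Set.Ioo 0 2)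
    (hb : |p₀.2| < 1) (i j : Fin 4) : ContinuousAt (fun p => ∫ z, fisherIntegrand i j p z) p₀ := by
  obtain ⟨bound, hint, hbound⟩ := exists_integrable_bound_fisherIntegrand hp hb i j
  have hnear : ∀ᶠ p : ℝ × ℝ in nhds p₀, p.1 ∈ Set.Ioo 0 2 :=
    continuousAt_fst.eventually_mem (isOpen_Ioo.mem_nhds hp)
  exact continuousAt_of_dominated
    (hnear.mono fun p hp => aestronglyMeasurable_fisherIntegrand hp i j)
    (hbound.mono fun p hp => .of_forall hp) hint (.of_forall fun z =>
      ((continuousAt_stdDensityDeriv_left hp i z).mul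
        (continuousAt_stdDensityDeriv_left hp j z)).div (continuousAt_stdDensity_left hp z)
          (stdDensity_pos hp hb z).ne')

theorem fP_mul_fP_div_fM {θ : Fin 4 → ℝ} (hθ : θ ∈ ThetaInt) (i j : Fin 4) (x : ℝ) :
    fP i θ x * fP j θ x / fM θ x = derivScale i (θ 1) * derivScale j (θ 1) * (θ 1)⁻¹ *
      fisherIntegrand i j (θ 2, θ 3) ((x - θ 0) / θ 1) := by
  have hσ := hθ.1.ne'
  rw [fP_eq_stdDensityDeriv hθ, fP_eq_stdDensityDeriv hθ, fM_eq_stdDensity hθ.1 hθ.2.1.1,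
    fisherIntegrand]
  field_simp

theorem integral_fP_mul_fP_div_fM {θ : Fin 4 → ℝ} (hθ : θ ∈ ThetaInt) (i j : Fin 4) :
    ∫ x, fP i θ x * fP j θ x / fM θ x =
      derivScale i (θ 1) * derivScale j (θ 1) * ∫ z, fisherIntegrand i j (θ 2, θ 3) z := by
  simp only [fP_mul_fP_div_fM hθ]
  rw [integral_const_mul,
    integral_sub_right_eq_self (fun y => fisherIntegrand i j (θ 2, θ 3) (y / θ 1)),
    Measure.integral_comp_div, abs_of_pos hθ.1, smul_eq_mul, mul_assoc,
    inv_mul_cancel_left₀ hθ.1.ne']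

end FisherInformation

/-- Every entry of the Fisher information matrix,
`I_{θᵢθⱼ}(θ) = ∫ f_{θᵢ} f_{θⱼ} / f dx`, is well-defined (the integrand is absolutely
integrable) and is a continuous function of `θ` on `Θ_M°`. -/
theorem fisher_entries_finite_continuous :
    (∀ θ ∈ ThetaInt, ∀ i j : Fin 4,
      MeasureTheory.Integrable (fun x : ℝ => fP i θ x * fP j θ x / fM θ x)) ∧
    (∀ i j : Fin 4,
      ContinuousOn (fun θ : Fin 4 → ℝ => ∫ x : ℝ, fP i θ x * fP j θ x / fM θ x)
        ThetaInt) := by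
  refine ⟨fun θ hθ i j => ?_, fun i j => ContinuousOn.congr (fun θ hθ => ?_)
    fun θ hθ => integral_fP_mul_fP_div_fM hθ i j⟩
  · simp only [fP_mul_fP_div_fM hθ]
    have hint := integrable_fisherIntegrand (p := (θ 2, θ 3)) hθ.2.1 (abs_lt.2 hθ.2.2) i j
    exact ((hint.comp_div hθ.1.ne').comp_sub_right (θ 0)).const_mul _
  · have hscale (k : Fin 4) : ContinuousAt (fun η : Fin 4 → ℝ => derivScale k (η 1)) θ :=
      ContinuousAt.comp (f := fun η : Fin 4 → ℝ => η 1) (continuousAt_derivScale k hθ.1.ne')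
        (continuous_apply 1).continuousAt
    have hstd : ContinuousAt (fun η : Fin 4 → ℝ => ∫ z, fisherIntegrand i j (η 2, η 3) z) θ :=
      ContinuousAt.comp (f := fun η : Fin 4 → ℝ => (η 2, η 3))
        (continuousAt_integral_fisherIntegrand (p₀ := (θ 2, θ 3)) hθ.2.1 (abs_lt.2 hθ.2.2) i j)
        (by fun_prop)
    exact (((hscale i).mul (hscale j)).mul hstd).continuousWithinAt
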